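/- arXiv:1912.10403 — 4 statements merged into one kernel-verified Lean document; each statement's English description precedes it below -/
import Mathlib

section
/- Let n ≥ 1 and m ≥ 1 be integers, let t_1,…,t_m be positive integers with t_1 + ⋯ + t_m = n, and let 0 < λ_1 < λ_2 < ⋯ < λ_m be real numbers. Then there exist real numbers m_j > 0, k_j > 0, b_j ≥ 0 (j = 1,…,n) such that the polynomial ∏_{i=1}^{m}(λ − λ_i)^{t_i} divides det(K − λ(M+B)) in ℝ[λ] if and only if t_i ≤ i for every i = 1,…,m. -/
open Polynomial

/-- The tridiagonal matrix of order `j` built from `k 1, …, k j` (1-indexed):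
diagonal entries `k r + k (r+1)` for `r < j`, last diagonal entry `k j`,
off-diagonal entries `-(k (r+1))`. -/
noncomputable def triMat (k : ℕ → ℝ) (j : ℕ) : Matrix (Fin j) (Fin j) ℝ :=
  Matrix.of fun r c =>
    if (r : ℕ) = (c : ℕ) then
      (if (r : ℕ) = j - 1 then k j else k ((r : ℕ) + 1) + k ((r : ℕ) + 2))
    else if (r : ℕ) + 1 = (c : ℕ) then -k ((c : ℕ) + 1)
    else if (c : ℕ) + 1 = (r : ℕ) then -k ((r : ℕ) + 1)
    else 0

/-- The matrix `K_j - λ (M_j + B_j)` with entries in `ℝ[λ]`. -/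
noncomputable def sysMat (m k b : ℕ → ℝ) (j : ℕ) :
    Matrix (Fin j) (Fin j) (Polynomial ℝ) :=
  (triMat k j).map Polynomial.C -
    (Polynomial.X : Polynomial ℝ) •
      ((Matrix.diagonal (fun i : Fin j => m ((i : ℕ) + 1)) + triMat b j).map Polynomial.C)

/-- `f_j(λ) = det (K_j - λ (M_j + B_j))`. -/
noncomputable def fpoly (m k b : ℕ → ℝ) (j : ℕ) : Polynomial ℝ :=
  (sysMat m k b j).det

/-- `g_j(λ)`: the leading principal minor of order `j-1` of `K_j - λ (M_j + B_j)`
(so `g 1 = 1`, the determinant of the empty matrix). -/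
noncomputable def gpoly (m k b : ℕ → ℝ) (j : ℕ) : Polynomial ℝ :=
  ((sysMat m k b j).submatrix (Fin.castLE (Nat.sub_le j 1))
    (Fin.castLE (Nat.sub_le j 1))).det

/-!
Attaching a mass `m` through a link of dynamic stiffness `p = k - λ b` replaces `(f, g)` by
`(p f - m λ g', g')` with `g' = f + p g`.

Necessity. Write `f = E F` and `g = E G` with `F` and `G` coprime. The Wronskian `F G' - F' G` is
positive, so `G / F` is increasing and the roots of `F` are simple; attaching a mass strictly
separates the positive roots of `F` by those of the new `F`. A link enlarges `E` only by a factor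
which is tuned to a root `L` of `F`, and afterwards there is one more root below `L`. Hence the
multiplicity of `L` in `E` is at most the number of distinct roots below `L`, and its multiplicity
in `f` is at most one more.

Sufficiency. Add the eigenvalues in decreasing order. Given a chain for `λ_2 < ⋯ < λ_m` with each
`t_i ≥ 2` lowered by one, a chain for `λ_1 < ⋯ < λ_m` arises by attaching one mass for each lowered
`t_i`, through a link with `k / b = λ_i`, which raises the multiplicity of `λ_i` by one, and finally
one mass through a spring, which creates `λ_1`. Prescribing the eigenvalues of the
longer chain perturbs the shorter one slightly, so the induction runs over pairs `(F, G)` for which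
every nearby pair is realizable as well.
-/

namespace MassSpringInerter

section Tridiagonal

variable {R : Type*} [CommRing R]

/-- The tridiagonal matrix of order `n` with diagonal `d 0, …, d (n-1)`, superdiagonal
`u 0, …, u (n-2)` and subdiagonal `l 0, …, l (n-2)`. -/
def tridiag (d u l : ℕ → R) (n : ℕ) : Matrix (Fin n) (Fin n) R :=
  Matrix.of fun r s =>
    if (r : ℕ) = s then d r
    else if (r : ℕ) + 1 = s then u r
    else if (s : ℕ) + 1 = r then l s
    else 0

variable (d u l : ℕ → R) (n : ℕ)

lemma tridiag_submatrix_castSucc :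
    (tridiag d u l (n + 1)).submatrix Fin.castSucc Fin.castSucc = tridiag d u l n := by
  ext r s
  simp only [tridiag, Matrix.submatrix_apply, Matrix.of_apply, Fin.val_castSucc]

lemma tridiag_congr {d d' : ℕ → R} {n : ℕ} (h : ∀ i < n, d i = d' i) :
    tridiag d u l n = tridiag d' u l n := by
  ext r s
  simp only [tridiag, Matrix.of_apply, h r r.isLt]

lemma det_of_last_column_eq_zero {A : Matrix (Fin (n + 1)) (Fin (n + 1)) R}
    (h : ∀ i : Fin n, A i.castSucc (Fin.last n) = 0) :
    A.det = A (Fin.last n) (Fin.last n) * (A.submatrix Fin.castSucc Fin.castSucc).det := by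
  rw [Matrix.det_succ_column _ (Fin.last n), Fin.sum_univ_castSucc]
  simp [h, Fin.succAbove_last, ← two_mul]

lemma det_tridiag_minor :
    ((tridiag d u l (n + 2)).submatrix Fin.castSucc (Fin.last n).castSucc.succAbove).det =
      u n * (tridiag d u l n).det := by
  have last_column : (Fin.last n).castSucc.succAbove (Fin.last n) = Fin.last (n + 1) := by
    rw [Fin.succAbove_castSucc_self, Fin.succ_last]
  have other_column (s : Fin n) :
      (Fin.last n).castSucc.succAbove s.castSucc = s.castSucc.castSucc :=
    Fin.succAbove_of_castSucc_lt _ _ (by simp [Fin.lt_def])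
  rw [det_of_last_column_eq_zero]
  · congr 1
    · simp [last_column, tridiag]
    · congr 1
      ext r s
      simp [other_column, tridiag]
  · intro i
    have := i.isLt
    simp only [Matrix.submatrix_apply, last_column, tridiag, Matrix.of_apply, Fin.val_last,
      Fin.val_castSucc]
    grind

theorem det_tridiag_succ_succ :
    (tridiag d u l (n + 2)).det =
      d (n + 1) * (tridiag d u l (n + 1)).det - u n * l n * (tridiag d u l n).det := by
  have far_entry (i : Fin n) :
      tridiag d u l (n + 2) (Fin.last (n + 1)) i.castSucc.castSucc = 0 := by
    have := i.isLt
    simp only [tridiag, Matrix.of_apply, Fin.val_last, Fin.val_castSucc]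
    grind
  have near_entry :
      tridiag d u l (n + 2) (Fin.last (n + 1)) (Fin.last n).castSucc = l n := by
    simp [tridiag]
    omega
  have corner_entry : tridiag d u l (n + 2) (Fin.last (n + 1)) (Fin.last (n + 1)) = d (n + 1) := by
    simp [tridiag]
  have even_sign : (-1 : R) ^ (n + 1 + (n + 1)) = 1 := Even.neg_one_pow ⟨n + 1, rfl⟩
  have odd_sign : (-1 : R) ^ (n + 1 + n) = -1 := Odd.neg_one_pow ⟨n, by ring⟩
  rw [Matrix.det_succ_row _ (Fin.last (n + 1)), Fin.sum_univ_castSucc, Fin.sum_univ_castSucc]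
  simp only [far_entry, near_entry, corner_entry, Fin.succAbove_last, det_tridiag_minor,
    tridiag_submatrix_castSucc, Fin.val_last, Fin.val_castSucc, even_sign, odd_sign, mul_zero,
    zero_mul, Finset.sum_const_zero]
  ring

theorem det_tridiag_update_last (x : R) :
    (tridiag (Function.update d n x) u l (n + 1)).det =
      (tridiag d u l (n + 1)).det + (x - d n) * (tridiag d u l n).det := by
  have update_of_lt {i : ℕ} (hi : i < n) : Function.update d n x i = d i :=
    Function.update_of_ne hi.ne _ _
  cases n with
  | zero => simp [tridiag]
  | succ n =>
    rw [det_tridiag_succ_succ, det_tridiag_succ_succ, tridiag_congr u l fun i hi => update_of_lt hi,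
      tridiag_congr u l fun i (hi : i < n) => update_of_lt (hi.trans n.lt_succ_self),
      Function.update_self]
    ring

end Tridiagonal

section System

variable (m k b : ℕ → ℝ)

/-- The dynamic stiffness `k_j - λ b_j` of the spring and the inerter attached in parallel at
position `j`. -/
noncomputable def link (k b : ℝ) : ℝ[X] := C k - X * C b

/-- The diagonal entries `r = 0, 1, …` of `K - λ (M + B)` for an infinite chain. -/
noncomputable def chainDiag (r : ℕ) : ℝ[X] :=
  link (k (r + 1)) (b (r + 1)) + link (k (r + 2)) (b (r + 2)) - X * C (m (r + 1))

/-- The off-diagonal entries `r = 0, 1, …` of `K - λ (M + B)` for an infinite chain. -/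
noncomputable def chainOffDiag (r : ℕ) : ℝ[X] := -link (k (r + 2)) (b (r + 2))

lemma sysMat_succ (n : ℕ) :
    sysMat m k b (n + 1) =
      tridiag (Function.update (chainDiag m k b) n
          (link (k (n + 1)) (b (n + 1)) - X * C (m (n + 1))))
        (chainOffDiag k b) (chainOffDiag k b) (n + 1) := by
  ext1 r s
  simp only [sysMat, triMat, tridiag, Matrix.sub_apply, Matrix.map_apply, Matrix.of_apply,
    Matrix.smul_apply, Matrix.add_apply, Matrix.diagonal_apply, Fin.ext_iff, chainDiag,
    chainOffDiag, link, Function.update_apply, Nat.add_sub_cancel, smul_eq_mul]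
  split_ifs with h1 h2 h3 h4
  · simp only [map_add, h2]; ring
  · simp only [map_add]; ring
  · simp only [map_add, map_neg, map_zero, ← h3]; ring
  · simp only [map_add, map_neg, map_zero, ← h4]; ring
  · simp

lemma gpoly_succ_eq_det (n : ℕ) :
    gpoly m k b (n + 1) =
      (tridiag (chainDiag m k b) (chainOffDiag k b) (chainOffDiag k b) n).det := by
  have leading_block : (sysMat m k b (n + 1)).submatrix Fin.castSucc Fin.castSucc =
      tridiag (chainDiag m k b) (chainOffDiag k b) (chainOffDiag k b) n := by
    rw [sysMat_succ, tridiag_submatrix_castSucc]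
    exact tridiag_congr _ _ fun i hi => Function.update_of_ne hi.ne _ _
  exact congrArg Matrix.det leading_block

lemma fpoly_succ_eq_det (n : ℕ) :
    fpoly m k b (n + 1) =
      (tridiag (chainDiag m k b) (chainOffDiag k b) (chainOffDiag k b) (n + 1)).det -
        link (k (n + 2)) (b (n + 2)) * gpoly m k b (n + 1) := by
  rw [fpoly, sysMat_succ, det_tridiag_update_last, gpoly_succ_eq_det, chainDiag]
  ring

lemma gpoly_one : gpoly m k b 1 = 1 := Matrix.det_fin_zero

lemma fpoly_one : fpoly m k b 1 = link (k 1) (b 1) - X * C (m 1) := by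
  rw [fpoly, sysMat_succ]
  simp [tridiag]

lemma gpoly_succ_succ (n : ℕ) :
    gpoly m k b (n + 2) =
      fpoly m k b (n + 1) + link (k (n + 2)) (b (n + 2)) * gpoly m k b (n + 1) := by
  rw [gpoly_succ_eq_det, fpoly_succ_eq_det]
  ring

lemma fpoly_succ_succ (n : ℕ) :
    fpoly m k b (n + 2) =
      link (k (n + 2)) (b (n + 2)) * fpoly m k b (n + 1) -
        X * C (m (n + 2)) * gpoly m k b (n + 2) := by
  rw [fpoly_succ_eq_det, fpoly_succ_eq_det, gpoly_succ_eq_det, gpoly_succ_eq_det,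
    det_tridiag_succ_succ, chainDiag, chainOffDiag]
  ring

/-- The pairs `(f_n, g_n)` of characteristic polynomials of the chains of `n` masses, generated by
attaching one mass at a time: the new mass `m` is connected to the previous chain through a spring
`k` and an inerter `b` in parallel. -/
inductive ChainPair : ℕ → ℝ[X] → ℝ[X] → Prop
  | one {m k b : ℝ} (hm : 0 < m) (hk : 0 < k) (hb : 0 ≤ b) :
      ChainPair 1 (link k b - X * C m) 1
  | succ {m k b : ℝ} (hm : 0 < m) (hk : 0 < k) (hb : 0 ≤ b) {n : ℕ} {f g : ℝ[X]}
      (h : ChainPair n f g) :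
      ChainPair (n + 1) (link k b * f - X * C m * (f + link k b * g)) (f + link k b * g)

variable {m k b} {n : ℕ}

lemma fpoly_gpoly_congr {m' k' b' : ℕ → ℝ} (hn : 1 ≤ n) (hm : ∀ j ≤ n, m j = m' j)
    (hk : ∀ j ≤ n, k j = k' j) (hb : ∀ j ≤ n, b j = b' j) :
    fpoly m k b n = fpoly m' k' b' n ∧ gpoly m k b n = gpoly m' k' b' n := by
  induction n, hn using Nat.le_induction with
  | base => simp only [fpoly_one, gpoly_one, hm 1 le_rfl, hk 1 le_rfl, hb 1 le_rfl, and_self]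
  | succ n hn ih =>
    obtain ⟨n, rfl⟩ := Nat.exists_eq_add_of_le' hn
    obtain ⟨hf, hg⟩ := ih (fun j hj => hm j (by omega)) (fun j hj => hk j (by omega))
      fun j hj => hb j (by omega)
    simp only [fpoly_succ_succ, gpoly_succ_succ, hf, hg, hm _ le_rfl, hk _ le_rfl, hb _ le_rfl,
      and_self]

lemma chainPair_fpoly_gpoly (hn : 1 ≤ n) (hm : ∀ j, 1 ≤ j → j ≤ n → 0 < m j)
    (hk : ∀ j, 1 ≤ j → j ≤ n → 0 < k j) (hb : ∀ j, 1 ≤ j → j ≤ n → 0 ≤ b j) :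
    ChainPair n (fpoly m k b n) (gpoly m k b n) := by
  induction n, hn using Nat.le_induction with
  | base =>
    rw [fpoly_one, gpoly_one]
    exact .one (hm 1 le_rfl le_rfl) (hk 1 le_rfl le_rfl) (hb 1 le_rfl le_rfl)
  | succ n hn ih =>
    have previous := ih (fun j h h' => hm j h (by omega)) (fun j h h' => hk j h (by omega))
      fun j h h' => hb j h (by omega)
    obtain ⟨n, rfl⟩ := Nat.exists_eq_add_of_le' hn
    rw [fpoly_succ_succ, gpoly_succ_succ]
    exact .succ (hm _ (by omega) le_rfl) (hk _ (by omega) le_rfl) (hb _ (by omega) le_rfl) previous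

lemma forall_update_succ {p : ℝ → Prop} {v : ℕ → ℝ} (hv : ∀ j, 1 ≤ j → j ≤ n → p (v j)) {x : ℝ}
    (hx : p x) (j : ℕ) (h1 : 1 ≤ j) (hj : j ≤ n + 1) : p (Function.update v (n + 1) x j) := by
  rcases hj.eq_or_lt with rfl | hj
  · rwa [Function.update_self]
  · rw [Function.update_of_ne hj.ne]
    exact hv j h1 (by omega)

lemma ChainPair.one_le {f g : ℝ[X]} (h : ChainPair n f g) : 1 ≤ n := by
  cases h <;> omega

lemma ChainPair.exists_fpoly_gpoly {f g : ℝ[X]} (h : ChainPair n f g) :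
    ∃ m k b : ℕ → ℝ, (∀ j, 1 ≤ j → j ≤ n → 0 < m j) ∧ (∀ j, 1 ≤ j → j ≤ n → 0 < k j) ∧
      (∀ j, 1 ≤ j → j ≤ n → 0 ≤ b j) ∧ f = fpoly m k b n ∧ g = gpoly m k b n := by
  induction h with
  | @one m k b hm hk hb =>
    exact ⟨fun _ => m, fun _ => k, fun _ => b, fun _ _ _ => hm, fun _ _ _ => hk, fun _ _ _ => hb,
      by rw [fpoly_one], by rw [gpoly_one]⟩
  | @succ m₀ k₀ b₀ hm₀ hk₀ hb₀ n f g h ih =>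
    obtain ⟨m, k, b, hm, hk, hb, rfl, rfl⟩ := ih
    have update_of_le (v : ℕ → ℝ) (x : ℝ) (j : ℕ) (hj : j ≤ n) :
        v j = Function.update v (n + 1) x j :=
      (Function.update_of_ne (by omega) _ _).symm
    obtain ⟨hf, hg⟩ := fpoly_gpoly_congr h.one_le (update_of_le m m₀) (update_of_le k k₀)
      (update_of_le b b₀)
    refine ⟨Function.update m (n + 1) m₀, Function.update k (n + 1) k₀,
      Function.update b (n + 1) b₀, forall_update_succ hm hm₀, forall_update_succ hk hk₀,
      forall_update_succ hb hb₀, ?_⟩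
    obtain ⟨n, rfl⟩ := Nat.exists_eq_add_of_le' h.one_le
    rw [fpoly_succ_succ, gpoly_succ_succ, hf, hg, Function.update_self, Function.update_self,
      Function.update_self]
    exact ⟨rfl, rfl⟩

end System

section Necessity

open Set

lemma card_le_card_of_separated {α : Type*} [LinearOrder α] {S T : Finset α}
    (h : ∀ s ∈ S, ∃ z ∈ T, z < s ∧ ∀ s' ∈ S, s' < s → s' < z) : S.card ≤ T.card := by
  choose! z hzT hz_lt lt_hz using h
  have z_strictMonoOn : StrictMonoOn z S := fun s hs s' hs' hss' =>
    (hz_lt s hs).trans (lt_hz s' hs' s hs hss')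
  exact Finset.card_le_card_of_injOn z hzT z_strictMonoOn.injOn

lemma strictMonoOn_eval_div_eval {F G : ℝ[X]} {s : Set ℝ} (hs : Convex ℝ s)
    (hF : ∀ x ∈ s, F.eval x ≠ 0) (hW : ∀ x ∈ s, 0 < (wronskian F G).eval x) :
    StrictMonoOn (fun x => G.eval x / F.eval x) s := by
  refine strictMonoOn_of_deriv_pos hs (G.continuousOn.div F.continuousOn hF) fun x hx => ?_
  have hx := interior_subset hx
  have := hF x hx
  have numerator_eq : G.derivative.eval x * F.eval x - G.eval x * F.derivative.eval x =
      (wronskian F G).eval x := by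
    simp only [wronskian, eval_sub, eval_mul]
    ring
  rw [deriv_fun_div G.differentiableAt F.differentiableAt this, G.deriv, F.deriv, numerator_eq]
  exact div_pos (hW x hx) (by positivity)

lemma link_dvd_of_common_root {k b x : ℝ} (hk : 0 < k) (hx : (link k b).eval x = 0) {F : ℝ[X]}
    (hF : F.eval x = 0) : link k b ∣ F := by
  have hb : b ≠ 0 := by
    rintro rfl
    simp [link, hk.ne'] at hx
  have link_eq : link k b = C (-b) * (X - C x) := by
    have : k = b * x := by simpa [link, sub_eq_zero] using hx
    simp only [link, this, C_mul, C_neg]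
    ring
  rw [link_eq, C_mul_dvd (neg_ne_zero.2 hb)]
  exact dvd_iff_isRoot.2 hF

/-- A pair of polynomials whose ratio `G / F` is increasing between the poles, with both members
positive at `0`. The roots of two such polynomials interlace. -/
structure InterlacingPair (F G : ℝ[X]) : Prop where
  wronskian_pos (x : ℝ) : 0 < (wronskian F G).eval x
  left_pos : 0 < F.eval 0
  right_pos : 0 < G.eval 0

/-- The set of distinct roots of `p` lying in `s`. -/
noncomputable def rootsIn (p : ℝ[X]) (s : Set ℝ) : Finset ℝ :=
  open Classical in {x ∈ p.roots.toFinset | x ∈ s}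

lemma mem_rootsIn {p : ℝ[X]} (hp : p ≠ 0) {s : Set ℝ} {x : ℝ} :
    x ∈ rootsIn p s ↔ p.eval x = 0 ∧ x ∈ s := by
  simp [rootsIn, hp]

lemma rootsIn_subset_rootsIn {p q : ℝ[X]} (hpq : p ∣ q) (hq : q ≠ 0) {s t : Set ℝ} (hst : s ⊆ t) :
    rootsIn p s ⊆ rootsIn q t := fun x hx => by
  obtain ⟨hpx, hxs⟩ := (mem_rootsIn (ne_zero_of_dvd_ne_zero hq hpq)).1 hx
  exact (mem_rootsIn hq).2 ⟨eval_eq_zero_of_dvd_of_eval_eq_zero hpq hpx, hst hxs⟩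

namespace InterlacingPair

variable {F G : ℝ[X]}

lemma left_ne_zero (h : InterlacingPair F G) : F ≠ 0 := by
  rintro rfl
  simpa using h.left_pos

lemma right_eval_ne_zero (h : InterlacingPair F G) {x : ℝ} (hx : F.eval x = 0) :
    G.eval x ≠ 0 := by
  intro hG
  simpa [wronskian, hx, hG] using h.wronskian_pos x

lemma rootMultiplicity_le_one (h : InterlacingPair F G) (x : ℝ) : F.rootMultiplicity x ≤ 1 := by
  by_contra! multiple
  obtain ⟨hF, hF'⟩ := (one_lt_rootMultiplicity_iff_isRoot h.left_ne_zero).1 multiple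
  simpa [wronskian, hF.eq_zero, hF'.eq_zero] using h.wronskian_pos x

lemma rootMultiplicity_add_card_rootsIn_le (h : InterlacingPair F G) {E : ℝ[X]} (hE : E ∣ F)
    {L : ℝ} (hL : 0 < L) :
    E.rootMultiplicity L + (rootsIn F (Ioo 0 L)).card ≤ (rootsIn F (Ioc 0 L)).card := by
  by_cases hEL : E.IsRoot L
  · have simple_root : E.rootMultiplicity L ≤ 1 :=
      (rootMultiplicity_le_rootMultiplicity_of_dvd h.left_ne_zero hE L).trans
        (h.rootMultiplicity_le_one L)
    have L_mem : L ∈ rootsIn F (Ioc 0 L) :=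
      (mem_rootsIn h.left_ne_zero).2 ⟨hEL.dvd hE, hL, le_rfl⟩
    have L_notMem : L ∉ rootsIn F (Ioo 0 L) := fun hmem =>
      lt_irrefl L ((mem_rootsIn h.left_ne_zero).1 hmem).2.2
    have := Finset.card_lt_card <| (Finset.ssubset_iff_of_subset <|
      rootsIn_subset_rootsIn dvd_rfl h.left_ne_zero Ioo_subset_Ioc_self).2 ⟨L, L_mem, L_notMem⟩
    omega
  · rw [rootMultiplicity_eq_zero hEL, zero_add]
    exact Finset.card_le_card
      (rootsIn_subset_rootsIn dvd_rfl h.left_ne_zero Ioo_subset_Ioc_self)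

lemma sub_X_mul (h : InterlacingPair F G) {m : ℝ} (hm : 0 < m) :
    InterlacingPair (F - X * C m * G) G where
  wronskian_pos x := by
    have wronskian_eq : wronskian (F - X * C m * G) G = wronskian F G + C m * G ^ 2 := by
      simp only [wronskian, derivative_sub, derivative_mul, derivative_X, derivative_C]
      ring
    have := h.wronskian_pos x
    rw [wronskian_eq]
    simp only [eval_add, eval_mul, eval_C, eval_pow]
    positivity
  left_pos := by simpa using h.left_pos
  right_pos := h.right_pos

lemma eval_sub_X_mul_ne_zero (h : InterlacingPair F G) {m x : ℝ} (hm : 0 < m) (hx : 0 ≤ x)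
    (hFx : x = 0 ∨ F.eval x = 0) : (F - X * C m * G).eval x ≠ 0 := by
  rcases hx.eq_or_lt with rfl | hx
  · exact (h.sub_X_mul hm).left_pos.ne'
  · have hFx := hFx.resolve_left hx.ne'
    have := h.right_eval_ne_zero hFx
    simp only [eval_sub, eval_mul, eval_X, eval_C, hFx, zero_sub]
    rw [neg_ne_zero]
    positivity

lemma eval_div_eval_sub_X_mul_neg (h : InterlacingPair F G) {m x : ℝ} (hm : 0 < m) (hx : 0 < x)
    (hFx : F.eval x = 0) : G.eval x / (F - X * C m * G).eval x < 0 := by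
  have := h.right_eval_ne_zero hFx
  have ratio_eq : G.eval x / (F - X * C m * G).eval x = -(x * m)⁻¹ := by
    simp only [eval_sub, eval_mul, eval_X, eval_C, hFx, zero_sub]
    rw [div_neg, div_mul_cancel_right₀ this]
  rw [ratio_eq, neg_lt_zero]
  positivity

/-- Without a root in between, the increasing ratio of `G` to `F - m λ G` would be negative on all
of `[μ, ν]`, hence `G` would have no zero there, contradicting `G 0 > 0` or the strict monotonicity
of `-F / G`. -/
lemma exists_root_sub_X_mul (h : InterlacingPair F G) {m μ ν : ℝ} (hm : 0 < m) (hμ : 0 ≤ μ)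
    (hμν : μ < ν) (hFμ : μ = 0 ∨ F.eval μ = 0) (hFν : F.eval ν = 0) :
    ∃ x ∈ Ioo μ ν, (F - X * C m * G).eval x = 0 := by
  by_contra! no_root
  have hν : 0 < ν := hμ.trans_lt hμν
  have eval_ne_zero (x : ℝ) (hx : x ∈ Icc μ ν) : (F - X * C m * G).eval x ≠ 0 := by
    rcases eq_endpoints_or_mem_Ioo_of_mem_Icc hx with rfl | rfl | hx
    · exact h.eval_sub_X_mul_ne_zero hm hμ hFμ
    · exact h.eval_sub_X_mul_ne_zero hm hν.le (.inr hFν)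
    · exact no_root x hx
  have ratio_mono : StrictMonoOn (fun x => G.eval x / (F - X * C m * G).eval x) (Icc μ ν) :=
    strictMonoOn_eval_div_eval (convex_Icc μ ν) eval_ne_zero fun x _ =>
      (h.sub_X_mul hm).wronskian_pos x
  have ratio_neg (x : ℝ) (hx : x ∈ Icc μ ν) : G.eval x / (F - X * C m * G).eval x < 0 :=
    (ratio_mono.monotoneOn hx ⟨hμν.le, le_rfl⟩ hx.2).trans_lt
      (h.eval_div_eval_sub_X_mul_neg hm hν hFν)
  rcases hFμ with rfl | hFμ
  · exact (div_pos h.right_pos (h.sub_X_mul hm).left_pos).not_gt (ratio_neg 0 ⟨le_rfl, hμν.le⟩)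
  · have G_ne_zero (x : ℝ) (hx : x ∈ Icc μ ν) : G.eval x ≠ 0 := fun hG => by
      simpa [hG] using ratio_neg x hx
    have wronskian_swap : wronskian G (-F) = wronskian F G := by
      rw [wronskian_neg_right, wronskian_neg_eq]
    have := strictMonoOn_eval_div_eval (G := -F) (convex_Icc μ ν) G_ne_zero
      (fun x _ => wronskian_swap ▸ h.wronskian_pos x) ⟨le_rfl, hμν.le⟩ ⟨hμν.le, le_rfl⟩ hμν
    simp [hFμ, hFν] at this

lemma card_rootsIn_le_sub_X_mul (h : InterlacingPair F G) {m : ℝ} (hm : 0 < m) (L : ℝ) :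
    (rootsIn F (Ioc 0 L)).card ≤ (rootsIn (F - X * C m * G) (Ioo 0 L)).card := by
  have mem_left {x : ℝ} : x ∈ rootsIn F (Ioc 0 L) ↔ F.eval x = 0 ∧ x ∈ Ioc 0 L :=
    mem_rootsIn h.left_ne_zero
  refine card_le_card_of_separated fun ν hν => ?_
  obtain ⟨hFν, hν⟩ := mem_left.1 hν
  let below : Finset ℝ := insert 0 {x ∈ rootsIn F (Ioc 0 L) | x < ν}
  have below_nonempty : below.Nonempty := Finset.insert_nonempty _ _
  obtain ⟨hμ, hFμ, hμν⟩ : 0 ≤ below.max' below_nonempty ∧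
      (below.max' below_nonempty = 0 ∨ F.eval (below.max' below_nonempty) = 0) ∧
      below.max' below_nonempty < ν := by
    rcases Finset.mem_insert.1 (below.max'_mem below_nonempty) with hμ | hμ
    · exact ⟨hμ.ge, .inl hμ, hμ ▸ hν.1⟩
    · obtain ⟨hμ, hμν⟩ := Finset.mem_filter.1 hμ
      obtain ⟨hFμ, hμ⟩ := mem_left.1 hμ
      exact ⟨hμ.1.le, .inr hFμ, hμν⟩
  obtain ⟨z, hz, hNz⟩ := h.exists_root_sub_X_mul hm hμ hμν hFμ hFν
  refine ⟨z, (mem_rootsIn (h.sub_X_mul hm).left_ne_zero).2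
    ⟨hNz, hμ.trans_lt hz.1, hz.2.trans_le hν.2⟩, hz.2, fun x hx hxν => ?_⟩
  exact (below.le_max' x (by simp [below, hx, hxν])).trans_lt hz.1

lemma link_of_isCoprime (h : InterlacingPair F G) {k b : ℝ} (hk : 0 < k) (hb : 0 ≤ b)
    (no_common_root : ∀ x, (link k b).eval x = 0 → F.eval x ≠ 0) :
    InterlacingPair (link k b * F) (F + link k b * G) where
  wronskian_pos x := by
    have wronskian_eq : wronskian (link k b * F) (F + link k b * G) =
        link k b ^ 2 * wronskian F G + C b * F ^ 2 := by
      simp only [wronskian, link, derivative_add, derivative_sub, derivative_mul, derivative_X,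
        derivative_C]
      ring
    have hW := h.wronskian_pos x
    rw [wronskian_eq]
    simp only [eval_add, eval_mul, eval_C, eval_pow]
    by_cases hp : (link k b).eval x = 0
    · have hF := no_common_root x hp
      have : b ≠ 0 := by
        rintro rfl
        simp [link, hk.ne'] at hp
      positivity
    · positivity
  left_pos := by simpa [link] using mul_pos hk h.left_pos
  right_pos := by simpa [link] using add_pos h.left_pos (mul_pos hk h.right_pos)

lemma link_of_dvd {F₁ : ℝ[X]} {k b : ℝ} (h : InterlacingPair (link k b * F₁) G) (hk : 0 < k)
    (hb : 0 ≤ b) : InterlacingPair (link k b * F₁) (F₁ + G) where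
  wronskian_pos x := by
    have wronskian_eq : wronskian (link k b * F₁) (F₁ + G) =
        wronskian (link k b * F₁) G + C b * F₁ ^ 2 := by
      simp only [wronskian, link, derivative_add, derivative_sub, derivative_mul, derivative_X,
        derivative_C]
      ring
    have hW := h.wronskian_pos x
    rw [wronskian_eq]
    simp only [eval_add, eval_mul, eval_C, eval_pow]
    positivity
  left_pos := h.left_pos
  right_pos := by
    have left_pos : 0 < k * F₁.eval 0 := by simpa [link] using h.left_pos
    simpa using add_pos (pos_of_mul_pos_right left_pos hk.le) h.right_pos

lemma exists_link_factorization (h : InterlacingPair F G) {k b : ℝ} (hk : 0 < k) (hb : 0 ≤ b)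
    {L : ℝ} (hL : 0 < L) :
    ∃ E A B, E ≠ 0 ∧ link k b * F = E * A ∧ F + link k b * G = E * B ∧ InterlacingPair A B ∧
      E.rootMultiplicity L + (rootsIn F (Ioo 0 L)).card ≤ (rootsIn A (Ioc 0 L)).card := by
  by_cases common_root : ∃ x, (link k b).eval x = 0 ∧ F.eval x = 0
  · obtain ⟨x, hpx, hFx⟩ := common_root
    obtain ⟨F₁, rfl⟩ := link_dvd_of_common_root hk hpx hFx
    have link_ne_zero := left_ne_zero_of_mul h.left_ne_zero
    exact ⟨link k b, link k b * F₁, F₁ + G, link_ne_zero, rfl, by ring, h.link_of_dvd hk hb,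
      h.rootMultiplicity_add_card_rootsIn_le (dvd_mul_right _ _) hL⟩
  · push Not at common_root
    refine ⟨1, link k b * F, F + link k b * G, one_ne_zero, (one_mul _).symm, (one_mul _).symm,
      h.link_of_isCoprime hk hb common_root, ?_⟩
    rw [← C_1, rootMultiplicity_C, zero_add]
    exact Finset.card_le_card (rootsIn_subset_rootsIn (dvd_mul_left _ _)
      (h.link_of_isCoprime hk hb common_root).left_ne_zero Ioo_subset_Ioc_self)

end InterlacingPair

/-- A new common factor `λ - L` of `f` and `g` can only appear while `L` is a root of `F`; this root
survives in the coprime part, and the mass attached next moves it below `L`. -/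
lemma ChainPair.exists_interlacing_factorization {n : ℕ} {f g : ℝ[X]} (h : ChainPair n f g)
    {L : ℝ} (hL : 0 < L) :
    ∃ E F G, E ≠ 0 ∧ f = E * F ∧ g = E * G ∧ InterlacingPair F G ∧
      E.rootMultiplicity L ≤ (rootsIn F (Ioo 0 L)).card := by
  induction h with
  | @one m k b hm hk hb =>
    refine ⟨1, _, 1, one_ne_zero, (one_mul _).symm, (one_mul _).symm,
      ⟨fun x => ?_, by simpa [link], by simp⟩, ?_⟩
    · simpa [wronskian, link] using add_pos_of_pos_of_nonneg hm hb
    · rw [← C_1, rootMultiplicity_C]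
      exact Nat.zero_le _
  | @succ m k b hm hk hb n f g _ ih =>
    obtain ⟨E, F, G, hE, rfl, rfl, hFG, hcard⟩ := ih
    obtain ⟨E', A, B, hE', hA, hB, hAB, hcard'⟩ := hFG.exists_link_factorization hk hb hL
    refine ⟨E * E', A - X * C m * B, B, mul_ne_zero hE hE', ?_, ?_, hAB.sub_X_mul hm, ?_⟩
    · linear_combination E * hA - X * C m * E * hB
    · linear_combination E * hB
    · rw [rootMultiplicity_mul (mul_ne_zero hE hE')]
      have := hAB.card_rootsIn_le_sub_X_mul hm L
      omega

theorem ChainPair.ne_zero_and_rootMultiplicity_le {n : ℕ} {f g : ℝ[X]} (h : ChainPair n f g) {L : ℝ}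
    (hL : 0 < L) : f ≠ 0 ∧ f.rootMultiplicity L ≤ (rootsIn f (Ioo 0 L)).card + 1 := by
  obtain ⟨E, F, G, hE, rfl, rfl, hFG, hcard⟩ := h.exists_interlacing_factorization hL
  have hEF : E * F ≠ 0 := mul_ne_zero hE hFG.left_ne_zero
  have := Finset.card_le_card
    (rootsIn_subset_rootsIn (dvd_mul_left F E) hEF (Subset.refl (Ioo 0 L)))
  have := hFG.rootMultiplicity_le_one L
  refine ⟨hEF, ?_⟩
  rw [rootMultiplicity_mul hEF]
  omega

lemma ChainPair.natDegree_le {n : ℕ} {f g : ℝ[X]} (h : ChainPair n f g) :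
    f.natDegree ≤ n ∧ g.natDegree < n := by
  induction h with
  | one =>
    simp only [link]
    constructor <;> compute_degree!
  | @succ m k b _ _ _ n f g _ ih =>
    obtain ⟨hf, hg⟩ := ih
    have hp : (link k b).natDegree ≤ 1 := by
      simp only [link]
      compute_degree!
    have hX : (X * C m).natDegree ≤ 1 := by compute_degree!
    have hpg : (f + link k b * g).natDegree ≤ n :=
      natDegree_add_le_of_degree_le hf ((natDegree_mul_le_of_le hp le_rfl).trans (by omega))
    have hmpg : (X * C m * (f + link k b * g)).natDegree ≤ n + 1 :=
      (natDegree_mul_le_of_le hX hpg).trans (by omega)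
    have hpf : (link k b * f).natDegree ≤ n + 1 := (natDegree_mul_le_of_le hp hf).trans (by omega)
    exact ⟨(natDegree_sub_le_of_le hpf hmpg).trans_eq (max_self _), by omega⟩

lemma exists_eq_of_eval_prod_eq_zero {ι : Type*} [Fintype ι] {a : ι → ℝ} {t : ι → ℕ} {x : ℝ}
    (hx : (∏ i, (X - C (a i)) ^ t i).eval x = 0) : ∃ i, a i = x := by
  rw [eval_prod, Finset.prod_eq_zero_iff] at hx
  obtain ⟨i, -, hi⟩ := hx
  rw [eval_pow, eval_sub, eval_X, eval_C] at hi
  exact ⟨i, (sub_eq_zero.1 (eq_zero_of_pow_eq_zero hi)).symm⟩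

theorem ChainPair.le_succ_of_prod_dvd {n N : ℕ} {t : Fin N → ℕ} (htn : ∑ i, t i = n)
    {lam : Fin N → ℝ} (hpos : ∀ i, 0 < lam i) (hmono : StrictMono lam) {f g : ℝ[X]}
    (h : ChainPair n f g) (hdvd : ∏ i, (X - C (lam i)) ^ t i ∣ f) (i : Fin N) :
    t i ≤ i + 1 := by
  obtain ⟨hf, hcard⟩ := h.ne_zero_and_rootMultiplicity_le (hpos i)
  have monic_prod : (∏ i, (X - C (lam i)) ^ t i).Monic :=
    monic_prod_of_monic _ _ fun i _ => (monic_X_sub_C _).pow _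
  have natDegree_prod : (∏ i, (X - C (lam i)) ^ t i).natDegree = n := by
    rw [natDegree_prod_of_monic _ _ fun i _ => (monic_X_sub_C _).pow _]
    simpa [natDegree_pow] using htn
  have f_eq := eq_leadingCoeff_mul_of_monic_of_dvd_of_natDegree_le monic_prod hdvd
    (h.natDegree_le.1.trans_eq natDegree_prod.symm)
  have roots_below : rootsIn f (Ioo 0 (lam i)) ⊆ (Finset.Iio i).image lam := fun x hx => by
    obtain ⟨hfx, hx⟩ := (mem_rootsIn hf).1 hx
    rw [f_eq, eval_mul, eval_C] at hfx
    obtain ⟨j, rfl⟩ := exists_eq_of_eval_prod_eq_zero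
      ((mul_eq_zero.1 hfx).resolve_left (leadingCoeff_ne_zero.2 hf))
    exact Finset.mem_image_of_mem lam (Finset.mem_Iio.2 (hmono.lt_iff_lt.1 hx.2))
  have le_rootMultiplicity : t i ≤ f.rootMultiplicity (lam i) :=
    (le_rootMultiplicity_iff hf).2 <|
      (Finset.dvd_prod_of_mem (fun i => (X - C (lam i)) ^ t i) (Finset.mem_univ i)).trans hdvd
  have card_le : (rootsIn f (Ioo 0 (lam i))).card ≤ i :=
    (Finset.card_le_card roots_below).trans (Finset.card_image_le.trans_eq (Fin.card_Iio i))
  omega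

end Necessity

section DegreeLT

variable {R : Type*} [CommRing R] {p : R[X]} {r : ℕ}

lemma mem_degreeLT_iff_coeff : p ∈ degreeLT R r ↔ ∀ i, r ≤ i → p.coeff i = 0 :=
  mem_degreeLT.trans (degree_lt_iff_coeff_zero _ _)

lemma C_mul_mem_degreeLT (hp : p ∈ degreeLT R r) (c : R) : C c * p ∈ degreeLT R r := by
  rw [← smul_eq_C_mul]
  exact Submodule.smul_mem _ _ hp

lemma X_mul_C_mul_mem_degreeLT (hp : p ∈ degreeLT R r) (c : R) :
    X * C c * p ∈ degreeLT R (r + 1) := by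
  rw [mem_degreeLT_iff_coeff] at hp ⊢
  rintro (_ | i) hi
  · omega
  · rw [mul_assoc, coeff_X_mul, coeff_C_mul, hp i (by omega), mul_zero]

lemma mem_degreeLT_of_coeff_eq_zero (hp : p ∈ degreeLT R (r + 1)) (hr : p.coeff r = 0) :
    p ∈ degreeLT R r := by
  rw [mem_degreeLT_iff_coeff] at hp ⊢
  intro i hi
  rcases hi.eq_or_lt with rfl | hi
  · exact hr
  · exact hp i hi

lemma divByMonic_X_sub_C_mem_degreeLT (hp : p ∈ degreeLT R (r + 1)) (a : R) :
    p /ₘ (X - C a) ∈ degreeLT R r := by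
  rw [mem_degreeLT_iff_coeff] at hp ⊢
  intro i hi
  rw [coeff_divByMonic_X_sub_C]
  refine Finset.sum_eq_zero fun j hj => ?_
  rw [hp j (by grind), mul_zero]

end DegreeLT

section CoefficientTopology

open Filter Topology

variable {R : Type*} [CommRing R] [TopologicalSpace R]

/-- The topology of coefficientwise convergence on polynomials. -/
local instance coeffTopology : TopologicalSpace R[X] :=
  .induced (fun p : R[X] => p.coeff) inferInstance

@[fun_prop]
lemma continuous_coeff (i : ℕ) : Continuous fun p : R[X] => p.coeff i :=
  (continuous_apply i).comp continuous_induced_dom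

lemma continuousOn_of_coeff {α : Type*} [TopologicalSpace α] {f : α → R[X]} {s : Set α}
    (h : ∀ i, ContinuousOn (fun a => (f a).coeff i) s) : ContinuousOn f s :=
  (Topology.IsInducing.induced _).continuousOn_iff.2 (continuousOn_pi.2 h)

lemma continuous_of_coeff {α : Type*} [TopologicalSpace α] {f : α → R[X]}
    (h : ∀ i, Continuous fun a => (f a).coeff i) : Continuous f :=
  continuous_induced_rng.2 (continuous_pi h)

@[fun_prop]
lemma continuous_C : Continuous (C : R → R[X]) := by
  refine continuous_of_coeff fun i => ?_
  simp only [coeff_C]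
  split_ifs <;> fun_prop

variable [IsTopologicalRing R]

local instance isTopologicalRing_polynomial : IsTopologicalRing R[X] where
  continuous_add := continuous_of_coeff fun i => by
    simp only [coeff_add]
    exact ((continuous_coeff i).comp continuous_fst).add ((continuous_coeff i).comp continuous_snd)
  continuous_mul := continuous_of_coeff fun i => by
    simp only [coeff_mul]
    exact continuous_finsetSum _ fun j _ =>
      ((continuous_coeff j.1).comp continuous_fst).mul ((continuous_coeff j.2).comp continuous_snd)
  continuous_neg := continuous_of_coeff fun i => by
    simp only [coeff_neg]
    exact (continuous_coeff i).neg

/-- Bounding the degree is essential: `eval a` is not continuous on all of `R[X]`. -/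
lemma continuousOn_eval (a : R) (r : ℕ) :
    ContinuousOn (eval a) (degreeLT R r : Set R[X]) := by
  have eval_eq_sum (p : R[X]) (hp : p ∈ degreeLT R r) :
      p.eval a = ∑ i ∈ Finset.range r, p.coeff i * a ^ i := by
    rw [eval_eq_sum_degreeLTEquiv hp, Finset.sum_range]
    rfl
  refine ContinuousOn.congr ?_ eval_eq_sum
  exact (continuous_finsetSum _ fun i _ => (continuous_coeff i).mul continuous_const).continuousOn

lemma continuousOn_divByMonic_X_sub_C (r : ℕ) :
    ContinuousOn (fun q : R[X] × R => q.1 /ₘ (X - C q.2))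
      ((degreeLT R r : Set R[X]) ×ˢ Set.univ) := by
  refine continuousOn_of_coeff fun i => ?_
  have coeff_eq_sum (q : R[X] × R) (hq : q ∈ (degreeLT R r : Set R[X]) ×ˢ Set.univ) :
      (q.1 /ₘ (X - C q.2)).coeff i =
        ∑ j ∈ Finset.Ico (i + 1) r, q.2 ^ (j - (i + 1)) * q.1.coeff j := by
    have coeff_eq_zero := mem_degreeLT_iff_coeff.1 hq.1
    rw [coeff_divByMonic_X_sub_C]
    refine Finset.sum_congr_of_eq_on_inter (fun j hj hj' => ?_) (fun j hj hj' => ?_)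
      fun _ _ _ => rfl
    · rw [coeff_eq_zero j (by grind), mul_zero]
    · rw [coeff_eq_zero_of_natDegree_lt (by grind), mul_zero]
  refine ContinuousOn.congr ?_ coeff_eq_sum
  exact (continuous_finsetSum _ fun j _ =>
    (continuous_snd.pow _).mul ((continuous_coeff j).comp continuous_fst)).continuousOn

end CoefficientTopology

section Sufficiency

open Filter Topology

attribute [local instance] coeffTopology isTopologicalRing_polynomial

/-- The pairs `(F, G)` with `deg F ≤ r` and `deg G ≤ r - 1`. -/
def degreeBox (r : ℕ) : Set (ℝ[X] × ℝ[X]) :=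
  (degreeLT ℝ (r + 1) : Set ℝ[X]) ×ˢ (degreeLT ℝ r : Set ℝ[X])

/-- `x` is, up to a common factor divisible by `P`, the pair of characteristic polynomials of a
chain of `n` masses. -/
def Realizable (n : ℕ) (P : ℝ[X]) (x : ℝ[X] × ℝ[X]) : Prop :=
  ∃ E, P ∣ E ∧ ChainPair n (E * x.1) (E * x.2)

/-- Stable realizability: every pair close to `x` and within its degree bounds is realizable. The
stability is what allows the parameters of a chain to be perturbed when it is extended. -/
structure RealizableNear (n : ℕ) (P : ℝ[X]) (r : ℕ) (x : ℝ[X] × ℝ[X]) : Prop where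
  mem_degreeBox : x ∈ degreeBox r
  eventually : ∀ᶠ y in 𝓝[degreeBox r] x, Realizable n P y

variable {n : ℕ} {P F G S : ℝ[X]}

lemma Realizable.of_mem_degreeBox_one (h : (F, G) ∈ degreeBox 1) (hF₀ : 0 < F.coeff 0)
    (hF₁ : 0 < -F.coeff 1) (hG₀ : 0 < G.coeff 0) : Realizable 1 1 (F, G) := by
  have hF : F = C (F.coeff 1) * X + C (F.coeff 0) :=
    eq_X_add_C_of_natDegree_le_one
      (natDegree_le_iff_coeff_eq_zero.2 (mem_degreeLT_iff_coeff.1 h.1))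
  have hG : G = C (G.coeff 0) :=
    eq_C_of_natDegree_le_zero (natDegree_le_iff_coeff_eq_zero.2 (mem_degreeLT_iff_coeff.1 h.2))
  have C_inv_mul : (C (G.coeff 0)⁻¹ * C (G.coeff 0) : ℝ[X]) = 1 := by
    rw [← C_mul, inv_mul_cancel₀ hG₀.ne', C_1]
  refine ⟨C (G.coeff 0)⁻¹, one_dvd _, ?_⟩
  convert ChainPair.one (div_pos hF₁ hG₀) (div_pos hF₀ hG₀) le_rfl using 1
  · simp only [link, C_0, div_eq_mul_inv, C_mul, C_neg]
    linear_combination C (G.coeff 0)⁻¹ * hF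
  · linear_combination C (G.coeff 0)⁻¹ * hG + C_inv_mul

lemma Realizable.spring {m ρ : ℝ} (hm : 0 < m) (hρ : 0 < ρ) (hS : S = F + X * C m * G)
    (h : Realizable n P (S, G - C ρ * S)) : Realizable (n + 1) P (F, G) := by
  obtain ⟨E, hE, h⟩ := h
  have C_inv_mul : (C ρ⁻¹ * C ρ : ℝ[X]) = 1 := by rw [← C_mul, inv_mul_cancel₀ hρ.ne', C_1]
  refine ⟨E * C ρ⁻¹, hE.mul_right _, ?_⟩
  convert ChainPair.succ hm (inv_pos.2 hρ) le_rfl h using 1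
  · simp only [link, C_0]
    linear_combination -E * C ρ⁻¹ * hS - X * C m * E * S * C_inv_mul
  · simp only [link, C_0]
    linear_combination E * S * C_inv_mul

lemma Realizable.inerter {N : ℝ[X]} {m ρ a : ℝ} (hm : 0 < m) (hρ : 0 < ρ) (ha : 0 < a)
    (hS : S = F + X * C m * G) (hN : (X - C a) * N = S) (h : Realizable n P (S, G + C ρ * N)) :
    Realizable (n + 1) (P * (X - C a)) (F, G) := by
  obtain ⟨E, hE, h⟩ := h
  have C_inv_mul : (C ρ⁻¹ * C ρ : ℝ[X]) = 1 := by rw [← C_mul, inv_mul_cancel₀ hρ.ne', C_1]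
  refine ⟨E * (X - C a) * C (-ρ⁻¹), (mul_dvd_mul_right hE _).mul_right _, ?_⟩
  convert ChainPair.succ hm (mul_pos ha (inv_pos.2 hρ)) (inv_pos.2 hρ).le h using 1
  · simp only [link, C_mul, C_neg]
    linear_combination C ρ⁻¹ * (X - C a) * E * hS - X * C m * E * (X - C a) * N * C_inv_mul -
      X * C m * E * hN
  · simp only [link, C_mul, C_neg]
    linear_combination E * (X - C a) * N * C_inv_mul + E * hN

/-- The mass `m` for which the degree of `F + m λ G` drops. -/
noncomputable def topMass (r : ℕ) (y : ℝ[X] × ℝ[X]) : ℝ := -y.1.coeff (r + 1) / y.2.coeff r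

/-- The polynomial `F + m λ G`, with the mass `m` chosen so that the degree drops. -/
noncomputable def removeTopMass (r : ℕ) (y : ℝ[X] × ℝ[X]) : ℝ[X] :=
  y.1 + X * C (topMass r y) * y.2

/-- The reciprocal stiffness `ρ` for which the degree of `G - ρ S` drops, where `S` is
`removeTopMass`. -/
noncomputable def topCompliance (r : ℕ) (y : ℝ[X] × ℝ[X]) : ℝ :=
  y.2.coeff r / (removeTopMass r y).coeff r

/-- The pair of the chain without its last mass and spring, both read off from the leading
coefficients. -/
noncomputable def stripSpring (r : ℕ) (y : ℝ[X] × ℝ[X]) : ℝ[X] × ℝ[X] :=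
  (removeTopMass r y, y.2 - C (topCompliance r y) * removeTopMass r y)

section TopMass

variable {r : ℕ} {y : ℝ[X] × ℝ[X]}

lemma topMass_sub (hS : S ∈ degreeLT ℝ (r + 1)) (hG : G.coeff r ≠ 0) (m : ℝ) :
    topMass r (S - X * C m * G, G) = m := by
  have coeff_S : S.coeff (r + 1) = 0 := mem_degreeLT_iff_coeff.1 hS _ le_rfl
  rw [topMass, coeff_sub, coeff_S, mul_assoc, coeff_X_mul, coeff_C_mul, zero_sub, neg_neg,
    mul_div_cancel_right₀ _ hG]

lemma removeTopMass_sub (hS : S ∈ degreeLT ℝ (r + 1)) (hG : G.coeff r ≠ 0) (m : ℝ) :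
    removeTopMass r (S - X * C m * G, G) = S := by
  rw [removeTopMass, topMass_sub hS hG, sub_add_cancel]

lemma continuousAt_topMass (hy : y.2.coeff r ≠ 0) : ContinuousAt (topMass r) y := by
  unfold topMass
  fun_prop (disch := assumption)

lemma continuousAt_removeTopMass (hy : y.2.coeff r ≠ 0) : ContinuousAt (removeTopMass r) y := by
  have := continuousAt_topMass hy
  unfold removeTopMass
  fun_prop

lemma continuousAt_topCompliance (hy : y.2.coeff r ≠ 0) (hy' : (removeTopMass r y).coeff r ≠ 0) :
    ContinuousAt (topCompliance r) y := by
  have := continuousAt_removeTopMass hy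
  unfold topCompliance
  fun_prop (disch := assumption)

lemma continuousAt_stripSpring (hy : y.2.coeff r ≠ 0) (hy' : (removeTopMass r y).coeff r ≠ 0) :
    ContinuousAt (stripSpring r) y := by
  have := continuousAt_removeTopMass hy
  have := continuousAt_topCompliance hy hy'
  unfold stripSpring
  fun_prop

lemma stripSpring_mem_degreeBox (hy : y ∈ degreeBox (r + 1)) (hy_coeff : y.2.coeff r ≠ 0)
    (hy_lower : (removeTopMass r y).coeff r ≠ 0) : stripSpring r y ∈ degreeBox r := by
  have lower_mem : removeTopMass r y ∈ degreeLT ℝ (r + 1) := by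
    refine mem_degreeLT_of_coeff_eq_zero (add_mem hy.1 (X_mul_C_mul_mem_degreeLT hy.2 _)) ?_
    rw [removeTopMass, coeff_add, mul_assoc, coeff_X_mul, coeff_C_mul, topMass,
      div_mul_cancel₀ _ hy_coeff, add_neg_cancel]
  refine ⟨lower_mem, mem_degreeLT_of_coeff_eq_zero
    (sub_mem hy.2 (C_mul_mem_degreeLT lower_mem _)) ?_⟩
  rw [stripSpring, coeff_sub, coeff_C_mul, topCompliance, div_mul_cancel₀ _ hy_lower, sub_self]

lemma eventually_stripSpring_mem_degreeBox (hy : y.2.coeff r ≠ 0)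
    (hy_lower : (removeTopMass r y).coeff r ≠ 0) :
    ∀ᶠ z in 𝓝[degreeBox (r + 1)] y, stripSpring r z ∈ degreeBox r := by
  have coeff_ne : ∀ᶠ z in 𝓝 y, z.2.coeff r ≠ 0 := ContinuousAt.eventually_ne (by fun_prop) hy
  have lower_ne := ContinuousAt.eventually_ne
    ((continuous_coeff r).continuousAt.comp (continuousAt_removeTopMass hy)) hy_lower
  filter_upwards [self_mem_nhdsWithin, nhdsWithin_le_nhds coeff_ne, nhdsWithin_le_nhds lower_ne]
    with z hz hz_coeff hz_lower
  exact stripSpring_mem_degreeBox hz hz_coeff hz_lower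

end TopMass

/-- The mass `m` for which `F + m λ G` vanishes at `a`. -/
noncomputable def rootMass (a : ℝ) (y : ℝ[X] × ℝ[X]) : ℝ := -y.1.eval a / (a * y.2.eval a)

/-- The polynomial `F + m λ G`, with the mass `m` chosen so that it vanishes at `a`. -/
noncomputable def removeRootMass (a : ℝ) (y : ℝ[X] × ℝ[X]) : ℝ[X] :=
  y.1 + X * C (rootMass a y) * y.2

/-- The pair of the chain without its last mass and link, where the link has stiffness `a / ρ` and
inertance `1 / ρ` and the mass makes the remaining polynomial vanish at `a`. -/
noncomputable def stripInerter (a ρ : ℝ) (y : ℝ[X] × ℝ[X]) : ℝ[X] × ℝ[X] :=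
  (removeRootMass a y, y.2 + C ρ * (removeRootMass a y /ₘ (X - C a)))

section RootMass

variable {r : ℕ} {a : ℝ} {y : ℝ[X] × ℝ[X]}

lemma rootMass_sub (ha : a ≠ 0) (hS : S.eval a = 0) (hG : G.eval a ≠ 0) (m : ℝ) :
    rootMass a (S - X * C m * G, G) = m := by
  simp only [rootMass, eval_sub, eval_mul, eval_X, eval_C, hS]
  field_simp
  ring

lemma removeRootMass_sub (ha : a ≠ 0) (hS : S.eval a = 0) (hG : G.eval a ≠ 0) (m : ℝ) :
    removeRootMass a (S - X * C m * G, G) = S := by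
  rw [removeRootMass, rootMass_sub ha hS hG, sub_add_cancel]

lemma isRoot_removeRootMass (ha : a ≠ 0) (hy : y.2.eval a ≠ 0) :
    (removeRootMass a y).IsRoot a := by
  simp only [IsRoot, removeRootMass, rootMass, eval_add, eval_mul, eval_X, eval_C]
  field_simp
  ring

lemma removeRootMass_mem_degreeLT (hy : y ∈ degreeBox r) :
    removeRootMass a y ∈ degreeLT ℝ (r + 1) :=
  add_mem hy.1 (X_mul_C_mul_mem_degreeLT hy.2 _)

lemma stripInerter_mem_degreeBox (hy : y ∈ degreeBox r) (ρ : ℝ) :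
    stripInerter a ρ y ∈ degreeBox r :=
  have lower_mem := removeRootMass_mem_degreeLT hy
  ⟨lower_mem, add_mem hy.2 (C_mul_mem_degreeLT (divByMonic_X_sub_C_mem_degreeLT lower_mem a) ρ)⟩

lemma continuousOn_eval_snd (a : ℝ) (r : ℕ) : ContinuousOn (fun y => y.2.eval a) (degreeBox r) :=
  (continuousOn_eval a r).comp continuousOn_snd fun _ hy => hy.2

lemma continuousWithinAt_rootMass (ha : a ≠ 0) (hy : y ∈ degreeBox r) (hya : y.2.eval a ≠ 0) :
    ContinuousWithinAt (rootMass a) (degreeBox r) y := by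
  have continuousOn_eval_fst : ContinuousOn (fun y => y.1.eval a) (degreeBox r) :=
    (continuousOn_eval a (r + 1)).comp continuousOn_fst fun _ hy => hy.1
  exact (continuousOn_eval_fst y hy).neg.div
    (continuousWithinAt_const.mul (continuousOn_eval_snd a r y hy)) (mul_ne_zero ha hya)

lemma continuousWithinAt_stripInerter (ha : a ≠ 0) (hy : y ∈ degreeBox r)
    (hya : y.2.eval a ≠ 0) (ρ : ℝ) : ContinuousWithinAt (stripInerter a ρ) (degreeBox r) y := by
  have mass_continuous := continuousWithinAt_rootMass ha hy hya
  have remove_continuous : ContinuousWithinAt (removeRootMass a) (degreeBox r) y := by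
    unfold removeRootMass
    fun_prop
  have div_continuous :
      ContinuousWithinAt (fun y => removeRootMass a y /ₘ (X - C a)) (degreeBox r) y :=
    (continuousOn_divByMonic_X_sub_C (r + 1) (removeRootMass a y, a)
        ⟨removeRootMass_mem_degreeLT hy, Set.mem_univ a⟩).comp
      (f := fun y => (removeRootMass a y, a)) (remove_continuous.prodMk continuousWithinAt_const)
      fun _ hz => ⟨removeRootMass_mem_degreeLT hz, Set.mem_univ a⟩
  exact remove_continuous.prodMk
    (continuous_snd.continuousWithinAt.add (continuousWithinAt_const.mul div_continuous))

end RootMass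

namespace RealizableNear

variable {r : ℕ} {x : ℝ[X] × ℝ[X]}

lemma realizable (h : RealizableNear n P r x) : Realizable n P x :=
  h.eventually.self_of_nhdsWithin h.mem_degreeBox

lemma eventually_of_tendsto (h : RealizableNear n P r x) {α : Type*} {l : Filter α}
    {f : α → ℝ[X] × ℝ[X]} (hf : Tendsto f l (𝓝 x)) (hmem : ∀ᶠ a in l, f a ∈ degreeBox r) :
    ∀ᶠ a in l, RealizableNear n P r (f a) := by
  have hf' : Tendsto f l (𝓝[degreeBox r] x) := tendsto_nhdsWithin_iff.2 ⟨hf, hmem⟩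
  filter_upwards [hmem, hf'.eventually (eventually_eventually_nhdsWithin.2 h.eventually)]
    with a hmem h
  exact ⟨hmem, h⟩

lemma of_tendsto (h : RealizableNear n P r x) {n' r' : ℕ} {P' : ℝ[X]} {x' : ℝ[X] × ℝ[X]}
    (hx' : x' ∈ degreeBox r') {f : ℝ[X] × ℝ[X] → ℝ[X] × ℝ[X]}
    (hf : Tendsto f (𝓝[degreeBox r'] x') (𝓝 x))
    (hmem : ∀ᶠ y in 𝓝[degreeBox r'] x', f y ∈ degreeBox r)
    (hstep : ∀ᶠ y in 𝓝[degreeBox r'] x', Realizable n P (f y) → Realizable n' P' y) :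
    RealizableNear n' P' r' x' :=
  ⟨hx', by
    filter_upwards [h.eventually_of_tendsto hf hmem, hstep] with y hy hstep
    exact hstep hy.realizable⟩

lemma spring {Γ : ℝ[X]} (h : RealizableNear n P r (S, Γ)) (hr : S.coeff r ≠ 0) {m ρ : ℝ}
    (hm : 0 < m) (hρ : 0 < ρ) (hG : G = Γ + C ρ * S) :
    RealizableNear (n + 1) P (r + 1) (S - X * C m * G, G) := by
  have hS : S ∈ degreeLT ℝ (r + 1) := h.mem_degreeBox.1
  have hΓ : Γ ∈ degreeLT ℝ r := h.mem_degreeBox.2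
  have coeff_G : G.coeff r = ρ * S.coeff r := by
    simp [hG, mem_degreeLT_iff_coeff.1 hΓ r le_rfl]
  have coeff_G_ne : G.coeff r ≠ 0 := coeff_G ▸ mul_ne_zero hρ.ne' hr
  have hG_mem : G ∈ degreeLT ℝ (r + 1) :=
    hG ▸ add_mem (degreeLT_mono r.le_succ hΓ) (C_mul_mem_degreeLT hS ρ)
  have hF_mem : S - X * C m * G ∈ degreeLT ℝ (r + 2) :=
    sub_mem (degreeLT_mono (r + 1).le_succ hS) (X_mul_C_mul_mem_degreeLT hG_mem m)
  have mass_eq := topMass_sub hS coeff_G_ne m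
  have remove_eq := removeTopMass_sub hS coeff_G_ne m
  have remove_coeff_ne := hr
  rw [← remove_eq] at remove_coeff_ne
  have compliance_eq : topCompliance r (S - X * C m * G, G) = ρ := by
    rw [topCompliance, remove_eq, coeff_G, mul_div_cancel_right₀ _ hr]
  have strip_eq : stripSpring r (S - X * C m * G, G) = (S, Γ) := by
    rw [stripSpring, remove_eq, compliance_eq, hG, add_sub_cancel_right]
  have tendsto_strip := (continuousAt_stripSpring coeff_G_ne remove_coeff_ne).tendsto
  rw [strip_eq] at tendsto_strip
  refine h.of_tendsto ⟨hF_mem, hG_mem⟩ (tendsto_strip.mono_left nhdsWithin_le_nhds)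
    (eventually_stripSpring_mem_degreeBox coeff_G_ne remove_coeff_ne) ?_
  have mass_pos := (continuousAt_topMass coeff_G_ne).eventually_const_lt (mass_eq ▸ hm)
  have compliance_pos :=
    (continuousAt_topCompliance coeff_G_ne remove_coeff_ne).eventually_const_lt
      (compliance_eq ▸ hρ)
  filter_upwards [nhdsWithin_le_nhds mass_pos, nhdsWithin_le_nhds compliance_pos]
    with y hy_mass hy_compliance
  exact Realizable.spring hy_mass hy_compliance rfl

lemma eventually_snd_add_C_mul {N : ℝ[X]} (h : RealizableNear n P r (S, G))
    (hN : N ∈ degreeLT ℝ r) : ∀ᶠ ρ in 𝓝 (0 : ℝ), RealizableNear n P r (S, G + C ρ * N) := by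
  have continuous_pair : Continuous fun ρ : ℝ => (S, G + C ρ * N) :=
    continuous_const.prodMk (continuous_const.add (continuous_C.mul continuous_const))
  have tendsto_pair : Tendsto (fun ρ : ℝ => (S, G + C ρ * N)) (𝓝 0) (𝓝 (S, G)) := by
    simpa using continuous_pair.tendsto 0
  exact h.eventually_of_tendsto tendsto_pair (.of_forall fun _ =>
    ⟨h.mem_degreeBox.1, add_mem h.mem_degreeBox.2 (C_mul_mem_degreeLT hN _)⟩)

lemma inerter (h : RealizableNear n P r (S, G)) {a m : ℝ} (hS : S.eval a = 0) (hG : G.eval a ≠ 0)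
    (ha : 0 < a) (hm : 0 < m) :
    RealizableNear (n + 1) (P * (X - C a)) r (S - X * C m * G, G) := by
  have hS_mem : S ∈ degreeLT ℝ (r + 1) := h.mem_degreeBox.1
  have hG_mem : G ∈ degreeLT ℝ r := h.mem_degreeBox.2
  have hx' : (S - X * C m * G, G) ∈ degreeBox r :=
    ⟨sub_mem hS_mem (X_mul_C_mul_mem_degreeLT hG_mem m), hG_mem⟩
  obtain ⟨ρ, h, hρ⟩ := ((h.eventually_snd_add_C_mul
    (divByMonic_X_sub_C_mem_degreeLT hS_mem a)).filter_mono nhdsWithin_le_nhds |>.and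
      (self_mem_nhdsWithin (s := Set.Ioi (0 : ℝ)))).exists
  have tendsto_strip := (continuousWithinAt_stripInerter ha.ne' hx' hG ρ).tendsto
  have strip_eq :
      stripInerter a ρ (S - X * C m * G, G) = (S, G + C ρ * (S /ₘ (X - C a))) := by
    rw [stripInerter, removeRootMass_sub ha.ne' hS hG]
  rw [strip_eq] at tendsto_strip
  have mass_pos := (continuousWithinAt_rootMass ha.ne' hx' hG).eventually_const_lt
    ((rootMass_sub ha.ne' hS hG m).symm ▸ hm)
  have eval_ne := (continuousOn_eval_snd a r _ hx').eventually_ne hG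
  refine h.of_tendsto hx' tendsto_strip ?_ ?_
  · filter_upwards [self_mem_nhdsWithin] with y hy
    exact stripInerter_mem_degreeBox hy ρ
  · filter_upwards [mass_pos, eval_ne] with y hy_mass hy_eval
    exact Realizable.inerter hy_mass hρ ha rfl
      (mul_divByMonic_eq_iff_isRoot.2 (isRoot_removeRootMass ha.ne' hy_eval))

/-- The masses `q j` decrease with `lam j`, so the layers can be attached one after the other, each
with a positive mass. -/
lemma inerter_finset {ι : Type*} [LinearOrder ι] {lam q : ι → ℝ} (hq : StrictAnti q) {U : Set ℝ}
    (h : ∀ x ∈ U, RealizableNear n P r (S + X * C x * G, G)) (J : Finset ι)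
    (hlam : ∀ j ∈ J, 0 < lam j) (hqU : ∀ j ∈ J, q j ∈ U)
    (hroot : ∀ j ∈ J, (S + X * C (q j) * G).eval (lam j) = 0)
    (hG : ∀ j ∈ J, G.eval (lam j) ≠ 0) :
    ∀ x ∈ U, (∀ j ∈ J, x < q j) →
      RealizableNear (n + J.card) (P * ∏ j ∈ J, (X - C (lam j))) r (S + X * C x * G, G) := by
  induction J using Finset.induction_on_max with
  | empty => simpa using h
  | insert a J hJ ih =>
    simp only [Finset.mem_insert, forall_eq_or_imp] at hlam hqU hroot hG ⊢
    rintro x - hxq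
    have h_lower := ih hlam.2 hqU.2 hroot.2 hG.2 (q a) hqU.1 fun j hj => hq (hJ j hj)
    have ha : a ∉ J := fun ha => (hJ a ha).false
    rw [Finset.card_insert_of_notMem ha, Finset.prod_insert ha, mul_comm (X - C (lam a)),
      ← mul_assoc, ← add_assoc]
    convert h_lower.inerter hroot.1 hG.1 hlam.1 (sub_pos.2 hxq.1) using 2
    rw [C_sub]
    ring

lemma one_sub_C_mul_X {μ : ℝ} (hμ : 0 < μ) : RealizableNear 1 1 1 (1 - C μ⁻¹ * X, 1) := by
  have hx : ((1 - C μ⁻¹ * X, 1) : ℝ[X] × ℝ[X]) ∈ degreeBox 1 := by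
    simp only [degreeBox, Set.mem_prod, SetLike.mem_coe, mem_degreeLT_iff_coeff]
    refine ⟨fun i hi => ?_, fun i hi => ?_⟩
    · simp [coeff_one, coeff_X, show i ≠ 0 by omega, show 1 ≠ i by omega]
    · simp [coeff_one, show i ≠ 0 by omega]
  have near_coeff (φ : ℝ[X] × ℝ[X] → ℝ) (hφ : Continuous φ) (h_pos : 0 < φ (1 - C μ⁻¹ * X, 1)) :
      ∀ᶠ y in 𝓝[degreeBox 1] (1 - C μ⁻¹ * X, 1), 0 < φ y :=
    nhdsWithin_le_nhds (hφ.continuousAt.eventually_const_lt h_pos)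
  refine ⟨hx, ?_⟩
  filter_upwards [self_mem_nhdsWithin, near_coeff (fun y => y.1.coeff 0) (by fun_prop) (by simp),
    near_coeff (fun y => -y.1.coeff 1) (by fun_prop) (by simpa [coeff_one]),
    near_coeff (fun y => y.2.coeff 0) (by fun_prop) (by simp)]
    with y hy hF₀ hF₁ hG₀
  exact Realizable.of_mem_degreeBox_one hy hF₀ hF₁ hG₀

end RealizableNear

/-- The polynomial `S` with `(1 - λ / D) S = F + m λ G`, where `m` is `rootMass D`. -/
noncomputable def rootQuotient (D : ℝ) (y : ℝ[X] × ℝ[X]) : ℝ[X] :=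
  -C D * (removeRootMass D y /ₘ (X - C D))

section RootQuotient

variable {r : ℕ} {a D : ℝ} {y : ℝ[X] × ℝ[X]}

lemma C_sub_X_mul_rootQuotient (hD : D ≠ 0) (hy : y.2.eval D ≠ 0) :
    (C D - X) * rootQuotient D y = C D * removeRootMass D y := by
  have mul_div := mul_divByMonic_eq_iff_isRoot.2 (isRoot_removeRootMass hD hy)
  rw [rootQuotient]
  linear_combination C D * mul_div

lemma rootQuotient_one_sub_mul (ha : a ≠ 0) : rootQuotient a ((1 - C a⁻¹ * X) * F, G) = F := by
  have mass_eq_zero : rootMass a ((1 - C a⁻¹ * X) * F, G) = 0 := by simp [rootMass, ha]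
  have C_inv_mul : (C a⁻¹ * C a : ℝ[X]) = 1 := by rw [← C_mul, inv_mul_cancel₀ ha, C_1]
  have factor : (1 - C a⁻¹ * X) * F = (X - C a) * (-C a⁻¹ * F) := by
    linear_combination -F * C_inv_mul
  rw [rootQuotient, removeRootMass, mass_eq_zero, C_0, mul_zero, zero_mul, add_zero, factor,
    mul_divByMonic_cancel_left _ (monic_X_sub_C a)]
  linear_combination F * C_inv_mul

lemma rootQuotient_mem_degreeLT (hy : y ∈ degreeBox (r + 1)) :
    rootQuotient D y ∈ degreeLT ℝ (r + 1) := by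
  rw [rootQuotient, ← C_neg]
  exact C_mul_mem_degreeLT
    (divByMonic_X_sub_C_mem_degreeLT (removeRootMass_mem_degreeLT hy) D) (-D)

lemma continuousAt_rootMass_left (ha : a ≠ 0) (hya : y.2.eval a ≠ 0) :
    ContinuousAt (fun D => rootMass D y) a :=
  y.1.continuous.continuousAt.neg.div (continuousAt_id.mul y.2.continuous.continuousAt)
    (mul_ne_zero ha hya)

lemma continuousAt_rootQuotient (ha : a ≠ 0) (hy : y ∈ degreeBox (r + 1)) (hya : y.2.eval a ≠ 0) :
    ContinuousAt (fun D => rootQuotient D y) a := by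
  have mass_continuous := continuousAt_rootMass_left ha hya
  have remove_continuous : ContinuousAt (fun D => removeRootMass D y) a :=
    continuousAt_const.add ((continuousAt_const.mul
      (continuous_C.continuousAt.comp mass_continuous)).mul continuousAt_const)
  have div_continuous : ContinuousAt (fun D => removeRootMass D y /ₘ (X - C D)) a := by
    rw [← continuousWithinAt_univ] at remove_continuous ⊢
    exact (continuousOn_divByMonic_X_sub_C (r + 2) (removeRootMass a y, a)
        ⟨removeRootMass_mem_degreeLT hy, Set.mem_univ a⟩).comp
      (f := fun D => (removeRootMass D y, D)) (remove_continuous.prodMk continuousWithinAt_id)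
      fun D _ => ⟨removeRootMass_mem_degreeLT hy, Set.mem_univ D⟩
  exact continuous_C.continuousAt.neg.mul div_continuous

lemma eval_rootQuotient_add {μ : ℝ} (hD : D ≠ 0) (hy : y.2.eval D ≠ 0) (hμ : D ≠ μ)
    (hroot : y.1.eval μ = 0) :
    (rootQuotient D y + X * C (D * rootMass D y / (μ - D)) * y.2).eval μ = 0 := by
  have eval_identity := congrArg (eval μ) (C_sub_X_mul_rootQuotient hD hy)
  simp only [removeRootMass, eval_add, eval_sub, eval_mul, eval_C, eval_X, hroot] at eval_identity ⊢
  have sub_ne_zero : μ - D ≠ 0 := sub_ne_zero.2 hμ.symm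
  field_simp
  linear_combination -eval_identity

lemma rootQuotient_sub (hD : D ≠ 0) (hy : y.2.eval D ≠ 0) (hm : rootMass D y ≠ 0) :
    rootQuotient D y -
      X * C (rootMass D y) * (y.2 + C (D * rootMass D y)⁻¹ * rootQuotient D y) = y.1 := by
  refine mul_left_cancel₀ (C_ne_zero.2 hD) ?_
  have C_inv_mul : C (D * rootMass D y)⁻¹ * (C D * C (rootMass D y)) = 1 := by
    rw [← C_mul, ← C_mul, inv_mul_cancel₀ (mul_ne_zero hD hm), C_1]
  have identity := C_sub_X_mul_rootQuotient hD hy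
  rw [removeRootMass] at identity
  linear_combination identity - X * rootQuotient D y * C_inv_mul

lemma C_sub_X_mul_add_rootQuotient (hD : D ≠ 0) (hy : y.2.eval D ≠ 0) (hm : rootMass D y ≠ 0) :
    (C D - X) * (y.2 + C (D * rootMass D y)⁻¹ * rootQuotient D y) =
      C D * y.2 + C (rootMass D y)⁻¹ * y.1 := by
  have identity := C_sub_X_mul_rootQuotient hD hy
  have C_inv_mul : (C D⁻¹ * C D : ℝ[X]) = 1 := by rw [← C_mul, inv_mul_cancel₀ hD, C_1]
  have C_inv_mul' : (C (rootMass D y)⁻¹ * C (rootMass D y) : ℝ[X]) = 1 := by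
    rw [← C_mul, inv_mul_cancel₀ hm, C_1]
  rw [removeRootMass] at identity
  rw [mul_inv, C_mul]
  linear_combination C D⁻¹ * C (rootMass D y)⁻¹ * identity +
    C (rootMass D y)⁻¹ * (y.1 + X * C (rootMass D y) * y.2) * C_inv_mul + X * y.2 * C_inv_mul'

end RootQuotient

namespace RealizableNear

variable {r : ℕ} {a : ℝ}

lemma one_sub_C_mul_X_mul_mem_degreeBox (h : RealizableNear n P r (F, G)) (c : ℝ) :
    ((1 - C c * X) * F, G) ∈ degreeBox (r + 1) := by
  have hF : F ∈ degreeLT ℝ (r + 1) := h.mem_degreeBox.1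
  refine ⟨?_, degreeLT_mono r.le_succ h.mem_degreeBox.2⟩
  rw [sub_mul, one_mul, mul_comm (C c) X]
  exact sub_mem (degreeLT_mono (r + 1).le_succ hF) (X_mul_C_mul_mem_degreeLT hF c)

lemma tendsto_rootQuotient (h : RealizableNear n P r (F, G)) (ha : a ≠ 0) (hGa : G.eval a ≠ 0) :
    Tendsto (fun D => rootQuotient D ((1 - C a⁻¹ * X) * F, G)) (𝓝 a) (𝓝 F) := by
  have := (continuousAt_rootQuotient ha (h.one_sub_C_mul_X_mul_mem_degreeBox a⁻¹) hGa).tendsto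
  rwa [rootQuotient_one_sub_mul ha] at this

lemma eventually_rootQuotient (h : RealizableNear n P r (F, G)) (ha : a ≠ 0)
    (hGa : G.eval a ≠ 0) :
    ∀ᶠ z : ℝ × ℝ in 𝓝 a ×ˢ 𝓝 0, RealizableNear n P r
      (rootQuotient z.1 ((1 - C a⁻¹ * X) * F, G) + X * C z.2 * G, G) := by
  have tendsto_fst : Tendsto (fun z : ℝ × ℝ => rootQuotient z.1 ((1 - C a⁻¹ * X) * F, G) +
      X * C z.2 * G) (𝓝 a ×ˢ 𝓝 0) (𝓝 (F + X * C 0 * G)) :=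
    ((h.tendsto_rootQuotient ha hGa).comp tendsto_fst).add
      ((tendsto_const_nhds.mul ((continuous_C.tendsto 0).comp tendsto_snd)).mul tendsto_const_nhds)
  rw [C_0, mul_zero, zero_mul, add_zero] at tendsto_fst
  exact h.eventually_of_tendsto (tendsto_fst.prodMk_nhds tendsto_const_nhds) (.of_forall fun z =>
    ⟨add_mem (rootQuotient_mem_degreeLT (h.one_sub_C_mul_X_mul_mem_degreeBox a⁻¹))
      (X_mul_C_mul_mem_degreeLT h.mem_degreeBox.2 z.2), h.mem_degreeBox.2⟩)

lemma tendsto_rootMass (ha : a ≠ 0) (hGa : G.eval a ≠ 0) :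
    Tendsto (fun D => rootMass D ((1 - C a⁻¹ * X) * F, G)) (𝓝 a) (𝓝 0) := by
  have := continuousAt_rootMass_left (y := ((1 - C a⁻¹ * X) * F, G)) ha hGa
  simpa [ContinuousAt, rootMass, ha] using this

lemma rootMass_pos {D : ℝ} (ha : 0 < a) (haD : a < D) (hF : 0 < F.eval D) (hG : 0 < G.eval D) :
    0 < rootMass D ((1 - C a⁻¹ * X) * F, G) := by
  have factor_pos : 0 < a⁻¹ * D - 1 := by
    rw [sub_pos, inv_mul_eq_div, one_lt_div ha]
    exact haD
  have hD : 0 < D := ha.trans haD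
  simp only [rootMass, eval_mul, eval_sub, eval_one, eval_C, eval_X, ← neg_mul, neg_sub]
  positivity

lemma exists_rootQuotient {ι : Type*} [Finite ι] {lam : ι → ℝ}
    (h : RealizableNear n P r (F, G)) (hr : F.coeff r ≠ 0) (ha : 0 < a) (hFa : 0 < F.eval a)
    (hGa : 0 < G.eval a) (hlam : ∀ j, a < lam j) :
    ∃ (D : ℝ) (U : Set ℝ), a < D ∧ (∀ j, D < lam j) ∧ 0 < G.eval D ∧
      0 < rootMass D ((1 - C a⁻¹ * X) * F, G) ∧
      (rootQuotient D ((1 - C a⁻¹ * X) * F, G)).coeff r ≠ 0 ∧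
      0 ∈ U ∧ (∀ j, D * rootMass D ((1 - C a⁻¹ * X) * F, G) / (lam j - D) ∈ U) ∧
      ∀ x ∈ U, RealizableNear n P r
        (rootQuotient D ((1 - C a⁻¹ * X) * F, G) + X * C x * G, G) := by
  obtain ⟨near_a, h_near_a, near_zero, h_near_zero, h_realizable⟩ :=
    eventually_prod_iff.1 (h.eventually_rootQuotient ha.ne' hGa.ne')
  have lt_lam : ∀ᶠ D in 𝓝 a, ∀ j, D < lam j :=
    eventually_all.2 fun j => eventually_lt_nhds (hlam j)
  have coeff_ne : ∀ᶠ D in 𝓝 a, (rootQuotient D ((1 - C a⁻¹ * X) * F, G)).coeff r ≠ 0 :=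
    (((continuous_coeff r).tendsto F).comp (h.tendsto_rootQuotient ha.ne' hGa.ne')).eventually_ne hr
  have masses_near : ∀ᶠ D in 𝓝 a, ∀ j,
      near_zero (D * rootMass D ((1 - C a⁻¹ * X) * F, G) / (lam j - D)) := by
    refine eventually_all.2 fun j => Tendsto.eventually ?_ h_near_zero
    simpa [Pi.div_def] using (tendsto_id.mul (tendsto_rootMass ha.ne' hGa.ne')).div
      (tendsto_const_nhds.sub tendsto_id) (sub_pos.2 (hlam j)).ne'
  have eval_pos : ∀ᶠ D in 𝓝 a, 0 < F.eval D ∧ 0 < G.eval D :=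
    (F.continuous.continuousAt.eventually_const_lt hFa).and
      (G.continuous.continuousAt.eventually_const_lt hGa)
  obtain ⟨D, ⟨hD, hDlam, hSr, hDq, hFD, hGD⟩, haD⟩ :=
    ((h_near_a.and (lt_lam.and (coeff_ne.and (masses_near.and eval_pos)))).filter_mono
      nhdsWithin_le_nhds |>.and (self_mem_nhdsWithin (s := Set.Ioi a))).exists
  exact ⟨D, {x | near_zero x}, haD, hDlam, hGD, rootMass_pos ha haD hFD hGD, hSr,
    h_near_zero.self_of_nhds, hDq, fun x hx => h_realizable hD hx⟩

/-- The chain is extended by one inerter link tuned to `lam j` for each `j ∈ J`, then by a mass on a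
spring. All the new masses tend to zero as `D` tends to `a`, so that stability applies. -/
lemma exists_extension {ι : Type*} [LinearOrder ι] [Finite ι] {lam : ι → ℝ}
    (hmono : StrictMono lam) (h : RealizableNear n P r (F, G)) (hr : F.coeff r ≠ 0) (ha : 0 < a)
    (hFa : 0 < F.eval a) (hGa : 0 < G.eval a) (hlam : ∀ j, a < lam j)
    (hF : ∀ j, F.eval (lam j) = 0) (hG : ∀ j, G.eval (lam j) ≠ 0) (J : Finset ι) :
    ∃ D m H, a < D ∧ 0 < m ∧
      (C D - X) * H = C D * G + C m⁻¹ * ((1 - C a⁻¹ * X) * F) ∧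
      RealizableNear (n + J.card + 1) (P * ∏ j ∈ J, (X - C (lam j))) (r + 1)
        ((1 - C a⁻¹ * X) * F, H) := by
  obtain ⟨D, U, haD, hDlam, hGD, hm, hSr, h0U, hqU, hU⟩ :=
    h.exists_rootQuotient hr ha hFa hGa hlam
  set y : ℝ[X] × ℝ[X] := ((1 - C a⁻¹ * X) * F, G) with hy
  have hD : 0 < D := ha.trans haD
  have mass_antitone : StrictAnti fun j => D * rootMass D y / (lam j - D) := fun i j hij =>
    div_lt_div_of_pos_left (mul_pos hD hm) (sub_pos.2 (hDlam i)) (sub_lt_sub_right (hmono hij) D)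
  have mass_root j : (rootQuotient D y + X * C (D * rootMass D y / (lam j - D)) * G).eval
      (lam j) = 0 :=
    eval_rootQuotient_add hD.ne' hGD.ne' (hDlam j).ne (by simp [hy, hF j])
  have h_layer := inerter_finset mass_antitone hU J (fun j _ => ha.trans (hlam j))
    (fun j _ => hqU j) (fun j _ => mass_root j) (fun j _ => hG j) 0 h0U
    fun j _ => div_pos (mul_pos hD hm) (sub_pos.2 (hDlam j))
  rw [C_0, mul_zero, zero_mul, add_zero] at h_layer
  have h_spring := h_layer.spring hSr hm (inv_pos.2 (mul_pos hD hm)) rfl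
  refine ⟨D, rootMass D y, _, haD, hm,
    C_sub_X_mul_add_rootQuotient (y := y) hD.ne' hGD.ne' hm.ne', ?_⟩
  rwa [rootQuotient_sub (y := y) hD.ne' hGD.ne' hm.ne'] at h_spring

end RealizableNear

lemma coeff_prod_one_sub_C_mul_X_ne_zero {N : ℕ} {lam : Fin N → ℝ} (hlam : ∀ i, lam i ≠ 0) :
    (∏ i, (1 - C (lam i)⁻¹ * X)).coeff N ≠ 0 := by
  have natDegree_le (i : Fin N) : (1 - C (lam i)⁻¹ * X).natDegree ≤ 1 := by compute_degree
  have := coeff_prod_of_natDegree_le Finset.univ _ 1 fun i _ => natDegree_le i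
  rw [Finset.card_fin, mul_one] at this
  rw [this, Finset.prod_ne_zero_iff]
  intro i _
  simpa [coeff_one] using hlam i

lemma eval_prod_one_sub_C_mul_X_pos {N : ℕ} {lam : Fin N → ℝ} (hpos : ∀ i, 0 < lam i) {x : ℝ}
    (hx : ∀ i, x < lam i) : 0 < (∏ i, (1 - C (lam i)⁻¹ * X)).eval x := by
  rw [eval_prod]
  refine Finset.prod_pos fun i _ => ?_
  simp only [eval_sub, eval_one, eval_mul, eval_C, eval_X]
  rw [sub_pos, inv_mul_eq_div, div_lt_one (hpos i)]
  exact hx i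

lemma prod_pow_sub_one_mul_prod_filter {ι M : Type*} [Fintype ι] [CommMonoid M] (f : ι → M)
    (s : ι → ℕ) : (∏ i, f i ^ (s i - 1)) * ∏ i with s i ≠ 0, f i = ∏ i, f i ^ s i := by
  rw [Finset.prod_filter, ← Finset.prod_mul_distrib]
  refine Finset.prod_congr rfl fun i _ => ?_
  cases s i <;> simp [pow_succ]

lemma sum_sub_one_add_card_filter {ι : Type*} [Fintype ι] (s : ι → ℕ) :
    ∑ i, (s i - 1) + (Finset.univ.filter fun i => s i ≠ 0).card = ∑ i, s i := by
  rw [Finset.card_filter, ← Finset.sum_add_distrib]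
  refine Finset.sum_congr rfl fun i _ => ?_
  cases s i <;> simp

namespace RealizableNear

lemma exists_extension_prod {N : ℕ} {lam : Fin (N + 1) → ℝ} (hpos : ∀ i, 0 < lam i)
    (hmono : StrictMono lam)
    (h : RealizableNear n P N (∏ i : Fin N, (1 - C (lam i.succ)⁻¹ * X), G))
    (hG_ne : ∀ i : Fin N, G.eval (lam i.succ) ≠ 0)
    (hG_pos : ∀ x ∈ Set.Icc 0 (lam 0), 0 < G.eval x) (J : Finset (Fin N)) :
    ∃ H, RealizableNear (n + J.card + 1) (P * ∏ j ∈ J, (X - C (lam j.succ))) (N + 1)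
        (∏ i, (1 - C (lam i)⁻¹ * X), H) ∧
      (∀ i, H.eval (lam i) ≠ 0) ∧ ∀ x ∈ Set.Icc 0 (lam 0), 0 < H.eval x := by
  rw [Fin.prod_univ_succ]
  have lam_zero_lt (i : Fin N) : lam 0 < lam i.succ := hmono i.succ_pos
  have hF_pos {x : ℝ} (hx : x ≤ lam 0) := eval_prod_one_sub_C_mul_X_pos
    (fun i : Fin N => hpos i.succ) fun i => hx.trans_lt (lam_zero_lt i)
  have hF_root (j : Fin N) :
      (∏ i : Fin N, (1 - C (lam i.succ)⁻¹ * X)).eval (lam j.succ) = 0 := by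
    rw [eval_prod]
    exact Finset.prod_eq_zero (Finset.mem_univ j) (by simp [(hpos j.succ).ne'])
  obtain ⟨D, m, H, hD, hm, hH, hH_near⟩ := h.exists_extension
    (lam := fun i => lam i.succ) (fun i j hij => hmono (Fin.succ_lt_succ_iff.2 hij))
    (coeff_prod_one_sub_C_mul_X_ne_zero fun i => (hpos i.succ).ne') (hpos 0) (hF_pos le_rfl)
    (hG_pos _ ⟨(hpos 0).le, le_rfl⟩) lam_zero_lt hF_root hG_ne J
  have hD_pos : 0 < D := (hpos 0).trans hD
  have hH_eval (x : ℝ) := congrArg (eval x) hH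
  simp only [eval_mul, eval_sub, eval_add, eval_C, eval_X, eval_one] at hH_eval
  have hH_pos (x : ℝ) (hx : x ∈ Set.Icc 0 (lam 0)) : 0 < H.eval x := by
    have factor_nonneg : 0 ≤ 1 - (lam 0)⁻¹ * x := by
      rw [sub_nonneg, inv_mul_eq_div, div_le_one (hpos 0)]
      exact hx.2
    have := hG_pos x hx
    have := hF_pos hx.2
    refine pos_of_mul_pos_right ?_ (sub_pos.2 (hx.2.trans_lt hD)).le
    rw [hH_eval]
    positivity
  refine ⟨H, hH_near, Fin.cases (hH_pos _ ⟨(hpos 0).le, le_rfl⟩).ne' fun j hj => ?_, hH_pos⟩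
  have := hH_eval (lam j.succ)
  rw [hj, hF_root, mul_zero, mul_zero, mul_zero, add_zero] at this
  exact mul_ne_zero hD_pos.ne' (hG_ne j) this.symm

lemma exists_of_strictMono {N : ℕ} {lam : Fin (N + 1) → ℝ} (hpos : ∀ i, 0 < lam i)
    (hmono : StrictMono lam) {s : Fin (N + 1) → ℕ} (hs : ∀ i, s i ≤ i) :
    ∃ G, RealizableNear (N + 1 + ∑ i, s i) (∏ i, (X - C (lam i)) ^ s i) (N + 1)
        (∏ i, (1 - C (lam i)⁻¹ * X), G) ∧
      (∀ i, G.eval (lam i) ≠ 0) ∧ ∀ x ∈ Set.Icc 0 (lam 0), 0 < G.eval x := by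
  have hs₀ : s 0 = 0 := Nat.le_zero.1 (hs 0)
  induction N with
  | zero => exact ⟨1, by simpa [hs₀] using one_sub_C_mul_X (hpos 0), by simp, by simp⟩
  | succ N ih =>
    obtain ⟨G, hG, hG_ne, hG_pos⟩ := ih (lam := fun i => lam i.succ) (fun i => hpos i.succ)
      (hmono.comp Fin.strictMono_succ) (s := fun i => s i.succ - 1)
      (fun i => Nat.sub_le_of_le_add (hs i.succ)) (Nat.sub_eq_zero_of_le (hs (Fin.succ 0)))
    obtain ⟨H, hH, hH_ne_pos⟩ := hG.exists_extension_prod hpos hmono hG_ne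
      (fun x hx => hG_pos x ⟨hx.1, hx.2.trans (hmono (Fin.succ_pos 0)).le⟩)
      (Finset.univ.filter fun i => s i.succ ≠ 0)
    refine ⟨H, ?_, hH_ne_pos⟩
    rw [prod_pow_sub_one_mul_prod_filter (fun i : Fin (N + 1) => X - C (lam i.succ)),
      add_assoc (N + 1), sum_sub_one_add_card_filter fun i : Fin (N + 1) => s i.succ] at hH
    rw [Fin.prod_univ_succ fun i => (X - C (lam i)) ^ s i, Fin.sum_univ_succ, hs₀, pow_zero,
      one_mul, zero_add, add_right_comm (N + 1)]
    exact hH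

end RealizableNear

theorem exists_chainPair_of_le {n N : ℕ} (hN : 1 ≤ N) {t : Fin N → ℕ} (ht : ∀ i, 0 < t i)
    (htn : ∑ i, t i = n) {lam : Fin N → ℝ} (hpos : ∀ i, 0 < lam i) (hmono : StrictMono lam)
    (htle : ∀ i : Fin N, t i ≤ i + 1) :
    ∃ f g, ChainPair n f g ∧ ∏ i, (X - C (lam i)) ^ t i ∣ f := by
  obtain ⟨N, rfl⟩ := Nat.exists_eq_add_of_le' hN
  obtain ⟨G, hG, -⟩ := RealizableNear.exists_of_strictMono hpos hmono (s := fun i => t i - 1)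
    fun i => Nat.sub_le_of_le_add (htle i)
  obtain ⟨E, hE, h⟩ := hG.realizable
  have h_all : (Finset.univ.filter fun i => t i ≠ 0) = Finset.univ :=
    Finset.filter_true_of_mem fun i _ => (ht i).ne'
  have card_eq : N + 1 + ∑ i, (t i - 1) = n := by
    rw [← htn, ← sum_sub_one_add_card_filter t, h_all, Finset.card_fin, add_comm]
  have root_dvd (i : Fin (N + 1)) : X - C (lam i) ∣ 1 - C (lam i)⁻¹ * X :=
    dvd_iff_isRoot.2 (by simp [(hpos i).ne'])
  have prod_eq : (∏ i, (X - C (lam i)) ^ (t i - 1)) * ∏ i, (X - C (lam i)) =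
      ∏ i, (X - C (lam i)) ^ t i := by
    rw [← prod_pow_sub_one_mul_prod_filter _ t, h_all]
  refine ⟨_, _, card_eq ▸ h, ?_⟩
  rw [← prod_eq]
  exact mul_dvd_mul hE (Finset.prod_dvd_prod_of_dvd _ _ fun i _ => root_dvd i)

end Sufficiency

end MassSpringInerter

/-- Inverse eigenvalue problem for mass–spring–inerter systems (Theorem `sta3`):
given `0 < λ_1 < ⋯ < λ_m` and multiplicities `t_i ≥ 1` with `∑ t_i = n`, there exist
`m_j > 0`, `k_j > 0`, `b_j ≥ 0` with `∏ (λ − λ_i)^{t_i} ∣ det(K − λ(M+B))`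
iff `t_i ≤ i` for all `i`. -/
theorem stmt_0 (n mm : ℕ) (hn : 1 ≤ n) (hmm : 1 ≤ mm)
    (t : Fin mm → ℕ) (ht : ∀ i, 0 < t i) (hsum : ∑ i, t i = n)
    (lam : Fin mm → ℝ) (hpos : ∀ i, 0 < lam i) (hmono : StrictMono lam) :
    (∃ m k b : ℕ → ℝ,
        (∀ j, 1 ≤ j → j ≤ n → 0 < m j) ∧
        (∀ j, 1 ≤ j → j ≤ n → 0 < k j) ∧
        (∀ j, 1 ≤ j → j ≤ n → 0 ≤ b j) ∧
        (∏ i, (Polynomial.X - Polynomial.C (lam i)) ^ t i) ∣ fpoly m k b n) ↔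
      ∀ i : Fin mm, t i ≤ (i : ℕ) + 1 := by
  constructor
  · rintro ⟨m, k, b, hm, hk, hb, hdvd⟩
    exact (MassSpringInerter.chainPair_fpoly_gpoly hn hm hk hb).le_succ_of_prod_dvd
      hsum hpos hmono hdvd
  · intro htle
    obtain ⟨f, g, h, hdvd⟩ :=
      MassSpringInerter.exists_chainPair_of_le hmm ht hsum hpos hmono htle
    obtain ⟨m, k, b, hm, hk, hb, rfl, rfl⟩ := h.exists_fpoly_gpoly
    exact ⟨m, k, b, hm, hk, hb, hdvd⟩
end

section
/- Let 0 < λ_1 < λ_2 < λ_3 be real numbers and n = 5. If there exist real numbers m_j > 0, k_j > 0, b_j ≥ 0 (j = 1,…,5) such that (λ − λ_1)(λ − λ_2)(λ − λ_3)^3 divides det(K − λ(M+B)) in ℝ[λ], then max_{j∈{2,3,4}} m_j/m_{j+1} > (λ_1/(8λ_3))·(1 − (λ_2/λ_3)^{1/3}). -/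
open Polynomial

/-!
Since `M + B` is positive definite, the five roots of `det (K - λ (M + B))` are the eigenvalues of
the symmetric pencil. A mode for `λ₃` is a mode of the chain with masses `m` and spring constants
`c = k - λ₃ b`. A connected chain has only simple frequencies and a free single mass only the
frequency `0`, so a three-dimensional eigenspace forces `c 2 = c 4 = 0` and splits the chain into
the resonant blocks `{1}`, `{2, 3}`, `{4, 5}`.

In the plane spanned by the modes for `λ₁` and `λ₂` there is an `x ≠ 0` with
`m 4 * x 3 + m 5 * x 4 = 0` (masses are numbered from `1`, coordinates of `x` from `0`). Let
`p = x ⬝ (M + B) x`. Then `(λ₃ - λ₂) p ≤ λ₃ p - x ⬝ K x`, and in the right-hand side the first and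
last blocks cancel, which leaves at most `λ₃ (m 2 * x 1 ^ 2 + m 3 * x 2 ^ 2)`. Rigid test
displacements show that the first three springs are at least `λ₁ m 4`, so `x 1` and `x 2` are
controlled by `x ⬝ K x ≤ λ₂ p`. If `m 2 / m 3` and `m 3 / m 4` are at most `e ≤ 1`, comparing the
two estimates gives `λ₁ (λ₃ - λ₂) ≤ 5 e λ₂ λ₃`.
-/

section Pencil

open scoped Matrix MatrixOrder ComplexOrder

section RCLike

variable {𝕜 ι : Type*} [RCLike 𝕜] [Fintype ι] [DecidableEq ι]

theorem exists_conjTranspose_mul_mul_eq_of_charpoly_eq {A B : Matrix ι ι 𝕜} (hA : A.IsHermitian)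
    (hB : B.IsHermitian) (h : A.charpoly = B.charpoly) :
    ∃ W : Matrix ι ι 𝕜, Wᴴ * W = 1 ∧ Wᴴ * A * W = B := by
  let W := hA.eigenvectorUnitary * star hB.eigenvectorUnitary
  refine ⟨W, Unitary.coe_star_mul_self W, ?_⟩
  have hconj : Unitary.conjStarAlgAut 𝕜 _ (star W) A = B := by
    rw [star_mul, star_star, Unitary.conjStarAlgAut_mul_apply,
      hA.conjStarAlgAut_star_eigenvectorUnitary, (hA.eigenvalues_eq_eigenvalues_iff hB).2 h,
      ← hB.spectral_theorem]
  rwa [Unitary.conjStarAlgAut_star_apply] at hconj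

theorem exists_conjTranspose_mul_mul_eq_one {P : Matrix ι ι 𝕜} (hP : P.PosDef) :
    ∃ R : Matrix ι ι 𝕜, Rᴴ * P * R = 1 := by
  obtain ⟨Q, hQ, rfl⟩ :=
    CStarAlgebra.isStrictlyPositive_iff_eq_star_mul_self.1 hP.isStrictlyPositive
  obtain ⟨R, hR⟩ := hQ.exists_right_inv
  refine ⟨R, ?_⟩
  rw [Matrix.star_eq_conjTranspose, Matrix.mul_assoc, Matrix.mul_assoc, hR, Matrix.mul_one,
    ← Matrix.conjTranspose_mul, hR, Matrix.conjTranspose_one]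

end RCLike

theorem neg_one_pow_mul_det_pencil_eq_charpoly {R ι : Type*} [CommRing R] [Fintype ι]
    [DecidableEq ι] {P K V W : Matrix ι ι R} (hP : V * P * W = 1) :
    (-1) ^ Fintype.card ι * (C (V.det * W.det) * (K.map C - (X : R[X]) • P.map C).det) =
      (V * K * W).charpoly := by
  have hmatrix : (V * K * W).charmatrix =
      -(V.map C * (K.map C - (X : R[X]) • P.map C) * W.map C) := by
    have hPC : V.map C * P.map C * W.map C = 1 := by
      rw [← Matrix.map_mul, ← Matrix.map_mul, hP, Matrix.map_one _ C_0 C_1]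
    rw [Matrix.mul_sub, Matrix.sub_mul, Matrix.mul_smul, Matrix.smul_mul, hPC, neg_sub,
      ← Matrix.map_mul, ← Matrix.map_mul, Matrix.charmatrix,
      Matrix.scalar_apply, ← Matrix.smul_one_eq_diagonal]
    rfl
  have hdet (A : Matrix ι ι R) : (A.map C).det = C A.det := (RingHom.map_det C A).symm
  rw [Matrix.charpoly, hmatrix, Matrix.det_neg, Matrix.det_mul, Matrix.det_mul, hdet, hdet, C_mul]
  ring

variable {ι : Type*} [Fintype ι] [DecidableEq ι]

/-- `U` simultaneously diagonalises the symmetric pencil `K - μ P`: its columns are `P`-orthonormal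
generalised eigenvectors `K u = μ P u`, with eigenvalues listed by `L`. -/
structure IsPencilFrame (P K : Matrix ι ι ℝ) (L : ι → ℝ) (U : Matrix ι ι ℝ) : Prop where
  gram : Uᵀ * P * U = 1
  diag : Uᵀ * K * U = Matrix.diagonal L

theorem exists_isPencilFrame {P K : Matrix ι ι ℝ} (hP : P.PosDef) (hK : K.IsHermitian) {L : ι → ℝ}
    (hdvd : ∏ i, (X - C (L i)) ∣ (K.map C - (X : ℝ[X]) • P.map C).det) :
    ∃ U, IsPencilFrame P K L U := by
  obtain ⟨R, hR⟩ := exists_conjTranspose_mul_mul_eq_one hP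
  have hcharpoly : (Rᴴ * K * R).charpoly = (Matrix.diagonal L).charpoly := by
    rw [Matrix.charpoly_diagonal]
    refine eq_of_monic_of_dvd_of_natDegree_le (monic_prod_X_sub_C _ _) (Matrix.charpoly_monic _)
      ?_ ?_
    · rw [← neg_one_pow_mul_det_pencil_eq_charpoly hR]
      exact dvd_mul_of_dvd_right (dvd_mul_of_dvd_right hdvd _) _
    · rw [Matrix.charpoly_natDegree_eq_dim, natDegree_finsetProd_X_sub_C_eq_card]
      rfl
  obtain ⟨W, hW, hWK⟩ := exists_conjTranspose_mul_mul_eq_of_charpoly_eq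
    (Matrix.isHermitian_conjTranspose_mul_mul R hK) (Matrix.isHermitian_diagonal L) hcharpoly
  simp only [Matrix.conjTranspose_eq_transpose_of_trivial] at hR hW hWK
  have hassoc (A : Matrix ι ι ℝ) : (R * W)ᵀ * A * (R * W) = Wᵀ * (Rᵀ * A * R) * W := by
    simp only [Matrix.transpose_mul, Matrix.mul_assoc]
  exact ⟨R * W, by rw [hassoc, hR, Matrix.mul_one, hW], by rw [hassoc, hWK]⟩

theorem exists_ne_zero_mulVec_eq_zero_of_card_lt {F κ ι : Type*} [Field F] [Fintype κ] [Fintype ι]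
    (W : Matrix κ ι F) {S : Finset ι} (hS : Fintype.card κ < S.card) :
    ∃ y : ι → F, y ≠ 0 ∧ (∀ i ∉ S, y i = 0) ∧ W *ᵥ y = 0 := by
  classical
  have hker : LinearMap.ker (W.submatrix id ((↑) : S → ι)).mulVecLin ≠ ⊥ :=
    LinearMap.ker_ne_bot_of_finrank_lt (by simpa using hS)
  obtain ⟨z, hz, hz0⟩ := (Submodule.ne_bot_iff _).1 hker
  let y : ι → F := fun i ↦ if hi : i ∈ S then z ⟨i, hi⟩ else 0
  have hy (i : S) : y i = z i := by simp [y]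
  refine ⟨y, fun h ↦ hz0 ?_, fun i hi ↦ dif_neg hi, ?_⟩
  · ext i
    rw [← hy, h, Pi.zero_apply, Pi.zero_apply]
  · ext r
    rw [← congrFun hz r]
    simp only [Matrix.mulVec, dotProduct, Matrix.mulVecLin_apply, Matrix.submatrix_apply, id_eq,
      ← hy]
    rw [Finset.sum_coe_sort S fun i ↦ W r i * y i]
    exact (Finset.sum_subset S.subset_univ fun i _ hi ↦ by simp [y, hi]).symm

namespace IsPencilFrame

variable {P K U : Matrix ι ι ℝ} {L : ι → ℝ} (hU : IsPencilFrame P K L U)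

include hU

theorem mulVec_ne_zero {y : ι → ℝ} (hy : y ≠ 0) : U *ᵥ y ≠ 0 := by
  intro h
  apply hy
  rw [← Matrix.one_mulVec y, ← hU.gram, ← Matrix.mulVec_mulVec, h, Matrix.mulVec_zero]

theorem mul_mulVec_eq (y : ι → ℝ) : K *ᵥ (U *ᵥ y) = P *ᵥ (U *ᵥ fun i ↦ L i * y i) := by
  have hPU : P * U * Uᵀ = 1 := by
    rw [mul_eq_one_comm, ← Matrix.mul_assoc, hU.gram]
  have hKU : K * U = P * U * Matrix.diagonal L := by
    rw [← hU.diag, ← Matrix.mul_assoc, ← Matrix.mul_assoc, hPU, Matrix.one_mul]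
  rw [Matrix.mulVec_mulVec, hKU, ← Matrix.mulVec_mulVec, ← Matrix.mulVec_mulVec]
  congr 2
  exact funext fun i ↦ Matrix.mulVec_diagonal L y i

theorem dotProduct_mulVec_gram (y z : ι → ℝ) : (U *ᵥ y) ⬝ᵥ P *ᵥ (U *ᵥ z) = y ⬝ᵥ z := by
  rw [← Matrix.vecMul_transpose, ← Matrix.dotProduct_mulVec, Matrix.mulVec_mulVec,
    Matrix.mulVec_mulVec, hU.gram, Matrix.one_mulVec]

theorem exists_eigenvector {κ : Type*} [Fintype κ] (W : Matrix κ ι ℝ) {S : Finset ι} {μ : ℝ}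
    (hcard : Fintype.card κ < S.card) (hS : ∀ i ∈ S, L i = μ) :
    ∃ x : ι → ℝ, x ≠ 0 ∧ W *ᵥ x = 0 ∧ K *ᵥ x = μ • P *ᵥ x := by
  obtain ⟨y, hy, hyS, hWy⟩ := exists_ne_zero_mulVec_eq_zero_of_card_lt (W * U) hcard
  refine ⟨U *ᵥ y, hU.mulVec_ne_zero hy, by rw [Matrix.mulVec_mulVec, hWy], ?_⟩
  have hLy : (fun i ↦ L i * y i) = μ • y := by
    ext i
    by_cases hi : i ∈ S
    · simp [hS i hi]
    · simp [hyS i hi]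
  rw [hU.mul_mulVec_eq, hLy, Matrix.mulVec_smul, Matrix.mulVec_smul]

theorem exists_dotProduct_mulVec_le {κ : Type*} [Fintype κ] (W : Matrix κ ι ℝ) {S : Finset ι}
    {μ : ℝ} (hcard : Fintype.card κ < S.card) (hS : ∀ i ∈ S, L i ≤ μ) :
    ∃ x : ι → ℝ, x ≠ 0 ∧ W *ᵥ x = 0 ∧ x ⬝ᵥ K *ᵥ x ≤ μ * (x ⬝ᵥ P *ᵥ x) := by
  obtain ⟨y, hy, hyS, hWy⟩ := exists_ne_zero_mulVec_eq_zero_of_card_lt (W * U) hcard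
  refine ⟨U *ᵥ y, hU.mulVec_ne_zero hy, by rw [Matrix.mulVec_mulVec, hWy], ?_⟩
  rw [hU.mul_mulVec_eq, hU.dotProduct_mulVec_gram, hU.dotProduct_mulVec_gram, dotProduct,
    dotProduct, Finset.mul_sum]
  refine Finset.sum_le_sum fun i _ ↦ ?_
  by_cases hi : i ∈ S
  · nlinarith [mul_le_mul_of_nonneg_right (hS i hi) (mul_self_nonneg (y i))]
  · simp [hyS i hi]

theorem mul_dotProduct_mulVec_le {μ : ℝ} (hL : ∀ i, μ ≤ L i) (x : ι → ℝ) :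
    μ * (x ⬝ᵥ P *ᵥ x) ≤ x ⬝ᵥ K *ᵥ x := by
  have hUP : U * (Uᵀ * P) = 1 := mul_eq_one_comm.1 hU.gram
  obtain ⟨y, rfl⟩ : ∃ y, U *ᵥ y = x :=
    ⟨(Uᵀ * P) *ᵥ x, by rw [Matrix.mulVec_mulVec, hUP, Matrix.one_mulVec]⟩
  rw [hU.mul_mulVec_eq, hU.dotProduct_mulVec_gram, hU.dotProduct_mulVec_gram, dotProduct,
    dotProduct, Finset.mul_sum]
  refine Finset.sum_le_sum fun i _ ↦ ?_
  nlinarith [mul_le_mul_of_nonneg_right (hL i) (mul_self_nonneg (y i))]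

end IsPencilFrame

end Pencil

section Chain

open scoped Matrix

/-- The matrix of backward differences `x i - x (i - 1)`, with the convention `x (-1) = 0`. It sends
the displacements of a chain of `n` masses fixed at its left end to the elongations of its springs.
Indices in `Fin n` start at `0`: mass `m (i + 1)` and spring `k (i + 1)` belong to `i : Fin n`. -/
def diffMat (n : ℕ) : Matrix (Fin n) (Fin n) ℝ :=
  Matrix.of fun i j ↦ (if i = j then 1 else 0) - if (i : ℕ) = j + 1 then 1 else 0

theorem sum_ite_val_eq {M : Type*} [AddCommMonoid M] {n : ℕ} (f : Fin n → M) (s : ℕ) :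
    ∑ i : Fin n, (if (i : ℕ) = s then f i else 0) = if h : s < n then f ⟨s, h⟩ else 0 := by
  split_ifs with h
  · rw [Finset.sum_eq_single_of_mem ⟨s, h⟩ (Finset.mem_univ _) fun i _ hi ↦
      if_neg (by simpa [Fin.ext_iff] using hi), if_pos rfl]
  · exact Finset.sum_eq_zero fun i _ ↦ if_neg (by omega)

theorem triMat_eq_transpose_mul_diagonal_mul (k : ℕ → ℝ) (n : ℕ) :
    triMat k n = (diffMat n)ᵀ * Matrix.diagonal (fun i : Fin n ↦ k (i + 1)) * diffMat n := by
  ext r c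
  rw [Matrix.mul_apply]
  simp only [Matrix.mul_diagonal, Matrix.transpose_apply, diffMat, Matrix.of_apply, mul_sub,
    mul_ite, mul_one, mul_zero, Finset.sum_sub_distrib, sum_ite_val_eq, triMat, sub_mul, ite_mul,
    one_mul, zero_mul, Fin.ext_iff]
  grind

theorem diffMat_mulVec_apply {n : ℕ} (x : Fin n → ℝ) (i : Fin n) :
    (diffMat n *ᵥ x) i = x i - if h : 0 < (i : ℕ) then x ⟨i - 1, by omega⟩ else 0 := by
  have hpred (j : Fin n) : (i : ℕ) = j + 1 ↔ 0 < (i : ℕ) ∧ (j : ℕ) = i - 1 := by omega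
  simp only [Matrix.mulVec, dotProduct, diffMat, Matrix.of_apply, sub_mul, ite_mul, one_mul,
    zero_mul, Finset.sum_sub_distrib, Finset.sum_ite_eq, Finset.mem_univ, if_true, hpred, ite_and]
  split_ifs with h
  · rw [sum_ite_val_eq, dif_pos (by omega)]
  · rw [Finset.sum_const_zero]

-- Moving the masses from `i` on rigidly by `1` elongates spring `i` only; testing against such
-- displacements cuts the chain at spring `i`.
theorem diffMat_mulVec_indicator_Ici {n : ℕ} (i : Fin n) :
    diffMat n *ᵥ (Set.Ici i).indicator 1 = Pi.single i 1 := by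
  ext r
  simp only [diffMat_mulVec_apply, Set.indicator_apply, Set.mem_Ici, Pi.single_apply, Fin.le_def,
    Fin.ext_iff, Pi.one_apply]
  grind

theorem dotProduct_triMat_mulVec {n : ℕ} (k : ℕ → ℝ) (x y : Fin n → ℝ) :
    y ⬝ᵥ triMat k n *ᵥ x = ∑ i : Fin n, k (i + 1) * (diffMat n *ᵥ y) i * (diffMat n *ᵥ x) i := by
  rw [triMat_eq_transpose_mul_diagonal_mul, ← Matrix.mulVec_mulVec, ← Matrix.mulVec_mulVec,
    Matrix.dotProduct_mulVec, Matrix.vecMul_transpose, dotProduct]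
  simp only [Matrix.mulVec_diagonal]
  exact Finset.sum_congr rfl fun i _ ↦ by ring

theorem indicator_Ici_dotProduct_diagonal_mulVec {n : ℕ} (m : ℕ → ℝ) (i : Fin n)
    (x : Fin n → ℝ) :
    (Set.Ici i).indicator 1 ⬝ᵥ Matrix.diagonal (fun j : Fin n ↦ m (j + 1)) *ᵥ x =
      ∑ j ∈ Finset.Ici i, m (j + 1) * x j := by
  simp [dotProduct, Matrix.mulVec_diagonal, Set.indicator_apply, ← Finset.sum_filter,
    Finset.filter_le_eq_Ici]

theorem isHermitian_triMat (k : ℕ → ℝ) (n : ℕ) : (triMat k n).IsHermitian := by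
  rw [triMat_eq_transpose_mul_diagonal_mul, ← Matrix.conjTranspose_eq_transpose_of_trivial]
  exact Matrix.isHermitian_conjTranspose_mul_mul _ (Matrix.isHermitian_diagonal _)

theorem posSemidef_triMat {k : ℕ → ℝ} {n : ℕ} (hk : ∀ i : Fin n, 0 ≤ k (i + 1)) :
    (triMat k n).PosSemidef := by
  rw [triMat_eq_transpose_mul_diagonal_mul, ← Matrix.conjTranspose_eq_transpose_of_trivial]
  exact (Matrix.PosSemidef.diagonal hk).conjTranspose_mul_mul_same _

theorem indicator_Ici_dotProduct_triMat_mulVec {n : ℕ} (k : ℕ → ℝ) (i : Fin n) (x : Fin n → ℝ) :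
    (Set.Ici i).indicator 1 ⬝ᵥ triMat k n *ᵥ x = k (i + 1) * (diffMat n *ᵥ x) i := by
  rw [dotProduct_triMat_mulVec, diffMat_mulVec_indicator_Ici]
  simp [Pi.single_apply]

/-- The inertia matrix `M + B` of the chain, the coefficient of `-λ` in `sysMat m k b n`. -/
noncomputable def inertiaMat (m b : ℕ → ℝ) (n : ℕ) : Matrix (Fin n) (Fin n) ℝ :=
  Matrix.diagonal (fun i : Fin n ↦ m (i + 1)) + triMat b n

theorem posDef_inertiaMat {m b : ℕ → ℝ} {n : ℕ} (hm : ∀ i : Fin n, 0 < m (i + 1))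
    (hb : ∀ i : Fin n, 0 ≤ b (i + 1)) : (inertiaMat m b n).PosDef :=
  (Matrix.PosDef.diagonal hm).add_posSemidef (posSemidef_triMat hb)

theorem IsPencilFrame.mul_mass_le_stiffness {m k b : ℕ → ℝ} {n : ℕ} {L : Fin n → ℝ}
    {U : Matrix (Fin n) (Fin n) ℝ} (hU : IsPencilFrame (inertiaMat m b n) (triMat k n) L U)
    (hm : ∀ i : Fin n, 0 ≤ m (i + 1)) (hb : ∀ i : Fin n, 0 ≤ b (i + 1)) {μ : ℝ} (hμ : 0 ≤ μ)
    (hL : ∀ i, μ ≤ L i) {i j : Fin n} (hij : i ≤ j) : μ * m (j + 1) ≤ k (i + 1) := by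
  have htest := hU.mul_dotProduct_mulVec_le hL ((Set.Ici i).indicator 1)
  have hmass : ∑ l ∈ Finset.Ici i, m (l + 1) * (Set.Ici i).indicator 1 l =
      ∑ l ∈ Finset.Ici i, m (l + 1) :=
    Finset.sum_congr rfl fun l hl ↦ by simp [Finset.mem_Ici.1 hl]
  rw [inertiaMat, Matrix.add_mulVec, dotProduct_add, indicator_Ici_dotProduct_triMat_mulVec,
    indicator_Ici_dotProduct_triMat_mulVec, diffMat_mulVec_indicator_Ici, Pi.single_eq_same,
    indicator_Ici_dotProduct_diagonal_mulVec, hmass, mul_one, mul_one] at htest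
  calc μ * m (j + 1) ≤ μ * (∑ l ∈ Finset.Ici i, m (l + 1) + b (i + 1)) := by
        gcongr
        exact le_add_of_le_of_nonneg (Finset.single_le_sum (f := fun l : Fin n ↦ m (l + 1))
          (fun l _ ↦ hm l) (Finset.mem_Ici.2 hij)) (hb i)
    _ ≤ k (i + 1) := htest

/-- `x` is a vibration mode, with squared frequency `μ`, of the chain with masses `m` and spring
constants `c`, that is, `triMat c n *ᵥ x = μ • diagonal m *ᵥ x`, written as the balance between the
force of each spring and the inertia of all the masses beyond it. The constants `c` may be negative:
`K x = μ (M + B) x` is the case `c = k - μ b`. The vector `x` may be zero. -/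
def IsMode (m c : ℕ → ℝ) (μ : ℝ) {n : ℕ} (x : Fin n → ℝ) : Prop :=
  ∀ i : Fin n, c (i + 1) * (diffMat n *ᵥ x) i = μ * ∑ j ∈ Finset.Ici i, m (j + 1) * x j

theorem isMode_of_triMat_mulVec_eq {m k b : ℕ → ℝ} {n : ℕ} {μ : ℝ} {x : Fin n → ℝ}
    (hx : triMat k n *ᵥ x = μ • inertiaMat m b n *ᵥ x) : IsMode m (fun j ↦ k j - μ * b j) μ x := by
  intro i
  have htest := congrArg ((Set.Ici i).indicator 1 ⬝ᵥ ·) hx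
  simp only [inertiaMat, Matrix.add_mulVec, dotProduct_smul, dotProduct_add, smul_eq_mul,
    indicator_Ici_dotProduct_triMat_mulVec, indicator_Ici_dotProduct_diagonal_mulVec] at htest
  linear_combination htest

theorem mul_inertia_sub_stiffness (m k b : ℕ → ℝ) {n : ℕ} (μ : ℝ) (x : Fin n → ℝ) :
    μ * (x ⬝ᵥ inertiaMat m b n *ᵥ x) - x ⬝ᵥ triMat k n *ᵥ x =
      ∑ i : Fin n, (μ * m (i + 1) * x i ^ 2 -
        (k (i + 1) - μ * b (i + 1)) * (diffMat n *ᵥ x) i ^ 2) := by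
  rw [inertiaMat, Matrix.add_mulVec, dotProduct_add, dotProduct_triMat_mulVec,
    dotProduct_triMat_mulVec, dotProduct, ← Finset.sum_add_distrib, Finset.mul_sum,
    ← Finset.sum_sub_distrib]
  refine Finset.sum_congr rfl fun i _ ↦ ?_
  rw [Matrix.mulVec_diagonal]
  ring

end Chain

section FiveMasses

open scoped Matrix

theorem diffMat_five_mulVec (x : Fin 5 → ℝ) :
    diffMat 5 *ᵥ x = ![x 0, x 1 - x 0, x 2 - x 1, x 3 - x 2, x 4 - x 3] := by
  ext i
  fin_cases i <;> simp [diffMat_mulVec_apply]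

theorem isMode_five_iff {m c : ℕ → ℝ} {μ : ℝ} {x : Fin 5 → ℝ} :
    IsMode m c μ x ↔
      c 1 * x 0 = μ * (m 1 * x 0 + m 2 * x 1 + m 3 * x 2 + m 4 * x 3 + m 5 * x 4) ∧
      c 2 * (x 1 - x 0) = μ * (m 2 * x 1 + m 3 * x 2 + m 4 * x 3 + m 5 * x 4) ∧
      c 3 * (x 2 - x 1) = μ * (m 3 * x 2 + m 4 * x 3 + m 5 * x 4) ∧
      c 4 * (x 3 - x 2) = μ * (m 4 * x 3 + m 5 * x 4) ∧
      c 5 * (x 4 - x 3) = μ * (m 5 * x 4) := by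
  simp [IsMode, Fin.forall_fin_succ, diffMat_five_mulVec, ← Finset.filter_le_eq_Ici,
    Finset.sum_filter, Fin.sum_univ_five]

/-- The chain of five masses breaks at springs `2` and `4` into the blocks `{1}`, `{2, 3}`, `{4, 5}`
of masses, and each block has a vibration mode with squared frequency `μ`. For a free pair of masses
`m, m'` joined by a spring `c` this squared frequency is `c (m + m') / (m m')`. -/
structure IsResonantSplit (m c : ℕ → ℝ) (μ : ℝ) : Prop where
  spring_one : c 1 = μ * m 1
  spring_two : c 2 = 0
  spring_three : c 3 * (m 2 + m 3) = μ * (m 2 * m 3)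
  spring_four : c 4 = 0
  spring_five : c 5 * (m 4 + m 5) = μ * (m 4 * m 5)

section Modes

variable {m c : ℕ → ℝ} {μ : ℝ} (hμ : μ ≠ 0) (hm : ∀ j, 1 ≤ j → j ≤ 5 → 0 < m j)
  (hmode : ∀ i j : Fin 5, ∃ x : Fin 5 → ℝ, x ≠ 0 ∧ x i = 0 ∧ x j = 0 ∧ IsMode m c μ x)

include hμ hm hmode

theorem exists_isMode_tail_eq_zero (i : Fin 5) :
    ∃ x : Fin 5 → ℝ, x ≠ 0 ∧ x i = 0 ∧ x 3 = 0 ∧ x 4 = 0 ∧ IsMode m c μ x := by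
  have hm5 := (hm 5 (by norm_num) le_rfl).ne'
  by_cases hc : c 5 = 0
  · obtain ⟨x, hx0, hi, h3, hx⟩ := hmode i 3
    obtain ⟨-, -, -, -, hspring⟩ := isMode_five_iff.1 hx
    have h4 : x 4 = 0 := by simpa [hc, hμ, hm5] using hspring
    exact ⟨x, hx0, hi, h3, h4, hx⟩
  · obtain ⟨x, hx0, hi, h4, hx⟩ := hmode i 4
    obtain ⟨-, -, -, -, hspring⟩ := isMode_five_iff.1 hx
    have h3 : x 3 = 0 := by simpa [h4, hc] using hspring
    exact ⟨x, hx0, hi, h3, h4, hx⟩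

theorem middle_block_of_modes : c 2 = 0 ∧ c 3 * (m 2 + m 3) = μ * (m 2 * m 3) ∧ c 4 = 0 := by
  have hm2 := (hm 2 (by norm_num) (by norm_num)).ne'
  have hm3 := (hm 3 (by norm_num) (by norm_num)).ne'
  obtain ⟨x, hx0, h0, h3, h4, hx⟩ := exists_isMode_tail_eq_zero hμ hm hmode 0
  obtain ⟨e₁, e₂, e₃, e₄, -⟩ := isMode_five_iff.1 hx
  simp only [h0, h3, h4, mul_zero, add_zero, zero_add, sub_zero, zero_sub] at e₁ e₂ e₃ e₄
  have hmomentum : m 2 * x 1 + m 3 * x 2 = 0 := (mul_eq_zero.1 e₁.symm).resolve_left hμ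
  have h2 : x 2 ≠ 0 := by
    intro h2
    have h1 : x 1 = 0 := by simpa [h2, hm2] using hmomentum
    exact hx0 (funext fun i ↦ by fin_cases i <;> assumption)
  have h1 : x 1 ≠ 0 := by
    intro h1
    simp [h1, h2, hm3] at hmomentum
  refine ⟨?_, ?_, ?_⟩
  · simpa [hmomentum, h1] using e₂
  · refine mul_right_cancel₀ h2 ?_
    linear_combination m 2 * e₃ + c 3 * hmomentum
  · simpa [h2] using e₄

theorem first_block_of_modes : c 1 = μ * m 1 := by
  have hm3 := (hm 3 (by norm_num) (by norm_num)).ne'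
  obtain ⟨x, hx0, h1, h3, h4, hx⟩ := exists_isMode_tail_eq_zero hμ hm hmode 1
  obtain ⟨e₁, e₂, -⟩ := isMode_five_iff.1 hx
  have h2 : x 2 = 0 := by
    simpa [(middle_block_of_modes hμ hm hmode).1, h1, h3, h4, hμ, hm3] using e₂
  have h0 : x 0 ≠ 0 := fun h0 ↦ hx0 (funext fun i ↦ by fin_cases i <;> assumption)
  refine mul_right_cancel₀ h0 ?_
  linear_combination e₁ + μ * (m 2 * h1 + m 3 * h2 + m 4 * h3 + m 5 * h4)

theorem last_block_of_modes : c 5 * (m 4 + m 5) = μ * (m 4 * m 5) := by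
  have hm3 := (hm 3 (by norm_num) (by norm_num)).ne'
  have hm4 := (hm 4 (by norm_num) (by norm_num)).ne'
  obtain ⟨hc2, -, hc4⟩ := middle_block_of_modes hμ hm hmode
  obtain ⟨x, hx0, h0, h1, hx⟩ := hmode 0 1
  obtain ⟨-, e₂, -, e₄, e₅⟩ := isMode_five_iff.1 hx
  have hmomentum : m 4 * x 3 + m 5 * x 4 = 0 := by simpa [hc4, hμ] using e₄
  have h2 : x 2 = 0 := by
    simpa [hc2, h1, add_assoc, hmomentum, hμ, hm3] using e₂
  have h4 : x 4 ≠ 0 := by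
    intro h4
    have h3 : x 3 = 0 := by simpa [h4, hm4] using hmomentum
    exact hx0 (funext fun i ↦ by fin_cases i <;> assumption)
  refine mul_right_cancel₀ h4 ?_
  linear_combination m 4 * e₅ + c 5 * hmomentum

theorem isResonantSplit_of_modes : IsResonantSplit m c μ :=
  have ⟨spring_two, spring_three, spring_four⟩ := middle_block_of_modes hμ hm hmode
  { spring_one := first_block_of_modes hμ hm hmode
    spring_two, spring_three, spring_four
    spring_five := last_block_of_modes hμ hm hmode }

end Modes

-- On zero momentum in the block `{4, 5}` that block is in resonance, so masses 4 and 5 drop out.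
theorem IsResonantSplit.sum_deficit_le {m c : ℕ → ℝ} {μ : ℝ} (h : IsResonantSplit m c μ)
    (hμ : 0 ≤ μ) (hm : ∀ j, 1 ≤ j → j ≤ 5 → 0 < m j) {x : Fin 5 → ℝ}
    (hx : m 4 * x 3 + m 5 * x 4 = 0) :
    ∑ i : Fin 5, (μ * m (i + 1) * x i ^ 2 - c (i + 1) * (diffMat 5 *ᵥ x) i ^ 2) ≤
      μ * (m 2 * x 1 ^ 2 + m 3 * x 2 ^ 2) := by
  have hm2 := hm 2 (by norm_num) (by norm_num)
  have hm3 := hm 3 (by norm_num) (by norm_num)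
  have hm4 := hm 4 (by norm_num) (by norm_num)
  have hm5 := hm 5 (by norm_num) (by norm_num)
  have hc3 : 0 ≤ c 3 :=
    nonneg_of_mul_nonneg_left (h.spring_three ▸ by positivity) (add_pos hm2 hm3)
  have hforce : c 5 * (x 4 - x 3) = μ * m 5 * x 4 := by
    refine mul_right_cancel₀ (add_pos hm4 hm5).ne' ?_
    linear_combination (x 4 - x 3) * h.spring_five - μ * m 5 * hx
  have hlast : c 5 * (x 4 - x 3) ^ 2 = μ * (m 4 * x 3 ^ 2 + m 5 * x 4 ^ 2) := by
    linear_combination (x 4 - x 3) * hforce - μ * x 3 * hx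
  have hexpand : ∑ i : Fin 5, (μ * m (i + 1) * x i ^ 2 - c (i + 1) * (diffMat 5 *ᵥ x) i ^ 2) =
      μ * (m 2 * x 1 ^ 2 + m 3 * x 2 ^ 2) - c 3 * (x 2 - x 1) ^ 2 := by
    simp only [diffMat_five_mulVec, Fin.sum_univ_five, Fin.coe_ofNat_eq_mod, Nat.reduceMod,
      Nat.reduceAdd, zero_add, Matrix.cons_val, h.spring_one, h.spring_two, h.spring_four, hlast]
    ring
  rw [hexpand]
  exact sub_le_self _ (mul_nonneg hc3 (sq_nonneg _))

theorem mul_sum_sq_le_dotProduct_triMat_mulVec {k : ℕ → ℝ} {a : ℝ} (h1 : a ≤ k 1) (h2 : a ≤ k 2)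
    (h3 : a ≤ k 3) (h4 : 0 ≤ k 4) (h5 : 0 ≤ k 5) (x : Fin 5 → ℝ) :
    a * (x 0 ^ 2 + (x 1 - x 0) ^ 2 + (x 2 - x 1) ^ 2) ≤ x ⬝ᵥ triMat k 5 *ᵥ x := by
  rw [dotProduct_triMat_mulVec]
  simp only [diffMat_five_mulVec, Fin.sum_univ_five, Fin.coe_ofNat_eq_mod, Nat.reduceMod,
    Nat.reduceAdd, zero_add, Matrix.cons_val]
  nlinarith [mul_le_mul_of_nonneg_right h1 (sq_nonneg (x 0)),
    mul_le_mul_of_nonneg_right h2 (sq_nonneg (x 1 - x 0)),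
    mul_le_mul_of_nonneg_right h3 (sq_nonneg (x 2 - x 1)),
    mul_nonneg h4 (sq_nonneg (x 3 - x 2)), mul_nonneg h5 (sq_nonneg (x 4 - x 3))]

theorem sum_sq_le_five_mul_sum_sq_sub (x₀ x₁ x₂ : ℝ) :
    x₁ ^ 2 + x₂ ^ 2 ≤ 5 * (x₀ ^ 2 + (x₁ - x₀) ^ 2 + (x₂ - x₁) ^ 2) := by
  have hx₁ : x₁ ^ 2 ≤ 2 * (x₀ ^ 2 + (x₁ - x₀) ^ 2) := by
    nlinarith [sq_nonneg (x₁ - 2 * x₀)]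
  have hx₂ : x₂ ^ 2 ≤ 3 * (x₀ ^ 2 + (x₁ - x₀) ^ 2 + (x₂ - x₁) ^ 2) := by
    nlinarith [sq_nonneg (x₁ - 2 * x₀), sq_nonneg (x₂ - x₁ - x₀), sq_nonneg (x₂ - 2 * x₁ + x₀)]
  linarith [sq_nonneg (x₂ - x₁)]

theorem mass_two_three_le {m : ℕ → ℝ} {e : ℝ} (he : e ≤ 1) (hm3 : 0 < m 3) (hm4 : 0 < m 4)
    (h23 : m 2 / m 3 ≤ e) (h34 : m 3 / m 4 ≤ e) : m 2 ≤ e * m 4 ∧ m 3 ≤ e * m 4 := by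
  rw [div_le_iff₀ hm3] at h23
  rw [div_le_iff₀ hm4] at h34
  exact ⟨by nlinarith, h34⟩

theorem IsResonantSplit.mul_inertia_sub_stiffness_le {m k b : ℕ → ℝ} {γ : ℝ}
    (hsplit : IsResonantSplit m (fun j ↦ k j - γ * b j) γ) (hγ : 0 ≤ γ)
    (hm : ∀ j, 1 ≤ j → j ≤ 5 → 0 < m j) {a : ℝ} (h2 : m 2 ≤ a) (h3 : m 3 ≤ a) {x : Fin 5 → ℝ}
    (hx : m 4 * x 3 + m 5 * x 4 = 0) :
    γ * (x ⬝ᵥ inertiaMat m b 5 *ᵥ x) - x ⬝ᵥ triMat k 5 *ᵥ x ≤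
      5 * γ * a * (x 0 ^ 2 + (x 1 - x 0) ^ 2 + (x 2 - x 1) ^ 2) := by
  have ha : 0 ≤ a := (hm 2 (by norm_num) (by norm_num)).le.trans h2
  calc γ * (x ⬝ᵥ inertiaMat m b 5 *ᵥ x) - x ⬝ᵥ triMat k 5 *ᵥ x
      ≤ γ * (m 2 * x 1 ^ 2 + m 3 * x 2 ^ 2) := by
        rw [mul_inertia_sub_stiffness]
        exact hsplit.sum_deficit_le hγ hm hx
    _ ≤ γ * (a * x 1 ^ 2 + a * x 2 ^ 2) := by gcongr
    _ = γ * a * (x 1 ^ 2 + x 2 ^ 2) := by ring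
    _ ≤ γ * a * (5 * (x 0 ^ 2 + (x 1 - x 0) ^ 2 + (x 2 - x 1) ^ 2)) := by
        gcongr
        exact sum_sq_le_five_mul_sum_sq_sub _ _ _
    _ = 5 * γ * a * (x 0 ^ 2 + (x 1 - x 0) ^ 2 + (x 2 - x 1) ^ 2) := by ring

namespace IsPencilFrame

variable {m k b : ℕ → ℝ} {L : Fin 5 → ℝ} {U : Matrix (Fin 5) (Fin 5) ℝ}
  (hU : IsPencilFrame (inertiaMat m b 5) (triMat k 5) L U)
  (hm : ∀ j, 1 ≤ j → j ≤ 5 → 0 < m j)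

include hU hm

theorem isResonantSplit {γ : ℝ} (hγ : γ ≠ 0) {S : Finset (Fin 5)} (hcard : 2 < S.card)
    (hS : ∀ i ∈ S, L i = γ) : IsResonantSplit m (fun j ↦ k j - γ * b j) γ := by
  refine isResonantSplit_of_modes hγ hm fun i j ↦ ?_
  obtain ⟨x, hx0, hWx, hx⟩ :=
    hU.exists_eigenvector (Matrix.of ![Pi.single i 1, Pi.single j 1]) (by simpa using hcard) hS
  refine ⟨x, hx0, ?_, ?_, isMode_of_triMat_mulVec_eq hx⟩
  · simpa [Matrix.mulVec] using congrFun hWx 0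
  · simpa [Matrix.mulVec] using congrFun hWx 1

variable (hb : ∀ j, 1 ≤ j → j ≤ 5 → 0 ≤ b j) {α : ℝ} (hα : 0 ≤ α) (hL : ∀ i, α ≤ L i)

include hb hα hL

theorem mul_mass_four_mul_sum_sq_le (x : Fin 5 → ℝ) :
    α * m 4 * (x 0 ^ 2 + (x 1 - x 0) ^ 2 + (x 2 - x 1) ^ 2) ≤ x ⬝ᵥ triMat k 5 *ᵥ x := by
  have hm' (i : Fin 5) : 0 ≤ m (i + 1) := (hm _ (by omega) (by omega)).le
  have hk {i j : Fin 5} (hij : i ≤ j) : α * m (j + 1) ≤ k (i + 1) :=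
    hU.mul_mass_le_stiffness hm' (fun i ↦ hb _ (by omega) (by omega)) hα hL hij
  have hk0 (i : Fin 5) : 0 ≤ k (i + 1) := (mul_nonneg hα (hm' i)).trans (hk le_rfl)
  exact mul_sum_sq_le_dotProduct_triMat_mulVec (hk (i := 0) (j := 3) (by decide))
    (hk (i := 1) (j := 3) (by decide)) (hk (i := 2) (j := 3) (by decide)) (hk0 3) (hk0 4) x

theorem mul_sub_le {β γ e : ℝ} (hγ : 0 ≤ γ) {S : Finset (Fin 5)} (hcard : 1 < S.card)
    (hS : ∀ i ∈ S, L i ≤ β) (hsplit : IsResonantSplit m (fun j ↦ k j - γ * b j) γ)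
    (h24 : m 2 ≤ e * m 4) (h34 : m 3 ≤ e * m 4) : α * (γ - β) ≤ 5 * e * (β * γ) := by
  obtain ⟨x, hx0, hWx, hxK⟩ :=
    hU.exists_dotProduct_mulVec_le (Matrix.of fun _ : Unit ↦ ![0, 0, 0, m 4, m 5])
      (by simpa using hcard) hS
  have hx : m 4 * x 3 + m 5 * x 4 = 0 := by
    simpa [Matrix.mulVec, dotProduct, Fin.sum_univ_five] using congrFun hWx ()
  have hdeficit := hsplit.mul_inertia_sub_stiffness_le hγ hm h24 h34 hx
  have henergy := (hU.mul_mass_four_mul_sum_sq_le hm hb hα hL x).trans hxK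
  have hp : 0 < x ⬝ᵥ inertiaMat m b 5 *ᵥ x := by
    simpa using (posDef_inertiaMat (fun i ↦ hm _ (by omega) (by omega))
      fun i ↦ hb _ (by omega) (by omega)).dotProduct_mulVec_pos hx0
  have he : 0 ≤ e :=
    (pos_of_mul_pos_left ((hm 3 (by norm_num) (by norm_num)).trans_le h34)
      (hm 4 (by norm_num) (by norm_num)).le).le
  set p := x ⬝ᵥ inertiaMat m b 5 *ᵥ x
  set E := x 0 ^ 2 + (x 1 - x 0) ^ 2 + (x 2 - x 1) ^ 2
  refine le_of_mul_le_mul_right ?_ hp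
  calc α * (γ - β) * p = α * (γ * p - β * p) := by ring
    _ ≤ α * (5 * γ * (e * m 4) * E) := by
      gcongr
      linarith
    _ = 5 * e * γ * (α * m 4 * E) := by ring
    _ ≤ 5 * e * γ * (β * p) := by gcongr
    _ = 5 * e * (β * γ) * p := by ring

end IsPencilFrame

theorem stmt_1_general {lam₁ lam₂ lam₃ : ℝ} (h1 : 0 < lam₁) (h12 : lam₁ ≤ lam₂) (h23 : lam₂ ≤ lam₃)
    {m k b : ℕ → ℝ} (hm : ∀ j, 1 ≤ j → j ≤ 5 → 0 < m j) (hb : ∀ j, 1 ≤ j → j ≤ 5 → 0 ≤ b j)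
    (hdvd : (X - C lam₁) * (X - C lam₂) * (X - C lam₃) ^ 3 ∣ fpoly m k b 5) :
    lam₁ / 5 * (1 / lam₂ - 1 / lam₃) ≤ max (m 2 / m 3) (m 3 / m 4) := by
  have h2 := h1.trans_le h12
  have h3 := h2.trans_le h23
  have hprod : ∏ i, (X - C (![lam₁, lam₂, lam₃, lam₃, lam₃] i)) =
      (X - C lam₁) * (X - C lam₂) * (X - C lam₃) ^ 3 := by
    simp only [Fin.prod_univ_five, Matrix.cons_val]
    ring
  obtain ⟨U, hU⟩ := exists_isPencilFrame
    (posDef_inertiaMat (fun i ↦ hm _ (by omega) (by omega)) fun i ↦ hb _ (by omega) (by omega))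
    (isHermitian_triMat k 5) (hprod ▸ hdvd)
  have hsplit := hU.isResonantSplit hm (S := {2, 3, 4}) h3.ne' (by decide) (by simp)
  set e := max (m 2 / m 3) (m 3 / m 4)
  have hgap : lam₁ / 5 * (1 / lam₂ - 1 / lam₃) = lam₁ * (lam₃ - lam₂) / (5 * (lam₂ * lam₃)) := by
    field_simp
  rw [hgap, div_le_iff₀ (by positivity)]
  rcases le_total e 1 with he | he
  · obtain ⟨h24, h34⟩ := mass_two_three_le he (hm 3 (by norm_num) (by norm_num))
      (hm 4 (by norm_num) (by norm_num)) (le_max_left _ _) (le_max_right _ _)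
    have hbound := hU.mul_sub_le (S := {0, 1}) hm hb h1.le
      (by simp [Fin.forall_fin_succ, h12, h12.trans h23]) (β := lam₂) h3.le (by decide)
      (by simp [h12]) hsplit h24 h34
    linarith
  · nlinarith [mul_le_mul_of_nonneg_right h12 h3.le, mul_pos h1 h2, mul_pos h2 h3]

theorem mul_one_sub_rpow_lt_mul_inv_sub_inv {lam₁ lam₂ lam₃ : ℝ} (h1 : 0 < lam₁) (h2 : 0 < lam₂)
    (h23 : lam₂ < lam₃) :
    lam₁ / (8 * lam₃) * (1 - (lam₂ / lam₃) ^ ((1 : ℝ) / 3)) <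
      lam₁ / 5 * (1 / lam₂ - 1 / lam₃) := by
  have h3 : 0 < lam₃ := h2.trans h23
  have hroot : lam₂ / lam₃ ≤ (lam₂ / lam₃) ^ ((1 : ℝ) / 3) :=
    Real.self_le_rpow_of_le_one (by positivity) (div_le_one_of_le₀ h23.le h3.le) (by norm_num)
  have hgap : 0 < lam₁ * (lam₃ - lam₂) / lam₃ := div_pos (mul_pos h1 (sub_pos.2 h23)) h3
  calc lam₁ / (8 * lam₃) * (1 - (lam₂ / lam₃) ^ ((1 : ℝ) / 3))
      ≤ lam₁ / (8 * lam₃) * (1 - lam₂ / lam₃) := by gcongr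
    _ = lam₁ * (lam₃ - lam₂) / lam₃ * (1 / (8 * lam₃)) := by field_simp
    _ < lam₁ * (lam₃ - lam₂) / lam₃ * (1 / (5 * lam₂)) :=
      mul_lt_mul_of_pos_left (one_div_lt_one_div_of_lt (by positivity) (by linarith)) hgap
    _ = lam₁ / 5 * (1 / lam₂ - 1 / lam₃) := by field_simp

end FiveMasses

/-- Example `thm3`: for `n = 5`, `t = (1,1,3)` and `0 < λ_1 < λ_2 < λ_3`, any realization
forces `max_{j∈{2,3,4}} m_j/m_{j+1} > (λ_1/(8λ_3))(1 − (λ_2/λ_3)^{1/3})`. -/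
theorem stmt_1 (lam₁ lam₂ lam₃ : ℝ) (h1 : 0 < lam₁) (h12 : lam₁ < lam₂) (h23 : lam₂ < lam₃)
    (m k b : ℕ → ℝ)
    (hm : ∀ j, 1 ≤ j → j ≤ 5 → 0 < m j)
    (hk : ∀ j, 1 ≤ j → j ≤ 5 → 0 < k j)
    (hb : ∀ j, 1 ≤ j → j ≤ 5 → 0 ≤ b j)
    (hdvd : (Polynomial.X - Polynomial.C lam₁) * (Polynomial.X - Polynomial.C lam₂) *
        (Polynomial.X - Polynomial.C lam₃) ^ 3 ∣ fpoly m k b 5) :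
    max (m 2 / m 3) (max (m 3 / m 4) (m 4 / m 5)) >
      lam₁ / (8 * lam₃) * (1 - (lam₂ / lam₃) ^ ((1 : ℝ) / 3)) :=
  (mul_one_sub_rpow_lt_mul_inv_sub_inv h1 (h1.trans h12) h23).trans_le <|
    (stmt_1_general h1 h12.le h23.le hm hb hdvd).trans (max_le_max_left _ (le_max_left _ _))
end

section
/- Assume m_j > 0, k_j > 0, b_j ≥ 0 for all j = 1,…,n. Fix j ∈ [1, n−1] and suppose (−λ)·g_j(λ)/(f_j, g_j) ≪ f_j(λ)/(f_j, g_j). Then (−λ)·g_{j+1}(λ)/(f_{j+1}, g_{j+1}) ≪ f_{j+1}(λ)/(f_{j+1}, g_{j+1}). -/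
open Polynomial

/-- `Prec g f` formalizes `g ≪ f`: both polynomials have degree `s ≥ 1`, each has `s`
distinct real roots, the leading coefficients `c`, `d` have the same sign, and the roots
strictly interlace as `β 0 < α 0 < β 1 < α 1 < ⋯ < β (s-1) < α (s-1)`. -/
def Prec (g f : Polynomial ℝ) : Prop :=
  ∃ (s : ℕ) (c d : ℝ) (α β : Fin s → ℝ),
    0 < s ∧ 0 < c * d ∧ StrictMono α ∧ StrictMono β ∧
    f = Polynomial.C c * ∏ i, (Polynomial.X - Polynomial.C (α i)) ∧
    g = Polynomial.C d * ∏ i, (Polynomial.X - Polynomial.C (β i)) ∧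
    (∀ i, β i < α i) ∧
    ∀ (i : Fin s) (h : (i : ℕ) + 1 < s), α i < β ⟨(i : ℕ) + 1, h⟩

/-!
For real polynomials of equal degree whose leading coefficients have the same sign, `N ≪ D` holds
if and only if `N` and `D` are coprime and `N / D` maps the open upper half-plane into the open
lower one (Hermite–Biehler): an interlacing pair has a partial fraction expansion with positive
residues, and conversely a half-plane map has simple real poles, with a zero in every gap.
Expanding the determinants along the last mass gives, with `p = k_{j+1} - λ b_{j+1}`,
`g_{j+1} = f_j + p g_j` and `f_{j+1} = p f_j - λ m_{j+1} g_{j+1}`. Hence the pair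
`N = -λ g_j`, `D = f_j` becomes `N' = p N - λ D`, `D' = p D + m_{j+1} N'`, and
`Im (N' * conj D') = |p|² Im (N * conj D) - k_{j+1} |D|² Im λ` stays negative.
-/

section Determinant

variable {R : Type*} [CommRing R]

theorem det_add_single {ι : Type*} [Fintype ι] [DecidableEq ι] (A : Matrix ι ι R) (i j : ι)
    (a : R) : (A + Matrix.single i j a).det = A.det + a * A.adjugate j i := by
  have h : A + Matrix.single i j a = A.updateRow i (A i + a • Pi.single j 1) := by
    ext r c
    by_cases hr : r = i <;> by_cases hc : c = j <;>
      simp [Matrix.updateRow_apply, hr, hc, Ne.symm]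
  rw [h, Matrix.det_updateRow_add, Matrix.updateRow_eq_self, Matrix.det_updateRow_smul,
    ← Matrix.adjugate_apply]

theorem det_add_single_last {n : ℕ} (A : Matrix (Fin (n + 1)) (Fin (n + 1)) R) (a : R) :
    (A + Matrix.single (Fin.last n) (Fin.last n) a).det =
      A.det + a * (A.submatrix Fin.castSucc Fin.castSucc).det := by
  rw [det_add_single, Matrix.adjugate_fin_succ_eq_det_submatrix, Fin.succAbove_last,
    Even.neg_one_pow ⟨_, rfl⟩, one_mul]

theorem det_eq_of_last_row_col {n : ℕ} (A : Matrix (Fin (n + 2)) (Fin (n + 2)) R)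
    (hrow : ∀ c : Fin n, A (Fin.last _) c.castSucc.castSucc = 0)
    (hcol : ∀ r : Fin n, A r.castSucc.castSucc (Fin.last _) = 0) :
    A.det =
      A (Fin.last _) (Fin.last _) * (A.submatrix Fin.castSucc Fin.castSucc).det -
        A (Fin.last _) (Fin.last n).castSucc * A (Fin.last n).castSucc (Fin.last _) *
          ((A.submatrix Fin.castSucc Fin.castSucc).submatrix Fin.castSucc Fin.castSucc).det := by
  set l := Fin.last (n + 1)
  set u := (Fin.last n).castSucc
  have hminor : (A.submatrix Fin.castSucc u.succAbove).det =
      A u l *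
        ((A.submatrix Fin.castSucc Fin.castSucc).submatrix Fin.castSucc Fin.castSucc).det := by
    have hu : u.succAbove (Fin.last n) = l := by simp [u, l]
    have hc : u.succAbove ∘ Fin.castSucc = Fin.castSucc ∘ Fin.castSucc := by
      ext i; simp [u, Fin.succAbove]
    rw [Matrix.det_succ_column _ (Fin.last n), Fin.sum_univ_castSucc,
      Finset.sum_eq_zero fun r _ => by simp [hu, l, hcol], zero_add]
    simp [hu, hc, u, ← two_mul]
  rw [Matrix.det_succ_row A l, Fin.sum_univ_castSucc, Fin.sum_univ_castSucc,
    Finset.sum_eq_zero fun c _ => by simp [l, hrow], zero_add, Fin.succAbove_last, hminor,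
    Even.neg_one_pow ⟨_, rfl⟩, Odd.neg_one_pow (by simp [l])]
  ring

end Determinant

/-- The linear polynomial `k i - λ b i` through which the spring `k i` and the damper `b i` enter
the matrix `K_j - λ (M_j + B_j)`. -/
noncomputable def springDamper (k b : ℕ → ℝ) (i : ℕ) : ℝ[X] :=
  C (k i) - X * C (b i)

section Recurrence

variable (m k b : ℕ → ℝ)

theorem sysMat_apply (j : ℕ) (r c : Fin j) :
    sysMat m k b j r c =
      if (r : ℕ) = c then
        (if (r : ℕ) = j - 1 then springDamper k b j
          else springDamper k b (r + 1) + springDamper k b (r + 2)) - X * C (m (r + 1))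
      else if (r : ℕ) + 1 = c then -springDamper k b (c + 1)
      else if (c : ℕ) + 1 = r then -springDamper k b (r + 1)
      else 0 := by
  simp only [sysMat, triMat, springDamper, Matrix.sub_apply, Matrix.map_apply, Matrix.of_apply,
    Matrix.smul_apply, Matrix.add_apply, Matrix.diagonal_apply, Fin.ext_iff, smul_eq_mul]
  split_ifs <;> simp only [map_add, map_neg, map_zero] <;> grind

theorem sysMat_submatrix_castSucc (j : ℕ) :
    (sysMat m k b (j + 2)).submatrix Fin.castSucc Fin.castSucc =
      sysMat m k b (j + 1) +
        Matrix.single (Fin.last j) (Fin.last j) (springDamper k b (j + 2)) := by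
  ext1 r c
  simp only [Matrix.submatrix_apply, Matrix.add_apply, sysMat_apply, Matrix.single_apply,
    Fin.val_castSucc, Fin.ext_iff, Fin.val_last]
  split_ifs <;> grind

theorem gpoly_add_two (j : ℕ) :
    gpoly m k b (j + 2) =
      fpoly m k b (j + 1) + springDamper k b (j + 2) * gpoly m k b (j + 1) := by
  have h := det_add_single_last (sysMat m k b (j + 1)) (springDamper k b (j + 2))
  rwa [← sysMat_submatrix_castSucc] at h

theorem fpoly_add_two (j : ℕ) :
    fpoly m k b (j + 2) =
      springDamper k b (j + 2) * fpoly m k b (j + 1) -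
        X * C (m (j + 2)) * gpoly m k b (j + 2) := by
  have hminor : (((sysMat m k b (j + 2)).submatrix Fin.castSucc Fin.castSucc).submatrix
      Fin.castSucc Fin.castSucc).det = gpoly m k b (j + 1) := by
    have h : (Matrix.single (Fin.last j) (Fin.last j) (springDamper k b (j + 2))).submatrix
        Fin.castSucc Fin.castSucc = 0 := by
      ext1 r c
      simp [(Fin.castSucc_lt_last r).ne']
    rw [sysMat_submatrix_castSucc, Matrix.submatrix_add, Pi.add_apply, Pi.add_apply, h, add_zero]
    rfl
  have hdet : fpoly m k b (j + 2) =
      (springDamper k b (j + 2) - X * C (m (j + 2))) * gpoly m k b (j + 2) -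
        springDamper k b (j + 2) ^ 2 * gpoly m k b (j + 1) := by
    have hlast : sysMat m k b (j + 2) (Fin.last _) (Fin.last _) =
        springDamper k b (j + 2) - X * C (m (j + 2)) := by
      simp [sysMat_apply]
    have hrow : sysMat m k b (j + 2) (Fin.last _) (Fin.last j).castSucc =
        -springDamper k b (j + 2) := by
      simp only [sysMat_apply, Fin.val_last, Fin.val_castSucc]
      grind
    have hcol : sysMat m k b (j + 2) (Fin.last j).castSucc (Fin.last _) =
        -springDamper k b (j + 2) := by
      simp only [sysMat_apply, Fin.val_last, Fin.val_castSucc]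
      grind
    rw [fpoly, det_eq_of_last_row_col, hminor, hlast, hrow, hcol, neg_mul_neg, ← sq]
    · rfl
    all_goals
      intro i
      simp only [sysMat_apply, Fin.val_last, Fin.val_castSucc]
      grind
  rw [hdet, gpoly_add_two]
  ring

end Recurrence

section HalfPlane

open ComplexConjugate Filter Topology

theorem splits_of_forall_aeval_ne_zero {P : ℝ[X]}
    (h : ∀ z : ℂ, 0 < z.im → aeval z P ≠ 0) : P.Splits := by
  refine (IsAlgClosed.splits (P.map (algebraMap ℝ ℂ))).of_splits_map _ fun z hz => ?_
  have hz : aeval z P = 0 := by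
    simpa [aeval_def, eval_map] using (mem_roots'.mp hz).2
  rcases lt_trichotomy z.im 0 with him | him | him
  · refine absurd ?_ (h (conj z) (by simpa using him))
    rw [aeval_conj, hz, map_zero]
  · exact ⟨z.re, Complex.ext rfl (by simp [him])⟩
  · exact absurd hz (h z him)

/-- The rational function `N / D` maps the open upper half-plane into the open lower half-plane.
As `Im (N * conj D) = |D|² * Im (N / D)`, this also forces `N` and `D` to have no zero there. -/
def MapsUpperToLower (N D : ℝ[X]) : Prop :=
  ∀ z : ℂ, 0 < z.im → (aeval z N * conj (aeval z D)).im < 0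

namespace MapsUpperToLower

variable {N D : ℝ[X]}

theorem aeval_ne_zero (h : MapsUpperToLower N D) {z : ℂ} (hz : 0 < z.im) : aeval z D ≠ 0 :=
  fun h0 => by simpa [h0] using h z hz

theorem ne_zero (h : MapsUpperToLower N D) : D ≠ 0 := by
  rintro rfl
  exact h.aeval_ne_zero (z := Complex.I) (by simp) (map_zero _)

theorem splits (h : MapsUpperToLower N D) : D.Splits :=
  splits_of_forall_aeval_ne_zero fun _ hz => h.aeval_ne_zero hz

theorem of_mul_left {P : ℝ[X]} (h : MapsUpperToLower (P * N) (P * D)) :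
    MapsUpperToLower N D := by
  intro z hz
  have hfactor : (aeval z (P * N) * conj (aeval z (P * D))).im =
      Complex.normSq (aeval z P) * (aeval z N * conj (aeval z D)).im := by
    rw [← Complex.im_ofReal_mul, ← Complex.mul_conj, map_mul, map_mul, map_mul]
    ring_nf
  exact neg_of_mul_neg_right (hfactor ▸ h z hz) (Complex.normSq_nonneg _)

theorem C_mul (h : MapsUpperToLower N D) {c d : ℝ} (hcd : 0 < c * d) :
    MapsUpperToLower (C d * N) (C c * D) := by
  intro z hz
  have hfactor : aeval z (C d * N) * conj (aeval z (C c * D)) =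
      (c * d : ℝ) * (aeval z N * conj (aeval z D)) := by
    simp only [map_mul, aeval_C, Complex.coe_algebraMap, Complex.conj_ofReal, Complex.ofReal_mul]
    ring
  rw [hfactor, Complex.im_ofReal_mul]
  exact mul_neg_of_pos_of_neg hcd (h z hz)

theorem add_C_mul (h : MapsUpperToLower N D) (a : ℝ) : MapsUpperToLower N (D + C a * N) := by
  intro z hz
  have hsplit : aeval z N * conj (aeval z (D + C a * N)) =
      aeval z N * conj (aeval z D) + (a * Complex.normSq (aeval z N) : ℝ) := by
    simp only [map_add, map_mul, aeval_C, Complex.coe_algebraMap, Complex.conj_ofReal,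
      Complex.ofReal_mul, ← Complex.mul_conj]
    ring
  rw [hsplit, Complex.add_im, Complex.ofReal_im, add_zero]
  exact h z hz

theorem mul_sub_X_mul (h : MapsUpperToLower N D) {k : ℝ} (hk : 0 < k) (b : ℝ) :
    MapsUpperToLower ((C k - X * C b) * N - X * D) ((C k - X * C b) * D) := by
  intro z hz
  have hsplit : aeval z ((C k - X * C b) * N - X * D) * conj (aeval z ((C k - X * C b) * D)) =
      Complex.normSq (k - z * b) * (aeval z N * conj (aeval z D)) -
        Complex.normSq (aeval z D) * (k * z - (b * Complex.normSq z : ℝ)) := by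
    simp only [map_sub, map_mul, aeval_C, aeval_X, Complex.coe_algebraMap, Complex.conj_ofReal,
      Complex.ofReal_mul, ← Complex.mul_conj]
    ring
  have hD : 0 < Complex.normSq (aeval z D) * (k * z.im) :=
    mul_pos (Complex.normSq_pos.mpr (h.aeval_ne_zero hz)) (mul_pos hk hz)
  have hN : Complex.normSq (k - z * b) * (aeval z N * conj (aeval z D)).im ≤ 0 :=
    mul_nonpos_of_nonneg_of_nonpos (Complex.normSq_nonneg _) (h z hz).le
  rw [hsplit, Complex.sub_im, Complex.im_ofReal_mul, Complex.im_ofReal_mul, Complex.sub_im,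
    Complex.im_ofReal_mul, Complex.ofReal_im, sub_zero]
  linarith

theorem eval_mul_eval_mul_im_pow_nonpos {r : ℕ} {x : ℝ} {E : ℝ[X]}
    (h : MapsUpperToLower N ((X - C x) ^ r * E)) {w : ℂ} (hw : 0 < w.im) :
    N.eval x * E.eval x * (conj w ^ r).im ≤ 0 := by
  let q : ℝ → ℝ := fun ε =>
    (aeval (x + ε * w : ℂ) N * conj (aeval (x + ε * w : ℂ) E) * conj w ^ r).im
  have hq : Continuous q := by fun_prop
  have hq0 : q 0 = N.eval x * E.eval x * (conj w ^ r).im := by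
    have hx (P : ℝ[X]) : aeval (x : ℂ) P = ((P.eval x : ℝ) : ℂ) := aeval_ofReal P x
    simp only [q, Complex.ofReal_zero, zero_mul, add_zero, hx, Complex.conj_ofReal]
    rw [← Complex.ofReal_mul, Complex.im_ofReal_mul]
  have hneg : ∀ ε > 0, q ε < 0 := by
    intro ε hε
    have hz := h (x + ε * w) (by simpa using mul_pos hε hw)
    have hfactor : aeval (x + ε * w : ℂ) N *
        conj (aeval (x + ε * w : ℂ) ((X - C x) ^ r * E)) = (ε ^ r : ℝ) *
          (aeval (x + ε * w : ℂ) N * conj (aeval (x + ε * w : ℂ) E) * conj w ^ r) := by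
      simp only [map_mul, map_pow, map_sub, aeval_X, aeval_C, Complex.coe_algebraMap, map_add,
        Complex.conj_ofReal, Complex.ofReal_pow]
      ring
    rw [hfactor, Complex.im_ofReal_mul] at hz
    exact neg_of_mul_neg_right hz (by positivity)
  rw [← hq0]
  exact le_of_tendsto (hq.continuousWithinAt (s := Set.Ioi 0))
    (eventually_mem_nhdsWithin.mono fun ε hε => (hneg ε hε).le)

-- Near a root of order `r`, the argument of `N / D` sweeps an angle `r * π` on a half-circle, so
-- `N / D` can only stay in the lower half-plane when `r = 1`.
theorem eval_mul_derivative_pos (h : MapsUpperToLower N D) {x : ℝ} (hD : D.eval x = 0)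
    (hN : N.eval x ≠ 0) : 0 < N.eval x * D.derivative.eval x := by
  obtain ⟨E, hDE, hE⟩ := exists_eq_pow_rootMultiplicity_mul_and_not_dvd D h.ne_zero x
  set r := rootMultiplicity x D
  have hr : 1 ≤ r := (rootMultiplicity_pos h.ne_zero).mpr hD
  have hNE : N.eval x * E.eval x ≠ 0 := mul_ne_zero hN (mt dvd_iff_isRoot.mpr hE)
  have hangle {θ : ℝ} (hθ : 0 < θ) (hθπ : θ < Real.pi) :
      0 ≤ N.eval x * E.eval x * Real.sin (r * θ) := by
    have hw := (hDE ▸ h).eval_mul_eval_mul_im_pow_nonpos (w := Complex.exp (θ * Complex.I))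
      (by simpa [Complex.exp_ofReal_mul_I_im] using Real.sin_pos_of_pos_of_lt_pi hθ hθπ)
    have hpow : (conj (Complex.exp (θ * Complex.I)) ^ r).im = -Real.sin (r * θ) := by
      rw [← map_pow, ← Complex.exp_nat_mul, Complex.conj_im, ← mul_assoc,
        ← Complex.ofReal_natCast, ← Complex.ofReal_mul, Complex.exp_ofReal_mul_I_im]
    rw [hpow] at hw
    linarith
  have hr0 : (0 : ℝ) < r := by positivity
  have hpos : 0 < N.eval x * E.eval x := by
    have hle := hangle (θ := Real.pi / 2 / r) (by positivity) (by
      rw [div_lt_iff₀ hr0]; nlinarith [Real.pi_pos, (Nat.one_le_cast (α := ℝ)).mpr hr])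
    rw [mul_div_cancel₀ _ hr0.ne', Real.sin_pi_div_two, mul_one] at hle
    exact hle.lt_of_ne' hNE
  have hr1 : r = 1 := by
    by_contra hne
    have hr2 : (2 : ℝ) ≤ r := by exact_mod_cast (by omega : 2 ≤ r)
    have hle := hangle (θ := (Real.pi / 2 + Real.pi) / r) (by positivity) (by
      rw [div_lt_iff₀ hr0]; nlinarith [Real.pi_pos])
    rw [mul_div_cancel₀ _ hr0.ne', Real.sin_add_pi, Real.sin_pi_div_two] at hle
    linarith
  have hderiv : D.derivative.eval x = E.eval x := by
    rw [hDE, hr1]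
    simp
  rwa [hderiv]

end MapsUpperToLower

end HalfPlane

section RealRoots

open Filter Topology

theorem eq_C_leadingCoeff_mul_prod_X_sub_C {K ι : Type*} [Field K] [Fintype ι] {P : K[X]}
    {v : ι → K} (hv : Function.Injective v) (hroot : ∀ i, P.IsRoot (v i))
    (hdeg : P.natDegree ≤ Fintype.card ι) :
    P = C P.leadingCoeff * ∏ i, (X - C (v i)) := by
  refine eq_leadingCoeff_mul_of_monic_of_dvd_of_natDegree_le
    (monic_prod_X_sub_C v Finset.univ) ?_ ?_
  · exact Finset.prod_dvd_of_coprime ((pairwise_coprime_X_sub_C hv).set_pairwise _)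
      fun i _ => dvd_iff_isRoot.mpr (hroot i)
  · rwa [natDegree_finsetProd_X_sub_C_eq_card]

theorem card_roots_toFinset_of_derivative_ne_zero {K : Type*} [Field K] [DecidableEq K] {P : K[X]}
    (hP : P.Splits) (h0 : P ≠ 0) (h : ∀ x, P.eval x = 0 → P.derivative.eval x ≠ 0) :
    P.roots.toFinset.card = P.natDegree := by
  have hnodup : P.roots.Nodup := Multiset.nodup_iff_count_le_one.mpr fun x => by
    rw [count_roots, ← not_lt, one_lt_rootMultiplicity_iff_isRoot h0]
    exact fun hx => h x hx.1 hx.2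
  rw [Multiset.toFinset_card_of_nodup hnodup, hP.natDegree_eq_card_roots]

theorem exists_isRoot_le_of_eval_neg {P : ℝ[X]} (hdeg : Even P.natDegree)
    (hlc : 0 ≤ P.leadingCoeff) {x : ℝ} (hx : P.eval x < 0) : ∃ y ≤ x, P.IsRoot y := by
  by_contra! hroots
  have hpos := zero_lt_negOnePow_mul_eval_of_lt_roots_of_leadingCoeff_nonneg
    (fun y hy => not_le.mp fun hle => hroots y hle hy) hlc
  rw [Int.negOnePow_even _ (by exact_mod_cast hdeg)] at hpos
  norm_num at hpos
  linarith

theorem eventually_sign_eval_eq {P : ℝ[X]} {x : ℝ} (hx : P.eval x = 0)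
    (hderiv : 0 < P.derivative.eval x) :
    ∀ᶠ y in 𝓝 x, SignType.sign (P.eval y) = SignType.sign (y - x) :=
  eventually_nhdsWithin_sign_eq_of_deriv_pos (by rwa [Polynomial.deriv]) hx

theorem eventually_eval_neg_nhdsLT {P : ℝ[X]} {x : ℝ} (hx : P.eval x = 0)
    (hderiv : 0 < P.derivative.eval x) : ∀ᶠ y in 𝓝[<] x, P.eval y < 0 := by
  filter_upwards [(eventually_sign_eval_eq hx hderiv).filter_mono nhdsWithin_le_nhds,
    self_mem_nhdsWithin] with y hsign hy
  rwa [sign_neg (sub_neg.mpr hy), sign_eq_neg_one_iff] at hsign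

theorem eventually_eval_pos_nhdsGT {P : ℝ[X]} {x : ℝ} (hx : P.eval x = 0)
    (hderiv : 0 < P.derivative.eval x) : ∀ᶠ y in 𝓝[>] x, 0 < P.eval y := by
  filter_upwards [(eventually_sign_eval_eq hx hderiv).filter_mono nhdsWithin_le_nhds,
    self_mem_nhdsWithin] with y hsign hy
  rwa [sign_pos (sub_pos.mpr hy), sign_eq_one_iff] at hsign

theorem exists_isRoot_lt_of_derivative_pos {P : ℝ[X]} (hdeg : Even P.natDegree)
    (hlc : 0 ≤ P.leadingCoeff) {x : ℝ} (hx : P.eval x = 0) (hderiv : 0 < P.derivative.eval x) :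
    ∃ y < x, P.IsRoot y := by
  obtain ⟨u, hu, hux⟩ := ((eventually_eval_neg_nhdsLT hx hderiv).and self_mem_nhdsWithin).exists
  obtain ⟨y, hyu, hy⟩ := exists_isRoot_le_of_eval_neg hdeg hlc hu
  exact ⟨y, hyu.trans_lt hux, hy⟩

theorem exists_isRoot_Ioo_of_derivative_pos {P : ℝ[X]} {x z : ℝ} (hzx : z < x)
    (hx : P.eval x = 0) (hx' : 0 < P.derivative.eval x)
    (hz : P.eval z = 0) (hz' : 0 < P.derivative.eval z) :
    ∃ y ∈ Set.Ioo z x, P.IsRoot y := by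
  obtain ⟨u, hu, hzu, hux⟩ :=
    ((eventually_eval_pos_nhdsGT hz hz').and (Ioo_mem_nhdsGT hzx)).exists
  obtain ⟨w, hw, huw, hwx⟩ :=
    ((eventually_eval_neg_nhdsLT hx hx').and (Ioo_mem_nhdsLT hux)).exists
  obtain ⟨y, hy, hy0⟩ :=
    intermediate_value_Icc' huw.le P.continuous.continuousOn ⟨hw.le, hu.le⟩
  exact ⟨y, ⟨hzu.trans_le hy.1, hy.2.trans_lt hwx⟩, hy0⟩

end RealRoots

section PartialFractions

open ComplexConjugate

theorem aeval_div_aeval_nodal {K L ι : Type*} [Field K] [Field L] [Algebra K L]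
    {s : Finset ι} {v : ι → K} {P : K[X]} (hv : Set.InjOn v s) (hP : P.degree < s.card) {x : L}
    (hx : ∀ i ∈ s, x ≠ algebraMap K L (v i)) :
    aeval x P / aeval x (Lagrange.nodal s v) =
      ∑ i ∈ s, algebraMap K L (P.eval (v i) / (Lagrange.nodal s v).derivative.eval (v i)) *
        (x - algebraMap K L (v i))⁻¹ := by
  classical
  set w : ι → L := algebraMap K L ∘ v
  have hnodal : (Lagrange.nodal s v).map (algebraMap K L) = Lagrange.nodal s w := by
    simp [Lagrange.nodal, Polynomial.map_prod, w]
  have hxw : ∀ i ∈ s, x ≠ w i := hx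
  have hne : (Lagrange.nodal s w).eval x ≠ 0 := Lagrange.eval_nodal_not_at_node hxw
  have hdeg : (P.map (algebraMap K L)).degree < s.card := by rwa [degree_map]
  have hinj : Set.InjOn w s := (algebraMap K L).injective.comp_injOn hv
  rw [← eval_map_algebraMap, ← eval_map_algebraMap, hnodal, Lagrange.eq_interpolate hinj hdeg,
    Lagrange.eval_interpolate_not_at_node _ hxw, mul_div_cancel_left₀ _ hne]
  refine Finset.sum_congr rfl fun i hi => ?_
  rw [Lagrange.nodalWeight_eq_eval_derivative_nodal hi, ← hnodal, derivative_map]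
  simp only [w, Function.comp_apply, eval_map_apply, map_div₀]
  ring

theorem degree_sub_C_coeff_mul_lt {R : Type*} [CommRing R] {P Q : R[X]} (hQ : Q.Monic)
    (hP : P.natDegree ≤ Q.natDegree) :
    (P - C (P.coeff Q.natDegree) * Q).degree < Q.natDegree := by
  refine (degree_lt_iff_coeff_zero _ _).mpr fun i hi => ?_
  rcases hi.eq_or_lt with rfl | hlt
  · rw [coeff_sub, coeff_C_mul, hQ.coeff_natDegree, mul_one, sub_self]
  · rw [coeff_sub, coeff_C_mul, coeff_eq_zero_of_natDegree_lt (hP.trans_lt hlt),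
      coeff_eq_zero_of_natDegree_lt hlt, mul_zero, sub_zero]

theorem im_mul_conj (a : ℂ) {b : ℂ} (hb : b ≠ 0) :
    (a * conj b).im = Complex.normSq b * (a / b).im := by
  rw [← Complex.im_ofReal_mul, ← Complex.mul_conj]
  congr 1
  field_simp

theorem MapsUpperToLower.of_residue_pos {ι : Type*} {s : Finset ι} {v : ι → ℝ}
    {N : ℝ[X]} (hs : s.Nonempty) (hv : Set.InjOn v s) (hN : N.natDegree ≤ s.card)
    (hres : ∀ i ∈ s, 0 < N.eval (v i) / (Lagrange.nodal s v).derivative.eval (v i)) :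
    MapsUpperToLower N (Lagrange.nodal s v) := by
  intro z hz
  set D := Lagrange.nodal s v
  set κ := N.coeff s.card
  have hne : ∀ i ∈ s, z ≠ (v i : ℂ) := by
    rintro i - rfl
    simp at hz
  have hD : aeval z D ≠ 0 := by
    simpa [D, Lagrange.nodal, Finset.prod_eq_zero_iff, sub_eq_zero] using hne
  have hdeg : (N - C κ * D).degree < s.card := by
    simpa [D, κ] using degree_sub_C_coeff_mul_lt Lagrange.nodal_monic
      (hN.trans_eq (Lagrange.natDegree_nodal (s := s) (v := v)).symm)
  have hsum : aeval z N / aeval z D = (κ : ℂ) + ∑ i ∈ s,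
      ((N.eval (v i) / D.derivative.eval (v i) : ℝ) : ℂ) * (z - (v i : ℂ))⁻¹ := by
    have hpf := aeval_div_aeval_nodal hv hdeg hne
    rw [map_sub, map_mul, aeval_C, sub_div, mul_div_cancel_right₀ _ hD, sub_eq_iff_eq_add'] at hpf
    rw [hpf]
    refine congrArg _ (Finset.sum_congr rfl fun i hi => ?_)
    simp [D, Lagrange.eval_nodal_at_node hi]
  rw [im_mul_conj _ hD, hsum, Complex.add_im, Complex.ofReal_im, zero_add, Complex.im_sum]
  refine mul_neg_of_pos_of_neg (Complex.normSq_pos.mpr hD) (Finset.sum_neg (fun i hi => ?_) hs)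
  rw [Complex.im_ofReal_mul, Complex.inv_im, Complex.sub_im, Complex.ofReal_im, sub_zero]
  exact mul_neg_of_pos_of_neg (hres i hi) (div_neg_of_neg_of_pos (neg_neg_of_pos hz)
    (Complex.normSq_pos.mpr (sub_ne_zero.mpr (hne i hi))))

theorem eval_nodal_div_eval_derivative_nodal_pos {s : ℕ} {α β : Fin s → ℝ} (hα : StrictMono α)
    (hβα : ∀ i, β i < α i) (hαβ : ∀ i j, i < j → α i < β j) (i : Fin s) :
    0 < (Lagrange.nodal Finset.univ β).eval (α i) /
      (Lagrange.nodal Finset.univ α).derivative.eval (α i) := by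
  rw [Lagrange.eval_nodal_derivative_eval_node_eq (Finset.mem_univ i), Lagrange.eval_nodal,
    Lagrange.eval_nodal, ← Finset.mul_prod_erase _ _ (Finset.mem_univ i), mul_div_assoc,
    ← Finset.prod_div_distrib]
  refine mul_pos (sub_pos.mpr (hβα i)) (Finset.prod_pos fun j hj => ?_)
  rcases lt_or_gt_of_ne (Finset.ne_of_mem_erase hj) with hji | hij
  · exact div_pos (sub_pos.mpr ((hβα j).trans (hα hji))) (sub_pos.mpr (hα hji))
  · exact div_pos_of_neg_of_neg (sub_neg.mpr (hαβ i j hij)) (sub_neg.mpr (hα hij))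

end PartialFractions

theorem natDegree_C_sub_X_mul_C_mul_le {P : ℝ[X]} {s : ℕ} (hP : P.natDegree ≤ s) (k b : ℝ) :
    ((C k - X * C b) * P).natDegree ≤ 1 + s :=
  natDegree_mul_le_of_le (by compute_degree) hP

theorem coeff_C_sub_X_mul_C_mul {P : ℝ[X]} {s : ℕ} (hP : P.natDegree ≤ s) (k b : ℝ) :
    ((C k - X * C b) * P).coeff (1 + s) = -(b * P.coeff s) := by
  rw [coeff_mul_add_eq_of_natDegree_le (by compute_degree) hP]
  simp [coeff_C]

theorem natDegree_eq_and_leadingCoeff_mul_pos {P Q : ℝ[X]} {s : ℕ} (hP : P.natDegree ≤ s)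
    (hQ : Q.natDegree ≤ s) (h : 0 < P.coeff s * Q.coeff s) :
    P.natDegree = Q.natDegree ∧ 0 < P.leadingCoeff * Q.leadingCoeff := by
  have hPs : P.natDegree = s :=
    natDegree_eq_of_le_of_coeff_ne_zero hP (left_ne_zero_of_mul h.ne')
  have hQs : Q.natDegree = s :=
    natDegree_eq_of_le_of_coeff_ne_zero hQ (right_ne_zero_of_mul h.ne')
  rw [leadingCoeff, leadingCoeff, hPs, hQs]
  exact ⟨rfl, h⟩

/-- `N / D` maps the open upper half-plane into the open lower one and has a finite positive limit
at infinity. For coprime `N` and `D` this is the relation `N ≪ D`, see `prec_iff`. -/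
structure IsNevanlinnaPair (N D : ℝ[X]) : Prop where
  mapsUpperToLower : MapsUpperToLower N D
  natDegree_eq : N.natDegree = D.natDegree
  leadingCoeff_mul_pos : 0 < N.leadingCoeff * D.leadingCoeff

namespace IsNevanlinnaPair

variable {N D : ℝ[X]}

theorem of_mul_left {P : ℝ[X]} (h : IsNevanlinnaPair (P * N) (P * D)) : IsNevanlinnaPair N D where
  mapsUpperToLower := h.mapsUpperToLower.of_mul_left
  natDegree_eq := by
    have hN := leadingCoeff_ne_zero.mp (left_ne_zero_of_mul h.leadingCoeff_mul_pos.ne')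
    have hD := leadingCoeff_ne_zero.mp (right_ne_zero_of_mul h.leadingCoeff_mul_pos.ne')
    have hdeg := h.natDegree_eq
    rw [natDegree_mul' (by simpa using hN), natDegree_mul' (by simpa using hD)] at hdeg
    exact Nat.add_left_cancel hdeg
  leadingCoeff_mul_pos := by
    have hpos := h.leadingCoeff_mul_pos
    rw [leadingCoeff_mul, leadingCoeff_mul, mul_mul_mul_comm] at hpos
    exact pos_of_mul_pos_right hpos (mul_self_nonneg _)

theorem append_mass (h : IsNevanlinnaPair N D) {m k b : ℝ} (hk : 0 < k) (hm : 0 ≤ m) (hb : 0 ≤ b)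
    (hmb : 0 < m + b) :
    IsNevanlinnaPair ((C k - X * C b) * N - X * D)
      ((C k - X * C b) * D + C m * ((C k - X * C b) * N - X * D)) := by
  set s := D.natDegree
  set c := D.leadingCoeff
  set d := N.leadingCoeff
  set N' := (C k - X * C b) * N - X * D
  have hN : N.natDegree ≤ s := h.natDegree_eq.le
  have hNs : N.coeff s = d := congrArg N.coeff h.natDegree_eq.symm
  have hN'deg : N'.natDegree ≤ 1 + s := (natDegree_sub_le_of_le
    (natDegree_C_sub_X_mul_C_mul_le hN k b)
    (natDegree_mul_le_of_le natDegree_X_le le_rfl)).trans_eq (max_self _)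
  have hD'deg : ((C k - X * C b) * D + C m * N').natDegree ≤ 1 + s := (natDegree_add_le_of_le
    (natDegree_C_sub_X_mul_C_mul_le le_rfl k b)
    ((natDegree_C_mul_le _ _).trans hN'deg)).trans_eq (max_self _)
  have hN'coeff : N'.coeff (1 + s) = -(b * d + c) := by
    rw [coeff_sub, coeff_C_sub_X_mul_C_mul hN, hNs, add_comm 1 s, coeff_X_mul, coeff_natDegree]
    ring
  have hD'coeff : ((C k - X * C b) * D + C m * N').coeff (1 + s) =
      -(b * c + m * (b * d + c)) := by
    rw [coeff_add, coeff_C_mul, coeff_C_sub_X_mul_C_mul le_rfl, hN'coeff, coeff_natDegree]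
    ring
  have hdc : 0 < d * c := h.leadingCoeff_mul_pos
  have hbdc : 0 < (b * d + c) * c := by
    nlinarith [sq_pos_of_ne_zero (right_ne_zero_of_mul hdc.ne'), mul_nonneg hb hdc.le]
  have hpos : 0 < N'.coeff (1 + s) * ((C k - X * C b) * D + C m * N').coeff (1 + s) := by
    have hsq : 0 < (b * d + c) ^ 2 := sq_pos_of_ne_zero (left_ne_zero_of_mul hbdc.ne')
    rw [hN'coeff, hD'coeff]
    rcases hm.eq_or_lt with rfl | hm
    · nlinarith [mul_pos (by linarith : 0 < b) hbdc]
    · nlinarith [mul_pos hm hsq, mul_nonneg hb hbdc.le]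
  obtain ⟨hdegree, hlc⟩ := natDegree_eq_and_leadingCoeff_mul_pos hN'deg hD'deg hpos
  exact ⟨(h.mapsUpperToLower.mul_sub_X_mul hk b).add_C_mul m, hdegree, hlc⟩

theorem natDegree_pos (h : IsNevanlinnaPair N D) : 0 < D.natDegree := by
  by_contra! hD
  obtain ⟨c, rfl⟩ := natDegree_eq_zero.mp (Nat.le_zero.mp hD)
  obtain ⟨d, rfl⟩ := natDegree_eq_zero.mp (h.natDegree_eq.trans (Nat.le_zero.mp hD))
  have him := h.mapsUpperToLower Complex.I (by simp)
  simp at him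

theorem derivative_mul_eval_pos (h : IsNevanlinnaPair N D) (hcop : IsCoprime N D) {x : ℝ}
    (hx : D.eval x = 0) : 0 < (N * D).derivative.eval x := by
  have hN : N.eval x ≠ 0 := by
    simpa [hx] using aeval_ne_zero_of_isCoprime hcop x
  simpa [hx] using h.mapsUpperToLower.eval_mul_derivative_pos hx hN

theorem exists_isRoot_between (h : IsNevanlinnaPair N D) (hcop : IsCoprime N D) {x : ℝ}
    (hx : D.eval x = 0) :
    ∃ y < x, N.eval y = 0 ∧ ∀ z < x, D.eval z = 0 → z < y := by
  have hQ {z : ℝ} (hz : D.eval z = 0) : (N * D).eval z = 0 := by rw [eval_mul, hz, mul_zero]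
  have hQ' {z : ℝ} (hz : D.eval z = 0) := h.derivative_mul_eval_pos hcop hz
  by_cases! hleast : ∀ z < x, D.eval z ≠ 0
  · have hdeg : Even (N * D).natDegree := by
      rw [natDegree_mul' h.leadingCoeff_mul_pos.ne', h.natDegree_eq]
      exact ⟨_, rfl⟩
    have hlc : 0 ≤ (N * D).leadingCoeff := by
      rw [leadingCoeff_mul]
      exact h.leadingCoeff_mul_pos.le
    obtain ⟨y, hyx, hy⟩ := exists_isRoot_lt_of_derivative_pos hdeg hlc (hQ hx) (hQ' hx)
    exact ⟨y, hyx, (root_mul.mp hy).resolve_right (hleast y hyx),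
      fun z hzx hz => absurd hz (hleast z hzx)⟩
  · have hfin : {z | z < x ∧ D.eval z = 0}.Finite :=
      (finite_setOfPred_isRoot h.mapsUpperToLower.ne_zero).subset fun z hz => hz.2
    obtain ⟨z, ⟨hzx, hz⟩, hmax⟩ := Set.exists_max_image _ id hfin hleast
    obtain ⟨y, ⟨hzy, hyx⟩, hy⟩ :=
      exists_isRoot_Ioo_of_derivative_pos hzx (hQ hx) (hQ' hx) (hQ hz) (hQ' hz)
    have hDy : ¬D.IsRoot y := fun hDy => hzy.not_ge (hmax y ⟨hyx, hDy⟩)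
    exact ⟨y, hyx, (root_mul.mp hy).resolve_right hDy,
      fun w hwx hw => (hmax w ⟨hwx, hw⟩).trans_lt hzy⟩

theorem prec (h : IsNevanlinnaPair N D) (hcop : IsCoprime N D) : Prec N D := by
  have h0 := h.mapsUpperToLower.ne_zero
  have hcard : D.roots.toFinset.card = D.natDegree :=
    card_roots_toFinset_of_derivative_ne_zero h.mapsUpperToLower.splits h0 fun x hx hx' => by
      simpa [hx, hx'] using h.derivative_mul_eval_pos hcop hx
  let α := D.roots.toFinset.orderEmbOfFin hcard
  have hα (i) : D.eval (α i) = 0 :=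
    isRoot_of_mem_roots (Multiset.mem_toFinset.mp (Finset.orderEmbOfFin_mem _ hcard i))
  choose β hβα hβ hαβ using fun i => h.exists_isRoot_between hcop (hα i)
  have hβmono : StrictMono β := fun i j hij =>
    (hβα i).trans (hαβ j (α i) (α.strictMono hij) (hα i))
  refine ⟨D.natDegree, D.leadingCoeff, N.leadingCoeff, α, β, h.natDegree_pos, ?_, α.strictMono,
    hβmono, ?_, ?_, hβα, fun i hi => hαβ _ _ (α.strictMono (Nat.lt_succ_self i)) (hα i)⟩
  · rw [mul_comm]
    exact h.leadingCoeff_mul_pos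
  · exact eq_C_leadingCoeff_mul_prod_X_sub_C α.injective hα (by simp)
  · exact eq_C_leadingCoeff_mul_prod_X_sub_C hβmono.injective hβ (by simp [h.natDegree_eq])

end IsNevanlinnaPair

theorem isCoprime_X_iff {K : Type*} [Field K] {P : K[X]} : IsCoprime X P ↔ P.eval 0 ≠ 0 := by
  rw [irreducible_X.coprime_iff_not_dvd, X_dvd_iff, coeff_zero_eq_eval_zero]

theorem prec_iff {N D : ℝ[X]} : Prec N D ↔ IsNevanlinnaPair N D ∧ IsCoprime N D := by
  refine ⟨?_, fun h => h.1.prec h.2⟩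
  rintro ⟨s, c, d, α, β, hs, hcd, hα, hβ, rfl, rfl, hβα, hnext⟩
  have hαβ : ∀ i j, i < j → α i < β j := fun i j hij =>
    (hnext i (by omega)).trans_le (hβ.monotone (Fin.mk_le_of_le_val hij))
  have hne : ∀ i j, β j ≠ α i := fun i j =>
    (lt_or_ge i j).elim (fun hij => (hαβ i j hij).ne')
      fun hji => ((hβα j).trans_le (hα.monotone hji)).ne
  have hc : c ≠ 0 := left_ne_zero_of_mul hcd.ne'
  have hd : d ≠ 0 := right_ne_zero_of_mul hcd.ne'
  have hunit {a : ℝ} (ha : a ≠ 0) : IsUnit (C a) := isUnit_C.mpr ha.isUnit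
  refine ⟨⟨MapsUpperToLower.C_mul ?_ hcd, ?_, ?_⟩, ?_⟩
  · have hnonempty : (Finset.univ : Finset (Fin s)).Nonempty := ⟨⟨0, hs⟩, Finset.mem_univ _⟩
    exact .of_residue_pos hnonempty hα.injective.injOn Lagrange.natDegree_nodal.le
      fun i _ => eval_nodal_div_eval_derivative_nodal_pos hα hβα hαβ i
  · rw [natDegree_C_mul hd, natDegree_C_mul hc, natDegree_finsetProd_X_sub_C_eq_card,
      natDegree_finsetProd_X_sub_C_eq_card]
  · simpa [leadingCoeff_mul, (monic_prod_X_sub_C _ _).leadingCoeff, mul_comm] using hcd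
  · rw [isCoprime_mul_unit_left_left (hunit hd), isCoprime_mul_unit_left_right (hunit hc)]
    exact IsCoprime.prod_left fun j _ => IsCoprime.prod_right fun i _ =>
      isCoprime_X_sub_C_of_isUnit_sub (sub_ne_zero.mpr (hne i j)).isUnit

theorem prec_div_gcd_iff {f g : ℝ[X]} :
    Prec (-X * g / gcd f g) (f / gcd f g) ↔
      ∃ e F G : ℝ[X], e ≠ 0 ∧ f = e * F ∧ g = e * G ∧ F.eval 0 ≠ 0 ∧
        IsNevanlinnaPair (-X * G) F := by
  rw [EuclideanDomain.mul_div_assoc _ (gcd_dvd_right f g), prec_iff]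
  constructor
  · rintro ⟨hpair, hcop⟩
    have hgcd : gcd f g ≠ 0 := fun h0 => hpair.mapsUpperToLower.ne_zero (by simp [h0])
    exact ⟨gcd f g, f / gcd f g, g / gcd f g, hgcd,
      (EuclideanDomain.mul_div_cancel' hgcd (gcd_dvd_left f g)).symm,
      (EuclideanDomain.mul_div_cancel' hgcd (gcd_dvd_right f g)).symm,
      isCoprime_X_iff.mp ((IsCoprime.neg_left_iff _ _).mp hcop.of_mul_left_left), hpair⟩
  · rintro ⟨e, F, G, he, hf, hg, hF0, hpair⟩
    have hgcd : gcd f g ≠ 0 :=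
      gcd_ne_zero_of_left (hf ▸ mul_ne_zero he hpair.mapsUpperToLower.ne_zero)
    obtain ⟨q, hq⟩ : e ∣ gcd f g := dvd_gcd ⟨F, hf⟩ ⟨G, hg⟩
    have hcancel {P Q : ℝ[X]} (hP : P = e * Q) (hdvd : gcd f g ∣ P) :
        Q = q * (P / gcd f g) := by
      refine mul_left_cancel₀ he ?_
      rw [← mul_assoc, ← hq, EuclideanDomain.mul_div_cancel' hgcd hdvd, hP]
    have hF := hcancel hf (gcd_dvd_left f g)
    have hG := hcancel hg (gcd_dvd_right f g)
    have hX : IsCoprime X (f / gcd f g) := (hF ▸ isCoprime_X_iff.mpr hF0).of_mul_right_right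
    rw [hG, mul_left_comm, hF] at hpair
    exact ⟨hpair.of_mul_left,
      hX.neg_left.mul_left (isCoprime_div_gcd_div_gcd_of_gcd_ne_zero hgcd).symm⟩

theorem stmt_4_general (m k b : ℕ → ℝ) (j : ℕ) (hj : 1 ≤ j) (hk : 0 < k (j + 1))
    (hm : 0 ≤ m (j + 1)) (hb : 0 ≤ b (j + 1)) (hmb : 0 < m (j + 1) + b (j + 1))
    (hyp : Prec (-X * gpoly m k b j / gcd (fpoly m k b j) (gpoly m k b j))
      (fpoly m k b j / gcd (fpoly m k b j) (gpoly m k b j))) :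
    Prec (-X * gpoly m k b (j + 1) / gcd (fpoly m k b (j + 1)) (gpoly m k b (j + 1)))
      (fpoly m k b (j + 1) / gcd (fpoly m k b (j + 1)) (gpoly m k b (j + 1))) := by
  obtain ⟨i, rfl⟩ := Nat.exists_eq_add_of_le' hj
  obtain ⟨e, F, G, he, hf, hg, hF0, hpair⟩ := prec_div_gcd_iff.mp hyp
  set p := springDamper k b (i + 2)
  set G' := F + p * G
  set F' := p * F + C (m (i + 2)) * (-X * G')
  have hg' : gpoly m k b (i + 2) = e * G' := by
    rw [gpoly_add_two, hf, hg]
    ring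
  have hf' : fpoly m k b (i + 2) = e * F' := by
    rw [fpoly_add_two, hg', hf]
    ring
  have hF'0 : F'.eval 0 ≠ 0 := by
    simpa [F', p, springDamper] using ⟨hk.ne', hF0⟩
  have hN : -X * G' = p * (-X * G) - X * F := by ring
  have hpair' : IsNevanlinnaPair (-X * G') F' := by
    simp only [F', hN]
    exact hpair.append_mass hk hm hb hmb
  exact prec_div_gcd_iff.mpr ⟨e, F', G', he, hf', hg', hF'0, hpair'⟩

/-- Lemma `two` (main part): the interlacing property propagates from step `j`
to step `j+1`. Here `gcd` is the monic-normalized gcd in `ℝ[λ]`. -/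
theorem stmt_4 (n : ℕ) (m k b : ℕ → ℝ)
    (hm : ∀ j, 1 ≤ j → j ≤ n → 0 < m j)
    (hk : ∀ j, 1 ≤ j → j ≤ n → 0 < k j)
    (hb : ∀ j, 1 ≤ j → j ≤ n → 0 ≤ b j)
    (j : ℕ) (hj1 : 1 ≤ j) (hj2 : j ≤ n - 1)
    (hyp : Prec (-Polynomial.X * gpoly m k b j / gcd (fpoly m k b j) (gpoly m k b j))
      (fpoly m k b j / gcd (fpoly m k b j) (gpoly m k b j))) :
    Prec
      (-Polynomial.X * gpoly m k b (j + 1) /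
        gcd (fpoly m k b (j + 1)) (gpoly m k b (j + 1)))
      (fpoly m k b (j + 1) / gcd (fpoly m k b (j + 1)) (gpoly m k b (j + 1))) := by
  obtain ⟨hm', hk', hb'⟩ : 0 < m (j + 1) ∧ 0 < k (j + 1) ∧ 0 ≤ b (j + 1) := by grind
  exact stmt_4_general m k b j hj1 hk' hm'.le hb' (by linarith) hyp
end

section
/- Assume m_j > 0, k_j > 0, b_j ≥ 0 for all j = 1,…,n. Fix j ∈ [1, n−1] and suppose (−λ)·g_j(λ)/(f_j, g_j) ≪ f_j(λ)/(f_j, g_j). If b_{j+1} ≠ 0 and the linear polynomial k_{j+1} − λ·b_{j+1} divides f_j(λ)/(f_j, g_j), then (f_{j+1}, g_{j+1}) = (f_j, g_j)·(λ − k_{j+1}/b_{j+1}) and f_{j+1}(λ)/(f_{j+1}, g_{j+1}) ≪ −f_j(λ)/(f_j, g_j). -/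
open Polynomial

/-!
Expanding determinants along the last row and column gives
`g_{j+1} = f_j + (k_{j+1} - λ b_{j+1}) g_j` and
`f_{j+1} = (k_{j+1} - λ b_{j+1}) f_j - m_{j+1} λ g_{j+1}`.

Interlacing is a sign condition: if `f` has only real roots, `deg P ≤ deg f` and `P f > 0` at a
point to the left of all the roots of `f`, then `P ≪ f` as soon as `P f' > 0` at every root of `f`;
conversely `P ≪ f` implies `P f' > 0` there.

Write `d = (f_j, g_j)`, `F = f_j / d`, `G = g_j / d`, `b = b_{j+1}`, `m = m_{j+1}`,
`r = k_{j+1} / b` and `F = (λ - r) H`. The recurrences give `f_{j+1} = d (λ - r) P` and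
`g_{j+1} = d (λ - r) Q`, where `Q = H - b G` and `P = -b F - m λ Q`. At a root `x > 0` of `F`,
`P (-F)' = m (x H F' + b (-x G F'))`, in which `H F' = H² ≥ 0` and `-x G F' > 0` by hypothesis;
hence `P ≪ -F`. In particular `P` is coprime to `F`, hence to `Q`, so `d (λ - r)` is the gcd.
-/

section Tridiagonal

variable {R : Type*} [CommRing R] (a u l : ℕ → R)

/-- The tridiagonal matrix of order `n` with diagonal `a`, superdiagonal `u` and subdiagonal `l`,
each indexed from `0`. -/
def tridiagonal (n : ℕ) : Matrix (Fin n) (Fin n) R :=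
  Matrix.of fun r c =>
    if (r : ℕ) = c then a r
    else if (r : ℕ) + 1 = c then u r
    else if (c : ℕ) + 1 = r then l c
    else 0

theorem tridiagonal_submatrix_castSucc (n : ℕ) :
    (tridiagonal a u l (n + 1)).submatrix Fin.castSucc Fin.castSucc = tridiagonal a u l n :=
  rfl

theorem tridiagonal_congr {a a' : ℕ → R} {n : ℕ} (h : ∀ i < n, a i = a' i) :
    tridiagonal a u l n = tridiagonal a' u l n := by
  ext r c
  simp only [tridiagonal, Matrix.of_apply, h r r.isLt]

theorem det_tridiagonal_submatrix_castSucc_succAbove (n : ℕ) :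
    ((tridiagonal a u l (n + 2)).submatrix Fin.castSucc (Fin.last n).castSucc.succAbove).det =
      u n * (tridiagonal a u l n).det := by
  have hminor : ((tridiagonal a u l (n + 2)).submatrix Fin.castSucc
      (Fin.last n).castSucc.succAbove).submatrix Fin.castSucc Fin.castSucc =
        tridiagonal a u l n := by
    ext r c
    have hc : (Fin.last n).castSucc.succAbove c.castSucc = c.castSucc.castSucc :=
      Fin.succAbove_of_castSucc_lt _ _ (by simp [Fin.lt_def])
    simp [tridiagonal, hc]
  have hlast (i : Fin n) :
      tridiagonal a u l (n + 2) i.castSucc.castSucc (Fin.last (n + 1)) = 0 := by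
    have := i.isLt
    simp only [tridiagonal, Matrix.of_apply, Fin.val_castSucc, Fin.val_last]
    grind
  rw [Matrix.det_succ_column _ (Fin.last n), Fin.sum_univ_castSucc, Finset.sum_eq_zero]
  · simp only [Fin.succAbove_last, hminor]
    simp [tridiagonal]
  · intro i _
    simp [hlast]

theorem det_tridiagonal_add_two (n : ℕ) :
    (tridiagonal a u l (n + 2)).det =
      a (n + 1) * (tridiagonal a u l (n + 1)).det - u n * l n * (tridiagonal a u l n).det := by
  have hfar (i : Fin n) :
      tridiagonal a u l (n + 2) (Fin.last (n + 1)) i.castSucc.castSucc = 0 := by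
    have := i.isLt
    simp only [tridiagonal, Matrix.of_apply, Fin.val_castSucc, Fin.val_last]
    grind
  have hleft : tridiagonal a u l (n + 2) (Fin.last (n + 1)) (Fin.last n).castSucc = l n := by
    simp only [tridiagonal, Matrix.of_apply, Fin.val_castSucc, Fin.val_last]
    grind
  have hdiag : tridiagonal a u l (n + 2) (Fin.last (n + 1)) (Fin.last (n + 1)) = a (n + 1) := by
    simp [tridiagonal]
  rw [Matrix.det_succ_row _ (Fin.last (n + 1)), Fin.sum_univ_castSucc, Fin.sum_univ_castSucc,
    Finset.sum_eq_zero fun i _ => by simp [hfar]]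
  simp only [Fin.succAbove_last, tridiagonal_submatrix_castSucc,
    det_tridiagonal_submatrix_castSucc_succAbove, hleft, hdiag, Fin.val_last, Fin.val_castSucc,
    (Odd.neg_one_pow ⟨n, by ring⟩ : (-1 : R) ^ (n + 1 + n) = -1),
    (Even.neg_one_pow ⟨n + 1, rfl⟩ : (-1 : R) ^ (n + 1 + (n + 1)) = 1)]
  ring

theorem det_tridiagonal_update_last (n : ℕ) (x : R) :
    (tridiagonal (Function.update a n x) u l (n + 1)).det =
      (tridiagonal a u l (n + 1)).det - (a n - x) * (tridiagonal a u l n).det := by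
  cases n with
  | zero => simp [tridiagonal]
  | succ n =>
    have hlt {i : ℕ} (hi : i < n + 1) : Function.update a (n + 1) x i = a i :=
      Function.update_of_ne hi.ne _ _
    rw [det_tridiagonal_add_two, det_tridiagonal_add_two, Function.update_self,
      tridiagonal_congr u l fun i hi => hlt hi,
      tridiagonal_congr u l fun i hi => hlt (hi.trans n.lt_succ_self)]
    ring

end Tridiagonal

section Recurrences

variable (m k b : ℕ → ℝ)

/-- The pencil `p_i(λ) = k_i - λ b_i` of the `i`-th link of the chain. -/
noncomputable def linkPoly (i : ℕ) : ℝ[X] :=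
  C (k i) - C (b i) * X

/-- The pencil of two adjacent links and the mass between them: for `i < j - 1`, the
(0-indexed) diagonal entry `(i, i)` of `K_j - λ (M_j + B_j)`. -/
noncomputable def nodePoly (i : ℕ) : ℝ[X] :=
  linkPoly k b (i + 1) + linkPoly k b (i + 2) - C (m (i + 1)) * X

theorem gpoly_succ_eq_det_tridiagonal (j : ℕ) :
    gpoly m k b (j + 1) = (tridiagonal (nodePoly m k b) (fun i => -linkPoly k b (i + 2))
      (fun i => -linkPoly k b (i + 2)) j).det := by
  unfold gpoly
  change Matrix.det (n := Fin j) _ = _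
  congr 1
  ext1 r c
  have hr : (r : ℕ) ≠ j := r.isLt.ne
  simp only [sysMat, triMat, tridiagonal, nodePoly, linkPoly, Matrix.sub_apply, Matrix.map_apply,
    Matrix.smul_apply, Matrix.add_apply, Matrix.of_apply, Matrix.diagonal_apply, Fin.ext_iff,
    smul_eq_mul, Nat.add_sub_cancel, Matrix.submatrix_apply, Fin.val_castLE, hr]
  split_ifs <;> grind

theorem fpoly_succ_eq_det_tridiagonal (j : ℕ) :
    fpoly m k b (j + 1) = (tridiagonal
      (Function.update (nodePoly m k b) j (linkPoly k b (j + 1) - C (m (j + 1)) * X))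
      (fun i => -linkPoly k b (i + 2)) (fun i => -linkPoly k b (i + 2)) (j + 1)).det := by
  unfold fpoly
  congr 1
  ext1 r c
  simp only [sysMat, triMat, tridiagonal, nodePoly, linkPoly, Matrix.sub_apply, Matrix.map_apply,
    Matrix.smul_apply, Matrix.add_apply, Matrix.of_apply, Matrix.diagonal_apply, Fin.ext_iff,
    smul_eq_mul, Nat.add_sub_cancel, Function.update_apply]
  split_ifs <;> grind

theorem fpoly_zero : fpoly m k b 0 = 1 :=
  Matrix.det_isEmpty (n := Fin 0)

theorem gpoly_zero : gpoly m k b 0 = 1 :=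
  Matrix.det_isEmpty (n := Fin 0)

theorem gpoly_one : gpoly m k b 1 = 1 :=
  Matrix.det_isEmpty (n := Fin 0)

theorem gpoly_add_three (j : ℕ) :
    gpoly m k b (j + 3) = nodePoly m k b (j + 1) * gpoly m k b (j + 2) -
      linkPoly k b (j + 2) ^ 2 * gpoly m k b (j + 1) := by
  simp only [gpoly_succ_eq_det_tridiagonal, det_tridiagonal_add_two]
  ring

theorem gpoly_succ {j : ℕ} (hj : 1 ≤ j) :
    gpoly m k b (j + 1) = fpoly m k b j + linkPoly k b (j + 1) * gpoly m k b j := by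
  obtain ⟨j, rfl⟩ := Nat.exists_eq_add_of_le' hj
  rw [fpoly_succ_eq_det_tridiagonal, det_tridiagonal_update_last,
    ← gpoly_succ_eq_det_tridiagonal, ← gpoly_succ_eq_det_tridiagonal, nodePoly]
  ring

theorem fpoly_succ (j : ℕ) :
    fpoly m k b (j + 1) =
      linkPoly k b (j + 1) * fpoly m k b j - C (m (j + 1)) * X * gpoly m k b (j + 1) := by
  match j with
  | 0 => simp [fpoly_succ_eq_det_tridiagonal, tridiagonal, fpoly_zero, gpoly_one]
  | j + 1 =>
    have hf := gpoly_succ m k b (Nat.le_add_left 1 j)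
    have hf' := gpoly_succ m k b (Nat.le_add_left 1 (j + 1))
    have hg := gpoly_add_three m k b j
    rw [nodePoly] at hg
    linear_combination hg - hf' + linkPoly k b (j + 2) * hf

variable {m k b}

theorem eval_fpoly_pos_and_eval_gpoly_pos {n : ℕ} (hm : ∀ i, 1 ≤ i → i ≤ n → 0 ≤ m i)
    (hk : ∀ i, 1 ≤ i → i ≤ n → 0 < k i) (hb : ∀ i, 1 ≤ i → i ≤ n → 0 ≤ b i)
    {x : ℝ} (hx : x ≤ 0) {j : ℕ} (hj : j ≤ n) :
    0 < (fpoly m k b j).eval x ∧ 0 < (gpoly m k b j).eval x := by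
  induction j with
  | zero => simp [fpoly_zero, gpoly_zero]
  | succ j ih =>
    obtain ⟨hf, hg⟩ := ih (Nat.le_of_succ_le hj)
    have hlink : 0 < (linkPoly k b (j + 1)).eval x := by
      simp only [linkPoly, eval_sub, eval_mul, eval_C, eval_X]
      linarith [hk _ j.succ_pos hj, mul_nonpos_of_nonneg_of_nonpos (hb _ j.succ_pos hj) hx]
    have hmass : m (j + 1) * x ≤ 0 := mul_nonpos_of_nonneg_of_nonpos (hm _ j.succ_pos hj) hx
    have hg' : 0 < (gpoly m k b (j + 1)).eval x := by
      rcases j.eq_zero_or_pos with rfl | hj0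
      · simp [gpoly_one]
      · rw [gpoly_succ m k b hj0, eval_add, eval_mul]
        positivity
    refine ⟨?_, hg'⟩
    rw [fpoly_succ, eval_sub, eval_mul, eval_mul, eval_mul, eval_C, eval_X]
    linarith [mul_pos hlink hf, mul_nonpos_of_nonpos_of_nonneg hmass hg'.le]

end Recurrences

section Interlacing

open Lagrange

theorem exists_isRoot_Ioo {P : ℝ[X]} {x y : ℝ} (hxy : x < y) (h : P.eval x * P.eval y < 0) :
    ∃ z ∈ Set.Ioo x y, P.IsRoot z := by
  have hcont : ContinuousOn (fun t => P.eval t) (Set.Icc x y) := P.continuous.continuousOn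
  rcases mul_neg_iff.1 h with ⟨hx, hy⟩ | ⟨hx, hy⟩
  · exact intermediate_value_Ioo' hxy.le hcont ⟨hy, hx⟩
  · exact intermediate_value_Ioo hxy.le hcont ⟨hx, hy⟩

theorem derivative_nodal_mul_derivative_nodal_neg {K : Type*} [Field K] [LinearOrder K]
    [IsStrictOrderedRing K] {n : ℕ} {γ : Fin (n + 1) → K}
    (hγ : StrictMono γ) (i : Fin n) :
    (derivative (nodal Finset.univ γ)).eval (γ i.castSucc) *
      (derivative (nodal Finset.univ γ)).eval (γ i.succ) < 0 := by
  have hlt : γ i.castSucc < γ i.succ := hγ i.castSucc_lt_succ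
  have hrest : 0 < ∏ l ∈ (Finset.univ.erase i.castSucc).erase i.succ,
      (γ i.castSucc - γ l) * (γ i.succ - γ l) := by
    refine Finset.prod_pos fun l hl => ?_
    obtain ⟨hsucc, hcast, -⟩ := by simpa only [Finset.mem_erase] using hl
    rcases lt_or_gt_of_ne hcast with hl | hl
    · exact mul_pos (sub_pos.2 (hγ hl)) (sub_pos.2 ((hγ hl).trans hlt))
    · have hl' : γ i.succ < γ l := hγ (lt_of_le_of_ne (Fin.castSucc_lt_iff_succ_le.1 hl) hsucc.symm)
      exact mul_pos_of_neg_of_neg (sub_neg.2 (hlt.trans hl')) (sub_neg.2 hl')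
  have hcast : i.castSucc ∈ Finset.univ.erase i.succ := by simp [i.castSucc_lt_succ.ne]
  have hsucc : i.succ ∈ Finset.univ.erase i.castSucc := by simp [i.castSucc_lt_succ.ne']
  rw [eval_nodal_derivative_eval_node_eq (Finset.mem_univ _),
    eval_nodal_derivative_eval_node_eq (Finset.mem_univ _), eval_nodal, eval_nodal,
    ← Finset.mul_prod_erase _ _ hcast, ← Finset.mul_prod_erase _ _ hsucc,
    Finset.erase_right_comm (a := i.succ)]
  rw [Finset.prod_mul_distrib] at hrest
  nlinarith [mul_pos (mul_pos (sub_pos.2 hlt) (sub_pos.2 hlt)) hrest]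

theorem exists_isRoot_between_nodes {n : ℕ} {γ : Fin (n + 1) → ℝ} (hγ : StrictMono γ) {P : ℝ[X]}
    (hP : ∀ i, 0 < P.eval (γ i) * (derivative (nodal Finset.univ γ)).eval (γ i)) (i : Fin n) :
    ∃ z ∈ Set.Ioo (γ i.castSucc) (γ i.succ), P.IsRoot z := by
  refine exists_isRoot_Ioo (hγ i.castSucc_lt_succ) ?_
  have hprod := mul_pos (hP i.castSucc) (hP i.succ)
  rw [mul_mul_mul_comm] at hprod
  exact neg_of_mul_pos_left hprod (derivative_nodal_mul_derivative_nodal_neg hγ i).le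

theorem eq_C_mul_nodal_of_isRoot {K : Type*} [Field K] {s : ℕ} {P : K[X]}
    (hP : P.natDegree ≤ s) {δ : Fin s → K}
    (hδ : Function.Injective δ) (hroot : ∀ i, P.IsRoot (δ i)) :
    P = C P.leadingCoeff * nodal Finset.univ δ := by
  refine eq_leadingCoeff_mul_of_monic_of_dvd_of_natDegree_le nodal_monic ?_
    (by simpa [natDegree_nodal] using hP)
  exact Finset.prod_dvd_of_coprime ((pairwise_coprime_X_sub_C hδ).set_pairwise _)
    fun i _ => dvd_iff_isRoot.2 (hroot i)

theorem exists_strictMono_eq_C_mul_nodal {K : Type*} [Field K] [LinearOrder K] {f : K[X]}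
    (hf : f.Splits) (hnodup : f.roots.Nodup) :
    ∃ α : Fin f.natDegree → K, StrictMono α ∧ f = C f.leadingCoeff * nodal Finset.univ α := by
  have hcard : f.roots.toFinset.card = f.natDegree := by
    rw [Multiset.toFinset_card_of_nodup hnodup, hf.natDegree_eq_card_roots]
  have hα := (f.roots.toFinset.orderEmbOfFin hcard).strictMono
  refine ⟨_, hα, eq_C_mul_nodal_of_isRoot le_rfl hα.injective fun i => ?_⟩
  exact isRoot_of_mem_roots (Multiset.mem_toFinset.1 (Finset.orderEmbOfFin_mem _ hcard i))

theorem nodup_roots_of_eval_derivative_ne_zero {R : Type*} [CommRing R] [IsDomain R] {f : R[X]}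
    (h : ∀ x, f.IsRoot x → (derivative f).eval x ≠ 0) : f.roots.Nodup := by
  classical
  rcases eq_or_ne f 0 with rfl | hf
  · simp
  refine Multiset.nodup_iff_count_le_one.2 fun x => ?_
  rw [count_roots, ← not_lt, one_lt_rootMultiplicity_iff_isRoot hf]
  exact fun ⟨hx, hx'⟩ => h x hx hx'

theorem nodal_cons {R : Type*} [CommRing R] {n : ℕ} (x : R) (v : Fin n → R) :
    nodal Finset.univ (Fin.cons x v : Fin (n + 1) → R) = (X - C x) * nodal Finset.univ v := by
  simp only [nodal, Fin.prod_univ_succ, Fin.cons_zero, Fin.cons_succ]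

theorem prec_C_mul_nodal {s : ℕ} (hs : 0 < s) {c u : ℝ} {α : Fin s → ℝ} (hα : StrictMono α)
    (hu : ∀ i, u < α i) {P : ℝ[X]} (hdeg : P.natDegree ≤ s)
    (hPu : 0 < P.eval u * (C c * nodal Finset.univ α).eval u)
    (hP : ∀ i, 0 < P.eval (α i) * (derivative (C c * nodal Finset.univ α)).eval (α i)) :
    Prec P (C c * nodal Finset.univ α) := by
  simp only [derivative_C_mul, eval_mul, eval_C] at hPu hP
  -- Adding the node `u` turns the sign condition at `u` into one more sign change of `P`.
  let γ : Fin (s + 1) → ℝ := Fin.cons u α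
  have hγ : StrictMono γ := Fin.strictMono_cons.2 ⟨hu, hα⟩
  have hsign i : 0 < (C c * P).eval (γ i) * (derivative (nodal Finset.univ γ)).eval (γ i) := by
    rw [nodal_cons]
    simp only [derivative_mul, derivative_X_sub_C, eval_add, eval_mul, eval_sub, eval_X, eval_C,
      one_mul]
    cases i using Fin.cases with
    | zero =>
      simp only [γ, Fin.cons_zero, sub_self, zero_mul, add_zero]
      linarith
    | succ i =>
      simp only [γ, Fin.cons_succ, eval_nodal_at_node (Finset.mem_univ i), zero_add]
      linarith [mul_pos (sub_pos.2 (hu i)) (hP i)]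
  have hc : c ≠ 0 := left_ne_zero_of_mul (right_ne_zero_of_mul hPu.ne')
  choose δ hδ hδroot using exists_isRoot_between_nodes hγ hsign
  have hδmono : StrictMono δ := fun i i' hii' =>
    (hδ i).2.trans_le ((hγ.monotone (Fin.succ_le_castSucc_iff.2 hii')).trans (hδ i').1.le)
  have hPδ : P = C P.leadingCoeff * nodal Finset.univ δ :=
    eq_C_mul_nodal_of_isRoot hdeg hδmono.injective fun i => by
      simpa [hc] using hδroot i
  refine ⟨s, c, P.leadingCoeff, α, δ, hs, ?_, hα, hδmono, rfl, hPδ, fun i => (hδ i).2,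
    fun i h => ?_⟩
  · have huδ i : u < δ i := (hγ.monotone (Fin.zero_le i.castSucc)).trans_lt (hδ i).1
    have hpos : 0 < ∏ i, (u - δ i) * (u - α i) :=
      Finset.prod_pos fun i _ => mul_pos_of_neg_of_neg (sub_neg.2 (huδ i)) (sub_neg.2 (hu i))
    rw [Finset.prod_mul_distrib, ← eval_nodal, ← eval_nodal] at hpos
    rw [hPδ, eval_mul, eval_C, mul_mul_mul_comm, mul_comm P.leadingCoeff] at hPu
    exact pos_of_mul_pos_left hPu hpos.le
  · exact (hδ ⟨i + 1, h⟩).1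

theorem prec_of_splits {f P : ℝ[X]} (hf : f.Splits) (hf0 : 0 < f.natDegree)
    (hdeg : P.natDegree ≤ f.natDegree) {u : ℝ} (hu : ∀ x, f.IsRoot x → u < x)
    (hPu : 0 < P.eval u * f.eval u)
    (hP : ∀ x, f.IsRoot x → 0 < P.eval x * (derivative f).eval x) : Prec P f := by
  obtain ⟨α, hα, hfα⟩ := exists_strictMono_eq_C_mul_nodal hf
    (nodup_roots_of_eval_derivative_ne_zero fun x hx => right_ne_zero_of_mul (hP x hx).ne')
  have hroot i : f.IsRoot (α i) := by
    rw [hfα, IsRoot, eval_mul, eval_nodal_at_node (Finset.mem_univ i), mul_zero]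
  rw [hfα] at hPu ⊢
  refine prec_C_mul_nodal hf0 hα (fun i => hu _ (hroot i)) hdeg hPu fun i => ?_
  rw [← hfα]
  exact hP _ (hroot i)

theorem Prec.eval_mul_eval_derivative_pos {f g : ℝ[X]} (h : Prec g f) {x : ℝ} (hx : f.IsRoot x) :
    0 < g.eval x * (derivative f).eval x := by
  obtain ⟨s, c, d, α, β, -, hcd, hα, hβ, hf, hg, hβα, hαβ⟩ := h
  change f = C c * nodal Finset.univ α at hf
  change g = C d * nodal Finset.univ β at hg
  have hc : c ≠ 0 := left_ne_zero_of_mul hcd.ne'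
  obtain ⟨i, rfl⟩ : ∃ i, x = α i := by
    simpa [hf, hc, eval_nodal, Finset.prod_eq_zero_iff, sub_eq_zero] using hx
  have hrest : 0 < ∏ l ∈ Finset.univ.erase i, (α i - β l) * (α i - α l) := by
    refine Finset.prod_pos fun l hl => ?_
    rcases lt_or_gt_of_ne (Finset.ne_of_mem_erase hl) with hli | hil
    · exact mul_pos (sub_pos.2 ((hβα l).trans (hα hli))) (sub_pos.2 (hα hli))
    · have hβl : α i < β l :=
        (hαβ i (by omega)).trans_le (hβ.monotone (Fin.le_def.2 (Nat.succ_le_of_lt hil)))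
      exact mul_pos_of_neg_of_neg (sub_neg.2 hβl) (sub_neg.2 (hα hil))
  rw [Finset.prod_mul_distrib] at hrest
  rw [hf, hg, derivative_C_mul, eval_mul, eval_mul, eval_C, eval_C,
    eval_nodal_derivative_eval_node_eq (Finset.mem_univ i), eval_nodal, eval_nodal,
    ← Finset.mul_prod_erase _ _ (Finset.mem_univ i)]
  have := mul_pos hcd (mul_pos (sub_pos.2 (hβα i)) hrest)
  linarith

end Interlacing

section Step

open Lagrange

theorem Prec.splits_right {f g : ℝ[X]} (h : Prec g f) : f.Splits := by
  obtain ⟨s, c, d, α, β, -, -, -, -, rfl, -⟩ := h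
  exact (Splits.prod fun i _ => Splits.X_sub_C (α i)).C_mul c

theorem natDegree_C_mul_nodal {K : Type*} [Field K] {s : ℕ} {c : K} (hc : c ≠ 0) (α : Fin s → K) :
    (C c * nodal Finset.univ α).natDegree = s := by
  rw [natDegree_C_mul hc, natDegree_nodal, Finset.card_univ, Fintype.card_fin]

theorem Prec.natDegree_eq {f g : ℝ[X]} (h : Prec g f) : g.natDegree = f.natDegree := by
  obtain ⟨s, c, d, α, β, -, hcd, -, -, rfl, rfl, -⟩ := h
  exact (natDegree_C_mul_nodal (right_ne_zero_of_mul hcd.ne') β).trans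
    (natDegree_C_mul_nodal (left_ne_zero_of_mul hcd.ne') α).symm

theorem Prec.natDegree_pos {f g : ℝ[X]} (h : Prec g f) : 0 < f.natDegree := by
  obtain ⟨s, c, d, α, β, hs, hcd, -, -, rfl, -⟩ := h
  exact hs.trans_eq (natDegree_C_mul_nodal (left_ne_zero_of_mul hcd.ne') α).symm

theorem Prec.isCoprime {f g : ℝ[X]} (h : Prec g f) : IsCoprime g f := by
  have hroot {x : ℝ} (hx : f.IsRoot x) : ¬ g.IsRoot x :=
    left_ne_zero_of_mul (h.eval_mul_eval_derivative_pos hx).ne'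
  obtain ⟨s, c, d, α, β, -, hcd, -, -, hf, -⟩ := h
  have hc : IsUnit (C c) := isUnit_C.2 (left_ne_zero_of_mul hcd.ne').isUnit
  rw [hf, isCoprime_mul_unit_left_right hc]
  refine IsCoprime.prod_right fun i hi => IsCoprime.symm ?_
  rw [(irreducible_X_sub_C _).coprime_iff_not_dvd, dvd_iff_isRoot]
  exact hroot (dvd_iff_isRoot.1 (hf ▸ (Finset.dvd_prod_of_mem _ hi).mul_left _))

theorem eval_mul_eval_derivative_eq_sq {R : Type*} [CommRing R] [IsDomain R] {r x : R} {H : R[X]}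
    (hx : ((X - C r) * H).IsRoot x) :
    H.eval x * (derivative ((X - C r) * H)).eval x = H.eval x ^ 2 := by
  simp only [IsRoot, eval_mul, eval_sub, eval_X, eval_C] at hx
  simp only [derivative_mul, derivative_X_sub_C, eval_add, eval_mul, eval_sub, eval_X, eval_C,
    one_mul]
  linear_combination (derivative H).eval x * hx

theorem Prec.neg_of_eq_X_sub_C_mul {F G H : ℝ[X]} {r b m : ℝ} (hb : 0 < b) (hm : 0 < m)
    (h : Prec (-X * G) F) (hpos : ∀ x, F.IsRoot x → 0 < x) (hF : F = (X - C r) * H) :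
    Prec (-(C b * F) - C m * X * (H - C b * G)) (-F) := by
  have hF0 : 0 < F.natDegree := h.natDegree_pos
  have hH0 : H ≠ 0 := by
    rintro rfl
    simp [hF] at hF0
  have hXH : (X * H).natDegree = F.natDegree := by
    rw [hF, natDegree_X_mul hH0, natDegree_mul (X_sub_C_ne_zero r) hH0, natDegree_X_sub_C, add_comm]
  have hXG : (X * G).natDegree = F.natDegree := by
    rw [← h.natDegree_eq, neg_mul, natDegree_neg]
  refine prec_of_splits h.splits_right.neg (by rwa [natDegree_neg]) ?_ (u := 0)
    (fun x hx => hpos x (by simpa using hx)) ?_ fun x hx => ?_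
  · rw [natDegree_neg, show -(C b * F) - C m * X * (H - C b * G) =
      C (-b) * F + C (-m) * (X * H) + C (m * b) * (X * G) by simp only [C_neg, C_mul]; ring]
    exact natDegree_add_le_of_degree_le (natDegree_add_le_of_degree_le (natDegree_C_mul_le _ _)
      ((natDegree_C_mul_le _ _).trans_eq hXH)) ((natDegree_C_mul_le _ _).trans_eq hXG)
  · have hne : F.eval 0 ≠ 0 := fun h0 => (hpos 0 h0).false
    have hsq := mul_pos hb (mul_self_pos.2 hne)
    simp only [eval_sub, eval_neg, eval_mul, eval_C, eval_X, mul_zero, zero_mul, sub_zero]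
    linarith
  · replace hx : F.IsRoot x := by simpa using hx
    have hG : 0 < -x * G.eval x * (derivative F).eval x := by
      simpa using h.eval_mul_eval_derivative_pos hx
    have hH : 0 ≤ H.eval x * (derivative F).eval x := by
      rw [hF] at hx ⊢
      exact (eval_mul_eval_derivative_eq_sq hx).symm ▸ sq_nonneg _
    have hx0 := hpos x hx
    calc 0 < m * (x * (H.eval x * (derivative F).eval x)
            + b * (-x * G.eval x * (derivative F).eval x)) := by positivity
      _ = _ := by
        simp only [eval_sub, eval_neg, eval_mul, eval_C, eval_X, derivative_neg, hx.eq_zero]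
        ring

end Step
section Gcd

theorem gcd_mul_left_of_isRelPrime {α : Type*} [CommMonoidWithZero α]
    [StrongNormalizedGCDMonoid α] {x y : α} (h : IsRelPrime x y) (a : α) :
    gcd (a * x) (a * y) = normalize a := by
  rw [gcd_mul_left, ← normalize_gcd, normalize_eq_one.2 (gcd_isUnit_iff_isRelPrime.2 h), mul_one]

theorem monic_gcd {K : Type*} [Field K] [DecidableEq K] {f : K[X]} (hf : f ≠ 0) (g : K[X]) :
    (gcd f g).Monic := by
  rw [← normalize_gcd]
  exact monic_normalize fun h => hf ((gcd_eq_zero_iff f g).1 h).1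

theorem gcd_and_prec_of_factorization {d F G H f' g' : ℝ[X]} {r b m : ℝ} (hb : 0 < b) (hm : 0 < m)
    (hd : d.Monic) (hpos : ∀ x, F.IsRoot x → 0 < x) (hprec : Prec (-X * G) F)
    (hF : F = (X - C r) * H) (hg' : g' = d * F - C b * (X - C r) * (d * G))
    (hf' : f' = -(C b * (X - C r) * (d * F)) - C m * X * g') :
    gcd f' g' = d * (X - C r) ∧ Prec (f' / gcd f' g') (-F) := by
  set Q := H - C b * G with hQ
  set P := -(C b * F) - C m * X * Q with hP
  have hprec' : Prec P (-F) := hprec.neg_of_eq_X_sub_C_mul hb hm hpos hF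
  have hgQ : g' = d * (X - C r) * Q := by
    rw [hg', hQ]
    linear_combination d * hF
  have hfP : f' = d * (X - C r) * P := by
    rw [hf', hgQ, hP]
    ring
  have hcop : IsCoprime P Q := by
    have hPF : IsCoprime P (C b * F) :=
      (isCoprime_mul_unit_left_right (isUnit_C.2 hb.ne'.isUnit) P F).2
        ((IsCoprime.neg_right_iff P F).1 hprec'.isCoprime)
    have hPQ : IsCoprime P (C m * X * Q + P * 1) := by
      rw [show C m * X * Q + P * 1 = -(C b * F) by rw [hP]; ring]
      exact hPF.neg_right
    exact hPQ.of_add_mul_left_right.of_mul_right_right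
  have hmonic : (d * (X - C r)).Monic := hd.mul (monic_X_sub_C r)
  have hgcd : gcd f' g' = d * (X - C r) := by
    rw [hfP, hgQ, gcd_mul_left_of_isRelPrime hcop.isRelPrime, hmonic.normalize_eq_self]
  refine ⟨hgcd, ?_⟩
  rwa [hgcd, hfP, mul_div_cancel_left₀ _ hmonic.ne_zero]

theorem gcd_and_prec_of_linear_dvd {f g f' g' : ℝ[X]} {k b m : ℝ} (hb : 0 < b) (hm : 0 < m)
    (hpos : ∀ x, f.IsRoot x → 0 < x) (hprec : Prec (-X * g / gcd f g) (f / gcd f g))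
    (hdvd : C k - C b * X ∣ f / gcd f g) (hg' : g' = f + (C k - C b * X) * g)
    (hf' : f' = (C k - C b * X) * f - C m * X * g') :
    gcd f' g' = gcd f g * (X - C (k / b)) ∧ Prec (f' / gcd f' g') (-(f / gcd f g)) := by
  have hf0 : f ≠ 0 := by
    rintro rfl
    simpa using hprec.natDegree_pos
  have hmonic : (gcd f g).Monic := monic_gcd hf0 g
  have hF : gcd f g * (f / gcd f g) = f :=
    EuclideanDomain.mul_div_cancel' hmonic.ne_zero (gcd_dvd_left f g)
  have hG : gcd f g * (g / gcd f g) = g :=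
    EuclideanDomain.mul_div_cancel' hmonic.ne_zero (gcd_dvd_right f g)
  have hlin : C k - C b * X = -(C b * (X - C (k / b))) := by
    have hk : C b * C (k / b) = C k := by rw [← C_mul, mul_div_cancel₀ _ hb.ne']
    linear_combination -hk
  rw [hlin] at hdvd hg' hf'
  obtain ⟨H, hH⟩ : X - C (k / b) ∣ f / gcd f g :=
    (dvd_mul_left _ _).trans (neg_dvd.1 hdvd)
  rw [EuclideanDomain.mul_div_assoc _ (gcd_dvd_right f g)] at hprec
  refine gcd_and_prec_of_factorization hb hm hmonic
    (fun x hx => hpos x (hx.dvd (Dvd.intro_left _ hF))) hprec hH ?_ ?_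
  · rw [hF, hG, hg']
    ring
  · rw [hF, hf']
    ring

end Gcd

/-- Lemma `two`(i): the case `b_{j+1} ≠ 0` and `(k_{j+1} − λ b_{j+1}) ∣ f_j/(f_j,g_j)`.
Here `gcd` is the monic-normalized gcd in `ℝ[λ]`. -/
theorem stmt_5 (n : ℕ) (m k b : ℕ → ℝ)
    (hm : ∀ j, 1 ≤ j → j ≤ n → 0 < m j)
    (hk : ∀ j, 1 ≤ j → j ≤ n → 0 < k j)
    (hb : ∀ j, 1 ≤ j → j ≤ n → 0 ≤ b j)
    (j : ℕ) (hj1 : 1 ≤ j) (hj2 : j ≤ n - 1)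
    (hyp : Prec (-Polynomial.X * gpoly m k b j / gcd (fpoly m k b j) (gpoly m k b j))
      (fpoly m k b j / gcd (fpoly m k b j) (gpoly m k b j)))
    (hbne : b (j + 1) ≠ 0)
    (hdvd : (Polynomial.C (k (j + 1)) - Polynomial.C (b (j + 1)) * Polynomial.X) ∣
      (fpoly m k b j / gcd (fpoly m k b j) (gpoly m k b j))) :
    gcd (fpoly m k b (j + 1)) (gpoly m k b (j + 1)) =
      gcd (fpoly m k b j) (gpoly m k b j) *
        (Polynomial.X - Polynomial.C (k (j + 1) / b (j + 1))) ∧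
    Prec
      (fpoly m k b (j + 1) / gcd (fpoly m k b (j + 1)) (gpoly m k b (j + 1)))
      (-(fpoly m k b j / gcd (fpoly m k b j) (gpoly m k b j))) := by
  have hj : j + 1 ≤ n := by omega
  have hbpos : 0 < b (j + 1) := (hb _ (by omega) hj).lt_of_ne' hbne
  have hroot_pos : ∀ x, (fpoly m k b j).IsRoot x → 0 < x := by
    intro x hx
    by_contra! hx0
    exact (eval_fpoly_pos_and_eval_gpoly_pos (fun i h1 hn => (hm i h1 hn).le) hk hb hx0
      (Nat.le_of_succ_le hj)).1.ne' hx
  exact gcd_and_prec_of_linear_dvd hbpos (hm _ (by omega) hj) hroot_pos hyp hdvd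
    (gpoly_succ m k b hj1) (fpoly_succ m k b j)
end
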